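/- arXiv:1704.08789 — 3 statements merged into one kernel-verified Lean document; each statement's English description precedes it below -/
import Mathlib

section
/- Let M be a compact metric space admitting a good covering 𝒰 (which is then necessarily finite). Then M is Lipschitz homotopy equivalent to the geometric realization |𝒩_𝒰| of the nerve of 𝒰. -/
open Metric Set

/-- Two maps between metric spaces are *Lipschitz homotopic* if there is a Lipschitz map
`H : X × [0,1] → Y` with `H(·,0) = f` and `H(·,1) = g`. -/
def LipHomotopic {X Y : Type*} [MetricSpace X] [MetricSpace Y] (f g : X → Y) : Prop :=
  ∃ (H : X × unitInterval → Y) (K : NNReal), LipschitzWith K H ∧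
    (∀ x, H (x, 0) = f x) ∧ (∀ x, H (x, 1) = g x)

/-- Two metric spaces are *Lipschitz homotopy equivalent* if there are Lipschitz maps
`f : X → Y` and `g : Y → X` with `g ∘ f` and `f ∘ g` Lipschitz homotopic to identities. -/
def LipHomotopyEquiv (X Y : Type*) [MetricSpace X] [MetricSpace Y] : Prop :=
  ∃ (f : X → Y) (g : Y → X) (Kf Kg : NNReal),
    LipschitzWith Kf f ∧ LipschitzWith Kg g ∧
      LipHomotopic (g ∘ f) id ∧ LipHomotopic (f ∘ g) id

/-- A subset `V` of a metric space admits a *Lipschitz strong deformation retraction to a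
point* `p ∈ V` if there is a Lipschitz `F : V × [0,1] → V` with `F(x,0) = x`, `F(x,1) = p`
and `F(p,t) = p` for all `t`. -/
def IsLipSDRToPoint {X : Type*} [MetricSpace X] (V : Set X) : Prop :=
  ∃ (p : V) (F : V × unitInterval → V) (K : NNReal),
    LipschitzWith K F ∧ (∀ x, F (x, 0) = x) ∧ (∀ x, F (x, 1) = p) ∧ (∀ t, F (p, t) = p)

/-- A locally finite open covering is *good* if closures of its elements are compact and
every nonempty intersection of finitely many elements admits a Lipschitz strong deformation
retraction to a point. -/
def IsGoodCovering {X : Type*} [MetricSpace X] {J : Type*} (U : J → Set X) : Prop :=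
  (∀ j, IsOpen (U j)) ∧ (⋃ j, U j) = univ ∧ LocallyFinite U ∧
    (∀ j, IsCompact (closure (U j))) ∧
    ∀ s : Finset J, s.Nonempty → (⋂ j ∈ s, U j).Nonempty → IsLipSDRToPoint (⋂ j ∈ s, U j)

/-- The geometric realization of the nerve of a finite covering `U : Fin N → Set M`:
the set of `θ : Fin N → ℝ` with values in `[0,1]`, total sum `1`, whose support spans a
simplex of the nerve (i.e. the corresponding intersection is nonempty).  It carries the
sup metric, induced from the product metric on `Fin N → ℝ`. -/
def NerveSet {M : Type*} [MetricSpace M] {N : ℕ} (U : Fin N → Set M) : Set (Fin N → ℝ) :=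
  {θ | (∀ j, θ j ∈ Icc (0:ℝ) 1) ∧ ∑ j, θ j = 1 ∧ (⋂ j ∈ {j | θ j ≠ 0}, U j).Nonempty}

namespace LipNerve

open Topology Filter

/-- Pointwise version of local Lipschitzness. -/
def LL {X Y : Type*} [MetricSpace X] [MetricSpace Y] (f : X → Y) (x : X) : Prop :=
  ∃ K, ∃ t ∈ 𝓝 x, LipschitzOnWith K f t

section LL
variable {X Y Z : Type*} [MetricSpace X] [MetricSpace Y] [MetricSpace Z]

lemma LL.of_lip {f : X → Y} {K} (h : LipschitzWith K f) (x : X) : LL f x :=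
  ⟨K, univ, univ_mem, h.lipschitzOnWith⟩

lemma LL.congr {f g : X → Y} {x : X} (h : LL f x) (e : ∀ᶠ y in 𝓝 x, g y = f y) : LL g x := by
  obtain ⟨K, t, ht, hl⟩ := h
  refine ⟨K, t ∩ {y | g y = f y}, inter_mem ht e, ?_⟩
  intro a ha b hb
  rw [ha.2, hb.2]
  exact hl ha.1 hb.1

lemma LL.continuousAt {f : X → Y} {x : X} (h : LL f x) : ContinuousAt f x := by
  obtain ⟨K, t, ht, hl⟩ := h
  exact hl.continuousOn.continuousAt ht

lemma LL.comp_on {f : X → Y} {g : Y → Z} {x : X} {K} {s : Set Y} (hg : LipschitzOnWith K g s)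
    (hf : LL f x) (hs : ∀ᶠ y in 𝓝 x, f y ∈ s) : LL (fun y => g (f y)) x := by
  obtain ⟨K', t, ht, hl⟩ := hf
  refine ⟨K * K', t ∩ {y | f y ∈ s}, inter_mem ht hs, ?_⟩
  exact hg.comp (hl.mono inter_subset_left) (fun y hy => hy.2)

lemma LL.comp {f : X → Y} {g : Y → Z} {x : X} (hg : LL g (f x)) (hf : LL f x) :
    LL (fun y => g (f y)) x := by
  obtain ⟨K, t, ht, hl⟩ := hg
  exact LL.comp_on hl hf (hf.continuousAt ht)

lemma LL.prodMk {f : X → Y} {g : X → Z} {x : X} (hf : LL f x) (hg : LL g x) :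
    LL (fun y => (f y, g y)) x := by
  obtain ⟨K, t, ht, hl⟩ := hf
  obtain ⟨K', t', ht', hl'⟩ := hg
  refine ⟨max K K', t ∩ t', inter_mem ht ht', ?_⟩
  exact (hl.mono inter_subset_left).prodMk (hl'.mono inter_subset_right)

lemma LL.of_contDiffAt {E F : Type*} [NormedAddCommGroup E] [NormedSpace ℝ E]
    [NormedAddCommGroup F] [NormedSpace ℝ F] {f : E → F} {x : E} (h : ContDiffAt ℝ 1 f x) :
    LL f x := h.exists_lipschitzOnWith

lemma LL.codRestrict {s : Set Y} {f : X → s} {x : X} (h : LL (fun y => (f y : Y)) x) :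
    LL f x := h

lemma LL.lipschitz [CompactSpace X] {f : X → Y} (h : ∀ x, LL f x) : ∃ K, LipschitzWith K f := by
  have : LocallyLipschitz f := h
  obtain ⟨K, hK⟩ :=
    (this.locallyLipschitzOn (s := univ)).exists_lipschitzOnWith_of_compact isCompact_univ
  exact ⟨K, lipschitzOnWith_univ.1 hK⟩

end LL

section Run
variable {X M ι : Type*} [MetricSpace X] [MetricSpace M]
set_option linter.unusedSectionVars false

/-- Successively apply the contractions in the list. -/
def run (F : ι → M → ℝ → M) (T : ι → ℝ) (L : List ι) (y : M) : M :=
  L.foldl (fun y s => F s y (T s)) y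

lemma run_zero (F : ι → M → ℝ → M) (T : ι → ℝ) (L : List ι) (hF : ∀ s y, F s y 0 = y)
    (hT : ∀ s, T s = 0) (y : M) : run F T L y = y := by
  induction L generalizing y with
  | nil => rfl
  | cons s L ih => 
    simp only [run, List.foldl_cons] at ih ⊢
    rw [hT, hF]; exact ih y

lemma run_indep (F : ι → M → ℝ → M) (T : ι → ℝ) (L : List ι) (p : ι → M)
    (hF : ∀ s y, F s y 1 = p s) (s : ι) (hs : s ∈ L) (hT : T s = 1) (y y' : M) :
    run F T L y = run F T L y' := by
  obtain ⟨L1, L2, rfl⟩ := List.append_of_mem hs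
  simp [run, hT, hF]

lemma run_LL (F : ι → M → ℝ → M) (V : ι → Set M) (K : ι → NNReal)
    (hF : ∀ s, LipschitzOnWith (K s) (fun q : M × ℝ => F s q.1 q.2) (V s ×ˢ univ))
    (hV : ∀ s y t, y ∈ V s → F s y t ∈ V s) (hF0 : ∀ s y, F s y 0 = y)
    (T : X → ι → ℝ) (x0 : X) (A : ι → Prop)
    (hA : ∀ s, ¬ A s → ∀ᶠ x in 𝓝 x0, T x s = 0) (hT : ∀ s, LL (fun x => T x s) x0)
    (L : List ι) (hL : L.Pairwise (fun s s' => A s → A s' → V s ⊆ V s'))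
    (k : X → M) (hk : LL k x0) (hkV : ∀ s ∈ L, A s → ∀ᶠ x in 𝓝 x0, k x ∈ V s) :
    LL (fun x => run F (T x) L (k x)) x0 ∧
    ∀ W : Set M, (∀ s ∈ L, A s → V s ⊆ W) → (∀ᶠ x in 𝓝 x0, k x ∈ W) →
      ∀ᶠ x in 𝓝 x0, run F (T x) L (k x) ∈ W := by
  induction L generalizing k with
  | nil => exact ⟨hk, fun W _ h => h⟩
  | cons s L ih =>
    rw [List.pairwise_cons] at hL
    have key : LL (fun x => F s (k x) (T x s)) x0 ∧ 
        (∀ s' ∈ L, A s' → ∀ᶠ x in 𝓝 x0, F s (k x) (T x s) ∈ V s') ∧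
        (∀ W : Set M, (A s → V s ⊆ W) → (∀ᶠ x in 𝓝 x0, k x ∈ W) → 
          ∀ᶠ x in 𝓝 x0, F s (k x) (T x s) ∈ W) := by
      by_cases h : A s
      · have h1 := hkV s (by simp) h
        have h2 : ∀ᶠ x in 𝓝 x0, F s (k x) (T x s) ∈ V s := 
          h1.mono (fun x hx => hV _ _ _ hx)
        refine ⟨?_, ?_, ?_⟩
        · exact LL.comp_on (f := fun x => (k x, T x s)) (hF s) (hk.prodMk (hT s))
            (h1.mono fun x hx => ⟨hx, trivial⟩)
        · intro s' hs' hs'A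
          exact h2.mono (fun x hx => hL.1 s' hs' h hs'A hx)
        · intro W hW _
          exact h2.mono (fun x hx => hW h hx)
      · have h1 : ∀ᶠ x in 𝓝 x0, F s (k x) (T x s) = k x := 
          (hA s h).mono (fun x hx => by rw [hx, hF0])
        refine ⟨hk.congr h1, ?_, ?_⟩
        · intro s' hs' hs'A
          filter_upwards [h1, hkV s' (by simp [hs']) hs'A] with x hx hx2
          rwa [hx]
        · intro W _ hW
          filter_upwards [h1, hW] with x hx hx2
          rwa [hx]
    obtain ⟨h1, h2⟩ := ih hL.2 _ key.1 key.2.1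
    exact ⟨h1, fun W hW hk => h2 W (fun s' hs' => hW s' (by simp [hs'])) 
      (key.2.2 W (hW s (by simp)) hk)⟩

/-- Version where some contraction is completely performed, starting point arbitrary. -/
lemma run_LL' (F : ι → M → ℝ → M) (V : ι → Set M) (K : ι → NNReal)
    (hF : ∀ s, LipschitzOnWith (K s) (fun q : M × ℝ => F s q.1 q.2) (V s ×ˢ univ))
    (hV : ∀ s y t, y ∈ V s → F s y t ∈ V s) (hF0 : ∀ s y, F s y 0 = y)
    (p : ι → M) (hF1 : ∀ s y, F s y 1 = p s) (hp : ∀ s, p s ∈ V s)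
    (T : X → ι → ℝ) (x0 : X) (A : ι → Prop)
    (hA : ∀ s, ¬ A s → ∀ᶠ x in 𝓝 x0, T x s = 0) (hT : ∀ s, LL (fun x => T x s) x0)
    (L : List ι) (hL : L.Pairwise (fun s s' => A s → A s' → V s ⊆ V s'))
    (s0 : ι) (hs0 : s0 ∈ L) (hA0 : A s0) (hs0T : ∀ᶠ x in 𝓝 x0, T x s0 = 1)
    (k : X → M) :
    LL (fun x => run F (T x) L (k x)) x0 ∧
    ∀ W : Set M, (∀ s ∈ L, A s → V s ⊆ W) → run F (T x0) L (k x0) ∈ W := by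
  obtain ⟨L1, L2, rfl⟩ := List.append_of_mem hs0
  have e : ∀ᶠ x in 𝓝 x0, run F (T x) (L1 ++ s0 :: L2) (k x) = run F (T x) L2 (p s0) := by
    filter_upwards [hs0T] with x hx
    simp [run, hx, hF1]
  rw [List.pairwise_append, List.pairwise_cons] at hL
  obtain ⟨h1, h2⟩ := run_LL F V K hF hV hF0 T x0 A hA hT L2 hL.2.1.2 (fun _ => p s0)
    (LL.of_lip (LipschitzWith.const _) _)
    (fun s hs hsA => Eventually.of_forall fun _ => hL.2.1.1 s hs hA0 hsA (hp s0))
  refine ⟨h1.congr e, fun W hW => ?_⟩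
  have := h2 W (fun s hs => hW s (by simp [hs])) 
    (Eventually.of_forall fun _ => hW s0 (by simp) hA0 (hp s0))
  rw [e.self_of_nhds]
  exact this.self_of_nhds

end Run

section Weights
variable {N : ℕ}

/-- The scale. -/
def sc (N : ℕ) : ℝ := 3 * (N * (N + 1))

/-- time function of a simplex -/
noncomputable def tau (s : Finset (Fin N)) (θ : Fin N → ℝ) : ℝ :=
  ∏ j ∈ s, (Real.smoothTransition (sc N * θ j - 1) *
    ∏ k ∈ sᶜ, Real.smoothTransition (sc N * (θ j - θ k) - 1))

/-- potentially active simplices -/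
def act (θ : Fin N → ℝ) (s : Finset (Fin N)) : Prop :=
  ∀ j ∈ s, 1 ≤ sc N * θ j ∧ ∀ k ∉ s, 1 ≤ sc N * (θ j - θ k)

/-- unnormalized weights concentrated near the maximum -/
noncomputable def wt (θ : Fin N → ℝ) (j : Fin N) : ℝ :=
  ∏ k, Real.smoothTransition (sc N * (θ j - θ k) + 1)

lemma sm_contDiff : ContDiff ℝ 1 Real.smoothTransition :=
  Real.smoothTransition.contDiff (n := 1)

lemma tau_contDiff (s : Finset (Fin N)) : ContDiff ℝ 1 (tau s) := by
  unfold tau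
  refine contDiff_prod fun j _ => ContDiff.mul (sm_contDiff.comp (by fun_prop)) ?_
  exact contDiff_prod fun k _ => sm_contDiff.comp (by fun_prop)

lemma wt_contDiff (j : Fin N) : ContDiff ℝ 1 (fun θ : Fin N → ℝ => wt θ j) := by
  unfold wt
  exact contDiff_prod fun k _ => sm_contDiff.comp (by fun_prop)

lemma tau_eventually_zero (s : Finset (Fin N)) (θ : Fin N → ℝ) (h : ¬ act θ s) :
    ∀ᶠ η in 𝓝 θ, tau s η = 0 := by
  unfold act at h
  push Not at h
  obtain ⟨j, hj, h⟩ := h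
  by_cases h1 : 1 ≤ sc N * θ j
  · obtain ⟨k, hk, h2⟩ := h h1
    have c : Continuous fun η : Fin N → ℝ => sc N * (η j - η k) := by fun_prop
    filter_upwards [c.continuousAt.eventually_lt_const h2] with η hη
    refine Finset.prod_eq_zero hj (mul_eq_zero_of_right _ 
      (Finset.prod_eq_zero (Finset.mem_compl.2 hk) ?_))
    exact Real.smoothTransition.zero_of_nonpos (by linarith)
  · have c : Continuous fun η : Fin N → ℝ => sc N * η j := by fun_prop
    filter_upwards [c.continuousAt.eventually_lt_const (not_le.1 h1)] with η hη
    refine Finset.prod_eq_zero hj (mul_eq_zero_of_left ?_ _)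
    exact Real.smoothTransition.zero_of_nonpos (by linarith)

lemma sc_nonneg : 0 ≤ sc N := by unfold sc; positivity

lemma act_pos {θ : Fin N → ℝ} {s : Finset (Fin N)} (h : act θ s) {j} (hj : j ∈ s) : 0 < θ j := by
  by_contra h'
  have := (h j hj).1
  nlinarith [sc_nonneg (N := N)]

lemma act_chain {θ : Fin N → ℝ} {s s' : Finset (Fin N)} (h : act θ s) (h' : act θ s')
    (hc : s'.card ≤ s.card) : s' ⊆ s := by
  by_contra hn
  obtain ⟨j, hj, hjs⟩ := Finset.not_subset.1 hn
  have : ¬ s ⊆ s' := by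
    intro hss
    exact hn (Finset.eq_of_subset_of_card_le hss hc).ge
  obtain ⟨k, hk, hks⟩ := Finset.not_subset.1 this
  have h1 := (h k hk).2 j hjs
  have h2 := (h' j hj).2 k hks
  linarith

lemma exists_gap {θ : Fin N → ℝ} (h0 : ∀ j, 0 ≤ θ j) (h1 : ∑ j, θ j = 1) :
    ∃ s : Finset (Fin N), s.Nonempty ∧ act θ s ∧ ∀ᶠ η in 𝓝 θ, tau s η = 1 := by
  classical
  set D : ℝ := N * (N + 1) with hD
  have hD0 : 0 ≤ D := by positivity
  obtain ⟨i, hi, hi'⟩ : ∃ i ∈ Finset.range (N + 1), 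
      i ∉ Finset.univ.image (fun j => ⌊D * θ j⌋₊) := by
    by_contra! hcon
    have := Finset.card_le_card (show Finset.range (N + 1) ⊆ _ from hcon)
    have h2 := Finset.card_image_le (s := Finset.univ) (f := (fun j => ⌊D * θ j⌋₊))
    simp only [Finset.card_range, Finset.card_univ, Fintype.card_fin] at this h2
    omega
  simp only [Finset.mem_image, Finset.mem_univ, true_and, not_exists] at hi'
  rw [Finset.mem_range] at hi
  set s : Finset (Fin N) := Finset.univ.filter (fun j => i < ⌊D * θ j⌋₊) with hs
  have A : ∀ j ∈ s, (i : ℝ) + 1 ≤ D * θ j := by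
    intro j hj
    have : i + 1 ≤ ⌊D * θ j⌋₊ := by simpa [hs] using hj
    rw [Nat.le_floor_iff (mul_nonneg hD0 (h0 j))] at this
    exact_mod_cast this
  have B : ∀ j ∉ s, D * θ j < i := by
    intro j hj
    have : ⌊D * θ j⌋₊ < i := lt_of_le_of_ne (by simpa [hs] using hj) (hi' j)
    rwa [Nat.floor_lt (mul_nonneg hD0 (h0 j))] at this
  have hsc : sc N = 3 * D := rfl
  have hi0 : (0 : ℝ) ≤ i := by positivity
  refine ⟨s, ?_, ?_, ?_⟩
  · by_contra hne
    rw [Finset.not_nonempty_iff_eq_empty] at hne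
    have hlt : ∀ j, (N + 1) * (N * θ j) ≤ i := by
      intro j
      have := B j (by simp [hne])
      rw [hD] at this
      nlinarith
    have : ∑ j : Fin N, (N + 1 : ℝ) * (N * θ j) ≤ ∑ j : Fin N, (i : ℝ) := 
      Finset.sum_le_sum fun j _ => hlt j
    rw [← Finset.mul_sum, ← Finset.mul_sum, h1] at this
    simp at this
    have hN : 0 < N := by
      rcases Nat.eq_zero_or_pos N with h | h
      · subst h; simp at h1
      · exact h
    have hN' : (0 : ℝ) < N := by exact_mod_cast hN
    have : (N : ℝ) + 1 ≤ i := by nlinarith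
    have h3 : (i : ℝ) < N + 1 := by exact_mod_cast hi
    linarith
  · intro j hj
    have := A j hj
    refine ⟨by rw [hsc]; nlinarith, fun k hk => ?_⟩
    have := B k hk
    rw [hsc]; nlinarith
  · have C1 : ∀ᶠ η in 𝓝 θ, ∀ j ∈ s, 2 < sc N * η j := by
      rw [Finset.eventually_all]
      intro j hj
      have c : Continuous fun η : Fin N → ℝ => sc N * η j := by fun_prop
      refine c.continuousAt.eventually_const_lt ?_
      have := A j hj
      rw [hsc]; nlinarith
    have C2 : ∀ᶠ η in 𝓝 θ, ∀ j ∈ s, ∀ k ∈ sᶜ, 2 < sc N * (η j - η k) := by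
      rw [Finset.eventually_all]
      intro j hj
      rw [Finset.eventually_all]
      intro k hk
      have c : Continuous fun η : Fin N → ℝ => sc N * (η j - η k) := by fun_prop
      refine c.continuousAt.eventually_const_lt ?_
      have := A j hj
      have := B k (Finset.mem_compl.1 hk)
      rw [hsc]; nlinarith
    filter_upwards [C1, C2] with η h1 h2
    refine Finset.prod_eq_one fun j hj => ?_
    rw [Real.smoothTransition.one_of_one_le (by linarith [h1 j hj]), one_mul]
    refine Finset.prod_eq_one fun k hk => ?_
    exact Real.smoothTransition.one_of_one_le (by linarith [h2 j hj k hk])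

lemma wt_nonneg (θ : Fin N → ℝ) (j) : 0 ≤ wt θ j := 
  Finset.prod_nonneg fun _ _ => Real.smoothTransition.nonneg _

lemma wt_act {θ : Fin N → ℝ} {j} (h : wt θ j ≠ 0) {s : Finset (Fin N)} (hs : act θ s)
    (hne : s.Nonempty) : j ∈ s := by
  by_contra hj
  obtain ⟨k, hk⟩ := hne
  have := (hs k hk).2 j hj
  apply h
  refine Finset.prod_eq_zero (Finset.mem_univ k) (Real.smoothTransition.zero_of_nonpos ?_)
  linarith

lemma wt_sum_pos {θ : Fin N → ℝ} (h1 : ∑ j, θ j = 1) : 0 < ∑ j, wt θ j := by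
  have : Nonempty (Fin N) := by
    by_contra h
    rw [not_nonempty_iff] at h
    simp at h1
  obtain ⟨j, hj⟩ := Finite.exists_max θ
  refine Finset.sum_pos' (fun j _ => wt_nonneg θ j) ⟨j, Finset.mem_univ j, ?_⟩
  have : wt θ j = 1 := Finset.prod_eq_one fun k _ => 
    Real.smoothTransition.one_of_one_le (by nlinarith [hj k, sc_nonneg (N := N)])
  rw [this]; exact one_pos

/-- normalization -/
noncomputable def nrm (θ : Fin N → ℝ) (j : Fin N) : ℝ := θ j / ∑ k, θ k

lemma nrm_LL {θ : Fin N → ℝ} (h : 0 < ∑ k, θ k) : LL nrm θ := by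
  apply LL.of_contDiffAt
  rw [contDiffAt_pi]
  intro j
  exact ContDiffAt.div (by fun_prop) (by fun_prop) h.ne'

lemma nrm_nonneg {θ : Fin N → ℝ} (h : ∀ j, 0 ≤ θ j) (j) : 0 ≤ nrm θ j :=
  div_nonneg (h j) (Finset.sum_nonneg fun k _ => h k)

lemma nrm_sum {θ : Fin N → ℝ} (h : 0 < ∑ k, θ k) : ∑ j, nrm θ j = 1 := by
  unfold nrm
  rw [← Finset.sum_div, div_self h.ne']

lemma nrm_ne {θ : Fin N → ℝ} {j} (h : nrm θ j ≠ 0) : θ j ≠ 0 := by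
  intro h'
  simp [nrm, h'] at h

end Weights

section Nerve
variable {M : Type*} [MetricSpace M] {N : ℕ} {U : Fin N → Set M}

lemma mem_nerve {θ : Fin N → ℝ} (h0 : ∀ j, 0 ≤ θ j) (h1 : ∑ j, θ j = 1) (y : M)
    (hy : ∀ j, θ j ≠ 0 → y ∈ U j) : θ ∈ NerveSet U := by
  refine ⟨fun j => ⟨h0 j, ?_⟩, h1, y, ?_⟩
  · rw [← h1]
    exact Finset.single_le_sum (fun k _ => h0 k) (Finset.mem_univ j)
  · simpa using hy

lemma nerve_compact : CompactSpace (NerveSet U) := by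
  classical
  rw [← isCompact_iff_compactSpace]
  have : NerveSet U = {θ | (∀ j, θ j ∈ Icc (0:ℝ) 1)} ∩ ({θ | ∑ j, θ j = 1} ∩
      ⋃ s ∈ {s : Finset (Fin N) | (⋂ j ∈ s, U j).Nonempty}, {θ | ∀ j, j ∉ s → θ j = 0}) := by
    ext θ
    simp only [NerveSet, mem_ofPred_eq, mem_inter_iff, mem_iUnion, exists_prop]
    refine and_congr_right fun _ => and_congr_right fun _ => ⟨fun ⟨y, hy⟩ => ?_, ?_⟩
    · refine ⟨Finset.univ.filter (fun j => θ j ≠ 0), ⟨y, ?_⟩, ?_⟩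
      · simpa using hy
      · simp
    · rintro ⟨s, ⟨y, hy⟩, h⟩
      refine ⟨y, ?_⟩
      simp only [mem_iInter] at hy ⊢
      intro j hj
      exact hy j (by by_contra h'; exact hj (h j h'))
  rw [this]
  refine IsCompact.inter_right ?_ (IsClosed.inter ?_ ?_)
  · have := isCompact_univ_pi (fun _ : Fin N => isCompact_Icc (a := (0:ℝ)) (b := 1))
    convert this using 1
    ext θ; simp only [mem_ofPred_eq, Set.mem_pi, mem_univ, true_implies]
  · exact isClosed_eq (by fun_prop) (by fun_prop)
  · refine Set.Finite.isClosed_biUnion (Set.toFinite _) fun s _ => ?_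
    simp only [ofPred_forall]
    exact isClosed_iInter fun j => isClosed_iInter fun _ => isClosed_eq (by fun_prop) (by fun_prop)

lemma exists_bump {V : Set M} (hV : IsOpen V) : ∃ φ : M → ℝ, LipschitzWith 1 φ ∧ (∀ x, 0 ≤ φ x) ∧
    ∀ x, 0 < φ x ↔ x ∈ V := by
  by_cases h : Vᶜ.Nonempty
  · refine ⟨fun x => infDist x Vᶜ, lipschitz_infDist_pt _, fun x => infDist_nonneg, fun x => ?_⟩
    rw [← hV.isClosed_compl.notMem_iff_infDist_pos h]
    simp
  · refine ⟨fun _ => 1, LipschitzWith.const' _ , by simp, ?_⟩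
    rw [not_nonempty_iff_eq_empty, compl_empty_iff] at h
    simp [h]

lemma exists_ext {V : Set M} (h : IsLipSDRToPoint V) : ∃ (F : M → ℝ → M) (K : NNReal) (p : M),
    LipschitzOnWith K (fun q : M × ℝ => F q.1 q.2) (V ×ˢ univ) ∧
    (∀ y t, y ∈ V → F y t ∈ V) ∧ (∀ y, F y 0 = y) ∧ (∀ y, F y 1 = p) ∧ p ∈ V := by
  classical
  obtain ⟨p, F, K, hF, h0, h1, -⟩ := h
  refine ⟨fun y t => if hy : y ∈ V then F (⟨y, hy⟩, projIcc 0 1 zero_le_one t) else 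
    if t = 0 then y else p, K, p, ?_, ?_, ?_, ?_, p.2⟩
  · rintro ⟨a, t⟩ ⟨ha, -⟩ ⟨b, u⟩ ⟨hb, -⟩
    simp only at ha hb
    simp only [ha, hb, dif_pos]
    refine (hF (⟨a, ha⟩, projIcc 0 1 zero_le_one t) (⟨b, hb⟩, projIcc 0 1 zero_le_one u)).trans ?_
    gcongr
    rw [Prod.edist_eq, Prod.edist_eq]
    refine max_le_max le_rfl ?_
    simpa using LipschitzWith.projIcc (zero_le_one (α := ℝ)) t u
  · intro y t hy
    simp [hy]
  · intro y
    by_cases hy : y ∈ V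
    · have := h0 ⟨y, hy⟩
      simp only [hy, dif_pos, projIcc_left]
      exact congrArg Subtype.val this
    · simp [hy]
  · intro y
    by_cases hy : y ∈ V
    · have := h1 ⟨y, hy⟩
      simp only [hy, dif_pos, projIcc_right]
      exact congrArg Subtype.val this
    · simp [hy]

end Nerve

section Main
variable {M : Type*} [MetricSpace M] {N : ℕ}

lemma exists_list (S : Type*) [Finite S] (c : S → ℕ) :
    ∃ L : List S, (∀ s, s ∈ L) ∧ L.Pairwise (fun s s' => c s' ≤ c s) := by
  classical
  have := Fintype.ofFinite S
  let r : S → S → Prop := fun s s' => c s' ≤ c s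
  have : Std.Total r := ⟨fun a b => le_total _ _⟩
  have : IsTrans S r := ⟨fun a b d h1 h2 => le_trans h2 h1⟩
  refine ⟨(Finset.univ : Finset S).toList.insertionSort r, fun s => ?_, ?_⟩
  · rw [List.mem_insertionSort]; simp
  · exact List.pairwise_insertionSort r _

/-- three-point path -/
noncomputable def path3 (a b c : Fin N → ℝ) (t : ℝ) : Fin N → ℝ :=
  (max (1 - 2 * t) 0) • a + (1 - max (1 - 2 * t) 0 - max (2 * t - 1) 0) • b +
    (max (2 * t - 1) 0) • c

lemma path3_LL {X : Type*} [MetricSpace X] {a b c : X → Fin N → ℝ} {t : X → ℝ} {x : X}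
    (ha : LL a x) (hb : LL b x) (hc : LL c x) (ht : LL t x) :
    LL (fun x => path3 (a x) (b x) (c x) (t x)) x := by
  have hm : ∀ y : ℝ, LL (fun y : ℝ => max y 0) y :=
    fun y => LL.of_lip (LipschitzWith.id.max_const 0) y
  have hu : LL (fun x => max (1 - 2 * t x) 0) x := 
    LL.comp (f := fun x => 1 - 2 * t x) (hm _)
      (LL.comp (g := fun t : ℝ => 1 - 2 * t) (LL.of_contDiffAt (by fun_prop)) ht)
  have hw : LL (fun x => max (2 * t x - 1) 0) x := 
    LL.comp (f := fun x => 2 * t x - 1) (hm _)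
      (LL.comp (g := fun t : ℝ => 2 * t - 1) (LL.of_contDiffAt (by fun_prop)) ht)
  exact LL.comp (f := fun x => ((max (1 - 2 * t x) 0, max (2 * t x - 1) 0), (a x, b x, c x)))
    (g := fun q : (ℝ × ℝ) × ((Fin N → ℝ) × (Fin N → ℝ) × (Fin N → ℝ)) =>
      q.1.1 • q.2.1 + (1 - q.1.1 - q.1.2) • q.2.2.1 + q.1.2 • q.2.2.2)
    (LL.of_contDiffAt (by fun_prop)) ((hu.prodMk hw).prodMk (ha.prodMk (hb.prodMk hc)))

lemma mem_comb {U : Fin N → Set M} {a b : Fin N → ℝ} {u v : ℝ} (ha0 : ∀ j, 0 ≤ a j) 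
    (hb0 : ∀ j, 0 ≤ b j) (ha1 : ∑ j, a j = 1) (hb1 : ∑ j, b j = 1) (y : M)
    (ha : ∀ j, a j ≠ 0 → y ∈ U j) (hb : ∀ j, b j ≠ 0 → y ∈ U j) (hu : 0 ≤ u) (hv : 0 ≤ v) 
    (huv : u + v = 1) : u • a + v • b ∈ NerveSet U := by
  refine mem_nerve (fun j => ?_) ?_ y (fun j hj => ?_)
  · simp only [Pi.add_apply, Pi.smul_apply, smul_eq_mul]
    have := ha0 j; have := hb0 j; positivity
  · simp only [Pi.add_apply, Pi.smul_apply, smul_eq_mul]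
    rw [Finset.sum_add_distrib, ← Finset.mul_sum, ← Finset.mul_sum, ha1, hb1]
    linarith
  · by_contra h
    apply hj
    have h1 : a j = 0 := by by_contra h'; exact h (ha j h')
    have h2 : b j = 0 := by by_contra h'; exact h (hb j h')
    simp [h1, h2]

lemma path3_mem {U : Fin N → Set M} {a b c : Fin N → ℝ} {t : ℝ} (ht : t ∈ Icc (0:ℝ) 1)
    (ha0 : ∀ j, 0 ≤ a j) (hb0 : ∀ j, 0 ≤ b j) (hc0 : ∀ j, 0 ≤ c j)
    (ha1 : ∑ j, a j = 1) (hb1 : ∑ j, b j = 1) (hc1 : ∑ j, c j = 1) (y z : M)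
    (ha : ∀ j, a j ≠ 0 → y ∈ U j) (hb : ∀ j, b j ≠ 0 → y ∈ U j)
    (hb' : ∀ j, b j ≠ 0 → z ∈ U j) (hc : ∀ j, c j ≠ 0 → z ∈ U j) :
    path3 a b c t ∈ NerveSet U := by
  obtain ⟨h0, h1⟩ := ht
  unfold path3
  rcases le_total t (1/2) with h | h
  · rw [max_eq_left (by linarith : 0 ≤ 1 - 2 * t), max_eq_right (by linarith : 2 * t - 1 ≤ 0),
      zero_smul, add_zero]
    exact mem_comb ha0 hb0 ha1 hb1 y ha hb (by linarith) (by linarith) (by linarith)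
  · rw [max_eq_right (by linarith : 1 - 2 * t ≤ 0), max_eq_left (by linarith : 0 ≤ 2 * t - 1),
      zero_smul, zero_add]
    exact mem_comb hb0 hc0 hb1 hc1 z hb' hc (by linarith) (by linarith) (by linarith)

lemma main [CompactSpace M] (U : Fin N → Set M) (hU : IsGoodCovering U) :
    LipHomotopyEquiv M (NerveSet U) := by
  obtain ⟨ho, hcov, -, -, hsdr⟩ := hU
  have hcomp : CompactSpace (NerveSet U) := nerve_compact
  -- contractions
  let S := {s : Finset (Fin N) // s.Nonempty ∧ (⋂ j ∈ s, U j).Nonempty}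
  let V : S → Set M := fun s => ⋂ j ∈ s.1, U j
  choose F K p hF hV hF0 hF1 hp using fun s : S => exists_ext (hsdr s.1 s.2.1 s.2.2)
  obtain ⟨L, hL, hLp⟩ := exists_list S (fun s => s.1.card)
  have hLA : ∀ θ : Fin N → ℝ, L.Pairwise (fun s s' => act θ s.1 → act θ s'.1 → V s ⊆ V s') := by
    intro θ
    refine hLp.imp ?_
    intro s s' hc h h'
    exact biInter_subset_biInter_left (act_chain h h' hc)
  -- the map to the nerve
  choose φ hφL hφ0 hφ using fun j => exists_bump (ho j)
  have hφs : ∀ x, 0 < ∑ j, φ j x := by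
    intro x
    have : x ∈ ⋃ j, U j := by rw [hcov]; trivial
    obtain ⟨j, hj⟩ := mem_iUnion.1 this
    exact Finset.sum_pos' (fun j _ => hφ0 j x) ⟨j, Finset.mem_univ j, (hφ j x).2 hj⟩
  have hf0 : ∀ x j, 0 ≤ nrm (fun j => φ j x) j := fun x => nrm_nonneg fun j => hφ0 j x
  have hf1 : ∀ x, ∑ j, nrm (fun j => φ j x) j = 1 := fun x => nrm_sum (hφs x)
  have hfU : ∀ x j, nrm (fun j => φ j x) j ≠ 0 → x ∈ U j := fun x j h =>
    (hφ j x).1 (lt_of_le_of_ne (hφ0 j x) (nrm_ne h).symm)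
  let f : M → NerveSet U := fun x => ⟨nrm (fun j => φ j x), mem_nerve (hf0 x) (hf1 x) x (hfU x)⟩
  have hfLL : ∀ x, LL (fun x => (f x : Fin N → ℝ)) x := by
    intro x
    refine LL.comp (f := fun x => (fun j => φ j x)) (nrm_LL (hφs x)) (LL.of_lip (K := 1) ?_ x)
    intro a b
    exact edist_pi_le_iff.2 fun j => hφL j a b
  -- the map back
  let y0 : NerveSet U → M := fun θ => θ.2.2.2.some
  have hy0 : ∀ (θ : NerveSet U) j, θ.1 j ≠ 0 → y0 θ ∈ U j := by
    intro θ j hj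
    have := θ.2.2.2.some_mem
    exact (mem_iInter₂.1 this) j hj
  let T : (Fin N → ℝ) → S → ℝ := fun θ s => tau s.1 θ
  let g : NerveSet U → M := fun θ => run F (T θ) L (y0 θ)
  have hgap : ∀ θ : NerveSet U, ∃ s : S, act θ.1 s.1 ∧ ∀ᶠ η in 𝓝 θ.1, tau s.1 η = 1 := by
    intro θ
    obtain ⟨s, hs, hs1, hs2⟩ := exists_gap (fun j => (θ.2.1 j).1) θ.2.2.1
    refine ⟨⟨s, hs, y0 θ, ?_⟩, hs1, hs2⟩
    exact mem_iInter₂.2 fun j hj => hy0 θ j (act_pos hs1 hj).ne'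
  have hval : ∀ θ : NerveSet U, LL (fun θ : NerveSet U => (θ : Fin N → ℝ)) θ := fun θ =>
    LL.of_lip (LipschitzWith.subtype_val _) θ
  have hTLL : ∀ (s : S) θ, LL (fun θ => T θ s) θ := fun s θ => 
    LL.of_contDiffAt (tau_contDiff s.1).contDiffAt
  have hg : ∀ θ : NerveSet U, LL g θ ∧
      ∀ W : Set M, (∀ s ∈ L, act θ.1 s.1 → V s ⊆ W) → g θ ∈ W := by
    intro θ
    obtain ⟨s0, h1, h2⟩ := hgap θ
    refine run_LL' F V K hF hV hF0 p hF1 hp (fun θ : NerveSet U => T θ) θ (fun s => act θ.1 s.1)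
      ?_ ?_ L (hLA θ) s0 (hL s0) h1 ?_ y0
    · intro s hs
      exact (hval θ).continuousAt.eventually (tau_eventually_zero s.1 θ.1 hs)
    · intro s
      exact LL.comp (g := fun θ => T θ s) (f := fun θ : NerveSet U => θ.1) (hTLL s θ.1) (hval θ)
    · exact (hval θ).continuousAt.eventually h2
  obtain ⟨Kf, hKf⟩ := LL.lipschitz (f := f) (fun x => (hfLL x).codRestrict)
  obtain ⟨Kg, hKg⟩ := LL.lipschitz (f := g) (fun θ => (hg θ).1)
  refine ⟨f, g, Kf, Kg, hKf, hKg, ?_, ?_⟩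
  · -- homotopy on `M`
    let H : M × unitInterval → M := fun q => 
      run F (fun s => (1 - (q.2 : ℝ)) * T (f q.1) s) L q.1
    obtain ⟨KH, hKH⟩ := LL.lipschitz (f := H) (by
      intro q
      have hfst : LL (fun q : M × unitInterval => q.1) q := LL.of_lip LipschitzWith.prod_fst q
      have hsnd : LL (fun q : M × unitInterval => (q.2 : ℝ)) q := 
        LL.of_lip ((LipschitzWith.subtype_val _).comp LipschitzWith.prod_snd) q
      have hff : LL (fun q : M × unitInterval => (f q.1 : Fin N → ℝ)) q := 
        LL.comp (g := fun x => (f x : Fin N → ℝ)) (f := fun q : M × unitInterval => q.1)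
          (hfLL q.1) hfst
      refine (run_LL F V K hF hV hF0 
        (fun (q : M × unitInterval) s => (1 - (q.2 : ℝ)) * T (f q.1) s)
        q (fun s => act (f q.1).1 s.1) ?_ ?_ L (hLA _) (fun q => q.1) hfst ?_).1
      · intro s hs
        filter_upwards [hff.continuousAt.eventually (tau_eventually_zero s.1 _ hs)] with q' hq'
        exact mul_eq_zero_of_right _ hq'
      · intro s
        exact LL.comp (f := fun q : M × unitInterval => ((q.2 : ℝ), T (f q.1) s)) 
          (g := fun r : ℝ × ℝ => (1 - r.1) * r.2) (LL.of_contDiffAt (by fun_prop))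
          (hsnd.prodMk (LL.comp (g := fun θ => T θ s)
            (f := fun q : M × unitInterval => (f q.1).1) (hTLL s _) hff))
      · intro s _ hs
        have hop : IsOpen (V s) := isOpen_biInter_finset fun j _ => ho j
        refine hfst.continuousAt.eventually (hop.mem_nhds ?_)
        exact mem_iInter₂.2 fun j hj => hfU q.1 j (act_pos hs hj).ne')
    refine ⟨H, KH, hKH, fun x => ?_, fun x => ?_⟩
    · obtain ⟨s0, h1, h2⟩ := hgap (f x)
      have : H (x, 0) = run F (T (f x)) L x := by simp [H]
      rw [this]
      exact run_indep F (T (f x)) L p hF1 s0 (hL s0) h2.self_of_nhds _ _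
    · exact run_zero F _ L hF0 (fun s => by simp) _
  · -- homotopy on the nerve
    let c : NerveSet U → Fin N → ℝ := fun θ => nrm (wt θ.1)
    have hc0 : ∀ θ j, 0 ≤ c θ j := fun θ => nrm_nonneg (wt_nonneg _)
    have hc1 : ∀ θ, ∑ j, c θ j = 1 := fun θ => nrm_sum (wt_sum_pos θ.2.2.1)
    have hcg : ∀ θ j, c θ j ≠ 0 → g θ ∈ U j := by
      intro θ j hj
      refine (hg θ).2 (U j) fun s _ hs => biInter_subset_of_mem ?_
      exact wt_act (nrm_ne hj) hs s.2.1
    have hcy : ∀ θ j, c θ j ≠ 0 → y0 θ ∈ U j := by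
      intro θ j hj
      obtain ⟨s0, h1, -⟩ := hgap θ
      exact hy0 θ j (act_pos h1 (wt_act (nrm_ne hj) h1 s0.2.1)).ne'
    have hcLL : ∀ θ, LL c θ := by
      intro θ
      refine LL.comp (f := fun θ : NerveSet U => wt θ.1) (nrm_LL (wt_sum_pos θ.2.2.1)) ?_
      refine LL.comp (g := wt) (LL.of_contDiffAt ?_) (hval θ)
      exact (contDiff_pi.2 wt_contDiff).contDiffAt
    let H : NerveSet U × unitInterval → NerveSet U := fun q =>
      ⟨path3 (f (g q.1)) (c q.1) q.1 q.2, path3_mem q.2.2 (hf0 _) (hc0 _) 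
        (fun j => (q.1.2.1 j).1) (hf1 _) (hc1 _) q.1.2.2.1 (g q.1) (y0 q.1) (hfU _) (hcg _)
        (hcy _) (hy0 _)⟩
    obtain ⟨KH, hKH⟩ := LL.lipschitz (f := H) (by
      intro q
      have hfst : LL (fun q : NerveSet U × unitInterval => q.1) q := 
        LL.of_lip LipschitzWith.prod_fst q
      have hsnd : LL (fun q : NerveSet U × unitInterval => (q.2 : ℝ)) q := 
        LL.of_lip ((LipschitzWith.subtype_val _).comp LipschitzWith.prod_snd) q
      apply LL.codRestrict
      exact path3_LL (LL.comp (g := fun x => (f x : Fin N → ℝ))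
        (f := fun q : NerveSet U × unitInterval => g q.1) (hfLL _) 
        (LL.comp (hg q.1).1 hfst)) (LL.comp (hcLL q.1) hfst) 
        (LL.comp (hval q.1) hfst) hsnd)
    refine ⟨H, KH, hKH, fun θ => ?_, fun θ => ?_⟩
    · apply Subtype.ext
      simp [H, path3]
    · apply Subtype.ext
      simp only [H, path3]
      norm_num

end Main

end LipNerve

/-- A compact metric space admitting a (finite) good covering is Lipschitz
homotopy equivalent to the geometric realization of the nerve of the covering. -/
theorem compact_lipHomotopyEquiv_nerve {M : Type*} [MetricSpace M] [CompactSpace M]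
    {N : ℕ} (U : Fin N → Set M) (hU : IsGoodCovering U) :
    LipHomotopyEquiv M (NerveSet U) := by
  exact LipNerve.main U hU
end

section
/- Let M be a σ-compact metric space admitting a good covering 𝒰 (with countable index set J). Then M is locally Lipschitz homotopy equivalent to the geometric realization |𝒩_𝒰| of the nerve of 𝒰. -/
open Metric Set

/-- Two maps between metric spaces are *locally Lipschitz homotopic* if there is a locally
Lipschitz map `H : X × [0,1] → Y` with `H(·,0) = f` and `H(·,1) = g`. -/
def LocLipHomotopic {X Y : Type*} [MetricSpace X] [MetricSpace Y] (f g : X → Y) : Prop :=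
  ∃ H : X × unitInterval → Y, LocallyLipschitz H ∧
    (∀ x, H (x, 0) = f x) ∧ (∀ x, H (x, 1) = g x)

/-- Two metric spaces are *locally Lipschitz homotopy equivalent* if there are locally
Lipschitz maps `f : X → Y` and `g : Y → X` with `g ∘ f` and `f ∘ g` locally Lipschitz
homotopic to the identities. -/
def LocLipHomotopyEquiv (X Y : Type*) [MetricSpace X] [MetricSpace Y] : Prop :=
  ∃ (f : X → Y) (g : Y → X), LocallyLipschitz f ∧ LocallyLipschitz g ∧
    LocLipHomotopic (g ∘ f) id ∧ LocLipHomotopic (f ∘ g) id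

/-- The geometric realization of the nerve of a covering `U : J → Set M` with countable
index set: the set of finitely supported `θ : J → ℝ` (realized inside `ℓ^∞(J)`, so that
the induced metric is the sup metric) with values in `[0,1]`, total sum `1`, whose support
spans a simplex of the nerve. -/
noncomputable def NerveSetInf {M : Type*} [MetricSpace M] {J : Type*} (U : J → Set M) :
    Set (lp (fun _ : J => ℝ) ⊤) :=
  {θ | (∀ j, θ j ∈ Icc (0:ℝ) 1) ∧ (Function.support fun j => θ j).Finite ∧
    (∑ᶠ j, θ j) = 1 ∧ (⋂ j ∈ Function.support fun j => θ j, U j).Nonempty}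


namespace NerveLip

/-- Constructor for local Lipschitz continuity. -/
theorem locLip_mk {X Y : Type*} [MetricSpace X] [MetricSpace Y] (f : X → Y)
    (h : ∀ x0, ∃ C : ℝ, ∃ V ∈ nhds x0, ∀ x ∈ V, ∀ y ∈ V, dist (f x) (f y) ≤ C * dist x y) :
    LocallyLipschitz f := by
  intro x0
  obtain ⟨C, V, hV, h⟩ := h x0
  refine ⟨C.toNNReal, V, hV, LipschitzOnWith.of_dist_le_mul fun x hx y hy => (h x hx y hy).trans ?_⟩
  gcongr
  exact Real.le_coe_toNNReal C

theorem locLip_dest {X Y : Type*} [MetricSpace X] [MetricSpace Y] {f : X → Y}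
    (h : LocallyLipschitz f) (x0 : X) :
    ∃ C : ℝ, 0 ≤ C ∧ ∃ V ∈ nhds x0, ∀ x ∈ V, ∀ y ∈ V, dist (f x) (f y) ≤ C * dist x y := by
  obtain ⟨K, V, hV, hK⟩ := h x0
  exact ⟨K, K.2, V, hV, fun x hx y hy => hK.dist_le_mul x hx y hy⟩

/-- Quotient estimate. -/
theorem quot_est {a a' m m' c A B : ℝ} (hc : 0 < c) (ha' : 0 ≤ a')
    (ham' : a' ≤ m') (hm : c ≤ m) (hm' : c ≤ m') (hA : |a - a'| ≤ A) (hB : |m - m'| ≤ B) :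
    |a / m - a' / m'| ≤ (A + B) / c := by
  have h1 : 0 < m := hc.trans_le hm
  have h2 : 0 < m' := hc.trans_le hm'
  have e : a / m - a' / m' = ((a - a') - (a' / m') * (m - m')) / m := by
    field_simp
    ring
  have h3 : 0 ≤ a' / m' := by positivity
  have h4 : a' / m' ≤ 1 := (div_le_one h2).2 ham'
  have hB0 : 0 ≤ B := (abs_nonneg _).trans hB
  have hA0 : 0 ≤ A := (abs_nonneg _).trans hA
  rw [e, abs_div, abs_of_pos h1]
  apply div_le_div₀ (by positivity) _ hc hm
  calc |(a - a') - (a' / m') * (m - m')| ≤ |a - a'| + |(a' / m') * (m - m')| := abs_sub _ _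
    _ = |a - a'| + (a' / m') * |m - m'| := by rw [abs_mul, abs_of_nonneg h3]
    _ ≤ A + 1 * B := by gcongr
    _ = A + B := by ring

/-- Membership in the intersection of the `U j`, `j ∈ σ`. -/
def In {M J : Type*} (U : J → Set M) (σ : Finset J) (x : M) : Prop := ∀ j ∈ σ, x ∈ U j

theorem In.mono {M J : Type*} {U : J → Set M} {σ τ : Finset J} {x : M} (h : In U σ x)
    (hs : τ ⊆ σ) : In U τ x := fun j hj => h j (hs hj)

/-- Contraction data. -/
structure PData {M J : Type*} [MetricSpace M] (U : J → Set M) (P : Finset J → M → ℝ → M)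
    (K : Finset J → ℝ) : Prop where
  mem : ∀ σ, σ.Nonempty → ∀ x t, In U σ x → 0 ≤ t → t ≤ 1 → In U σ (P σ x t)
  zero : ∀ σ, σ.Nonempty → ∀ x, In U σ x → P σ x 0 = x
  one : ∀ σ, σ.Nonempty → ∀ x y, In U σ x → In U σ y → P σ x 1 = P σ y 1
  nn : ∀ σ, 0 ≤ K σ
  lip : ∀ σ, σ.Nonempty → ∀ x y s t, In U σ x → In U σ y → 0 ≤ s → s ≤ 1 → 0 ≤ t → t ≤ 1 →
    dist (P σ x s) (P σ y t) ≤ K σ * (dist x y + |s - t|)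

/-- Schedules. -/
structure Sched {J : Type*} (s : Finset J → ℝ) : Prop where
  nonneg : ∀ σ, 0 ≤ s σ
  le_one : ∀ σ, s σ ≤ 1
  ne : ∀ σ, 0 < s σ → σ.Nonempty
  chain : ∀ σ τ, 0 < s σ → 0 < s τ → σ ⊆ τ ∨ τ ⊆ σ

theorem Sched.sub {J : Type*} {s : Finset J → ℝ} (h : Sched s) {σ τ : Finset J} (hσ : 0 < s σ)
    (hτ : 0 < s τ) (hc : σ.card ≤ τ.card) : σ ⊆ τ := by
  rcases h.chain σ τ hσ hτ with h | h
  · exact h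
  · exact (Finset.eq_of_subset_of_card_le h hc).symm.subset

theorem Sched.uniq {J : Type*} {s : Finset J → ℝ} (h : Sched s) {σ τ : Finset J} (hσ : 0 < s σ)
    (hτ : 0 < s τ) (hc : σ.card = τ.card) : σ = τ :=
  Finset.eq_of_subset_of_card_le (h.sub hσ hτ hc.le) hc.ge

open Classical in
/-- One stage of the process. -/
noncomputable def Stage {M J : Type*} (P : Finset J → M → ℝ → M) (n : ℕ) (s : Finset J → ℝ)
    (x : M) : M :=
  if h : ∃ σ, σ.card = n ∧ 0 < s σ then P h.choose x (s h.choose) else x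

/-- The whole process. -/
noncomputable def G {M J : Type*} (P : Finset J → M → ℝ → M) : ℕ → (Finset J → ℝ) → M → M
  | 0, _, x => x
  | n + 1, s, x => G P n s (Stage P (n + 1) s x)

theorem stage_eq {M J : Type*} (P : Finset J → M → ℝ → M) {n : ℕ} {s : Finset J → ℝ}
    (hs : Sched s) {σ : Finset J} (hc : σ.card = n) (hσ : 0 < s σ) (x : M) :
    Stage P n s x = P σ x (s σ) := by
  have h : ∃ σ, σ.card = n ∧ 0 < s σ := ⟨σ, hc, hσ⟩
  have e : h.choose = σ := hs.uniq h.choose_spec.2 hσ (h.choose_spec.1.trans hc.symm)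
  unfold Stage
  rw [dif_pos h, e]

theorem stage_id {M J : Type*} (P : Finset J → M → ℝ → M) {n : ℕ} {s : Finset J → ℝ}
    (h : ¬ ∃ σ, σ.card = n ∧ 0 < s σ) (x : M) : Stage P n s x = x := by
  unfold Stage
  rw [dif_neg h]

/-- Admissibility of a point. -/
def Dom {M J : Type*} (U : J → Set M) (n : ℕ) (s : Finset J → ℝ) (x : M) : Prop :=
  ∀ σ, σ.card ≤ n → 0 < s σ → In U σ x

section
variable {M J : Type*} [MetricSpace M] {U : J → Set M} {P : Finset J → M → ℝ → M}
  {K : Finset J → ℝ}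

theorem dom_stage (hP : PData U P K) {s : Finset J → ℝ} (hs : Sched s) {n : ℕ} {x : M}
    (hx : Dom U (n + 1) s x) : Dom U n s (Stage P (n + 1) s x) := by
  by_cases h : ∃ σ, σ.card = n + 1 ∧ 0 < s σ
  · obtain ⟨σ, hc, hσ⟩ := h
    rw [stage_eq P hs hc hσ]
    intro τ hτ hτs
    exact (hP.mem σ (hs.ne _ hσ) x _ (hx σ hc.le hσ) hσ.le (hs.le_one _)).mono
      (hs.sub hτs hσ (by omega))
  · rw [stage_id P h]
    exact fun τ hτ => hx τ (by omega)

theorem G_indep (hP : PData U P K) {s : Finset J → ℝ} (hs : Sched s) {σ : Finset J}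
    (hσ : s σ = 1) : ∀ {n : ℕ} {x y : M}, σ.card ≤ n → Dom U n s x → Dom U n s y →
    G P n s x = G P n s y := by
  have hσ0 : 0 < s σ := by rw [hσ]; norm_num
  intro n
  induction n with
  | zero =>
    intro x y hc
    have := (hs.ne σ hσ0).card_pos
    omega
  | succ n ih =>
    intro x y hc hx hy
    by_cases h : σ.card ≤ n
    · exact ih h (dom_stage hP hs hx) (dom_stage hP hs hy)
    · have hc' : σ.card = n + 1 := by omega
      simp only [G]
      rw [stage_eq P hs hc' hσ0, stage_eq P hs hc' hσ0, hσ,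
        hP.one σ (hs.ne σ hσ0) x y (hx σ hc hσ0) (hy σ hc hσ0)]

theorem G_down (hP : PData U P K) {s : Finset J → ℝ} (hs : Sched s) {n N : ℕ} (hn : n ≤ N) :
    ∀ {x : M}, Dom U N s x → ∃ x', Dom U n s x' ∧ G P N s x = G P n s x' := by
  induction N, hn using Nat.le_induction with
  | base => exact fun {x} hx => ⟨x, hx, rfl⟩
  | succ N hn ih => exact fun {x} hx => ih (dom_stage hP hs hx)

theorem G_stable {s : Finset J → ℝ} {n N : ℕ} (hn : n ≤ N)
    (h : ∀ σ, 0 < s σ → σ.card ≤ n) (x : M) : G P N s x = G P n s x := by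
  induction N, hn using Nat.le_induction with
  | base => rfl
  | succ N hn ih =>
    rw [← ih]
    simp only [G]
    rw [stage_id P]
    rintro ⟨σ, hc, hσ⟩
    have := h σ hσ
    omega

theorem G_zero {s : Finset J → ℝ} (h : ∀ σ, ¬ 0 < s σ) (n : ℕ) (x : M) : G P n s x = x := by
  have := G_stable (P := P) (Nat.zero_le n) (fun σ hσ => absurd hσ (h σ)) x
  simpa [G] using this

theorem G_mem (hP : PData U P K) {s : Finset J → ℝ} (hs : Sched s) {A : Finset J}
    (hA : ∀ σ, 0 < s σ → A ⊆ σ) : ∀ {n : ℕ} {x : M}, Dom U n s x → In U A x →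
    In U A (G P n s x) := by
  intro n
  induction n with
  | zero => exact fun _ h => h
  | succ n ih =>
    intro x hx hAx
    refine ih (dom_stage hP hs hx) ?_
    by_cases h : ∃ σ, σ.card = n + 1 ∧ 0 < s σ
    · obtain ⟨σ, hc, hσ⟩ := h
      rw [stage_eq P hs hc hσ]
      exact (hP.mem σ (hs.ne _ hσ) x _ (hx σ hc.le hσ) hσ.le (hs.le_one _)).mono (hA σ hσ)
    · rwa [stage_id P h]

theorem stage_lip (hP : PData U P K) {Y : Type*} [MetricSpace Y] (V : Set Y)
    (s : Y → Finset J → ℝ) (hs : ∀ y ∈ V, Sched (s y)) {L B : ℝ}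
    (hB0 : 0 ≤ B)
    (hL : ∀ y ∈ V, ∀ z ∈ V, ∀ σ, |s y σ - s z σ| ≤ L * dist y z)
    (hB : ∀ y ∈ V, ∀ σ, 0 < s y σ → K σ ≤ B) (n : ℕ) (x : Y → M) {C : ℝ} (hC : 0 ≤ C)
    (hL0 : 0 ≤ L)
    (hx : ∀ y ∈ V, ∀ z ∈ V, dist (x y) (x z) ≤ C * dist y z)
    (hd : ∀ y ∈ V, Dom U n (s y) (x y)) :
    ∀ y ∈ V, ∀ z ∈ V, dist (Stage P n (s y) (x y)) (Stage P n (s z) (x z))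
      ≤ (C + B * C + 2 * (B * L)) * dist y z := by
  -- a single move is small, unless the same simplex acts at both points
  have key : ∀ y ∈ V, ∀ z ∈ V, (∃ σ, σ.card = n ∧ 0 < s y σ ∧ 0 < s z σ) ∨
      dist (Stage P n (s y) (x y)) (x y) ≤ B * (L * dist y z) := by
    intro y hy z hz
    by_cases h : ∃ σ, σ.card = n ∧ 0 < s y σ
    · obtain ⟨σ, hc, hσ⟩ := h
      by_cases hz' : 0 < s z σ
      · exact Or.inl ⟨σ, hc, hσ, hz'⟩
      · right
        have hz0 : s z σ = 0 := le_antisymm (not_lt.1 hz') ((hs z hz).nonneg σ)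
        have hne := (hs y hy).ne _ hσ
        have hin := hd y hy σ hc.le hσ
        have h1 := hP.lip σ hne (x y) (x y) (s y σ) 0 hin hin hσ.le ((hs y hy).le_one _) le_rfl
          zero_le_one
        rw [hP.zero σ hne _ hin, dist_self, zero_add] at h1
        rw [stage_eq P (hs y hy) hc hσ]
        have h2 := hL y hy z hz σ
        rw [hz0] at h2
        exact h1.trans (mul_le_mul (hB y hy σ hσ) h2 (abs_nonneg _) hB0)
    · right
      rw [stage_id P h, dist_self]
      positivity
  intro y hy z hz
  have hxx := hx y hy z hz
  have hdn : 0 ≤ dist y z := dist_nonneg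
  by_cases hcom : ∃ σ, σ.card = n ∧ 0 < s y σ ∧ 0 < s z σ
  · obtain ⟨σ, hc, h1, h2⟩ := hcom
    rw [stage_eq P (hs y hy) hc h1, stage_eq P (hs z hz) hc h2]
    have h3 := hP.lip σ ((hs y hy).ne _ h1) (x y) (x z) (s y σ) (s z σ) (hd y hy σ hc.le h1)
      (hd z hz σ hc.le h2) h1.le ((hs y hy).le_one _) h2.le ((hs z hz).le_one _)
    have h4 : K σ * (dist (x y) (x z) + |s y σ - s z σ|) ≤ B * (C * dist y z + L * dist y z) :=
      mul_le_mul (hB y hy σ h1) (add_le_add hxx (hL y hy z hz σ)) (by positivity) hB0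
    have h5 : 0 ≤ C * dist y z := by positivity
    have h6 : 0 ≤ B * (L * dist y z) := by positivity
    nlinarith
  · have h1 := (key y hy z hz).resolve_left hcom
    have h2 := (key z hz y hy).resolve_left (fun ⟨σ, a, b, c⟩ => hcom ⟨σ, a, c, b⟩)
    rw [dist_comm z y, dist_comm _ (x z)] at h2
    have h3 := dist_triangle4 (Stage P n (s y) (x y)) (x y) (x z) (Stage P n (s z) (x z))
    have h5 : 0 ≤ B * (C * dist y z) := by positivity
    nlinarith

theorem G_lip (hP : PData U P K) {Y : Type*} [MetricSpace Y] (V : Set Y)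
    (s : Y → Finset J → ℝ) (hs : ∀ y ∈ V, Sched (s y)) {L B : ℝ}
    (hB0 : 0 ≤ B) (hL0 : 0 ≤ L)
    (hL : ∀ y ∈ V, ∀ z ∈ V, ∀ σ, |s y σ - s z σ| ≤ L * dist y z)
    (hB : ∀ y ∈ V, ∀ σ, 0 < s y σ → K σ ≤ B) (n : ℕ) : ∀ (x : Y → M) {C : ℝ} (_ : 0 ≤ C)
    (_ : ∀ y ∈ V, ∀ z ∈ V, dist (x y) (x z) ≤ C * dist y z)
    (_ : ∀ y ∈ V, Dom U n (s y) (x y)),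
    ∃ D : ℝ, ∀ y ∈ V, ∀ z ∈ V, dist (G P n (s y) (x y)) (G P n (s z) (x z)) ≤ D * dist y z := by
  induction n with
  | zero => exact fun x C hC hx hd => ⟨C, hx⟩
  | succ n ih =>
    intro x C hC hx hd
    exact ih (fun y => Stage P (n + 1) (s y) (x y)) (C := C + B * C + 2 * (B * L)) (by positivity)
      (stage_lip hP V s hs hB0 hL hB (n + 1) x hC hL0 hx hd)
      (fun y hy => dom_stage hP (hs y hy) (hd y hy))

end

/-- Contraction data exist for a good covering. -/
theorem exists_pdata {M J : Type*} [MetricSpace M] (U : J → Set M) (hU : IsGoodCovering U) :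
    ∃ P K, PData U P K := by
  classical
  have key : ∀ σ : Finset J, ∃ (P : M → ℝ → M) (K : ℝ), 0 ≤ K ∧ (σ.Nonempty →
      (∀ x t, In U σ x → 0 ≤ t → t ≤ 1 → In U σ (P x t)) ∧
      (∀ x, In U σ x → P x 0 = x) ∧
      (∀ x y, In U σ x → In U σ y → P x 1 = P y 1) ∧
      (∀ x y s t, In U σ x → In U σ y → 0 ≤ s → s ≤ 1 → 0 ≤ t → t ≤ 1 →
        dist (P x s) (P y t) ≤ K * (dist x y + |s - t|))) := by
    intro σ
    by_cases hσ : σ.Nonempty ∧ (⋂ j ∈ σ, U j).Nonempty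
    · obtain ⟨p, F, K, hF, h0, h1, -⟩ := hU.2.2.2.2 σ hσ.1 hσ.2
      have hin : ∀ x, In U σ x ↔ x ∈ ⋂ j ∈ σ, U j := fun x => by simp [In]
      let P : M → ℝ → M := fun x t =>
        if h : x ∈ (⋂ j ∈ σ, U j) ∧ t ∈ Icc (0 : ℝ) 1 then
          (F (⟨x, h.1⟩, ⟨t, h.2⟩) : M) else x
      have hPe : ∀ x t (hx : x ∈ (⋂ j ∈ σ, U j)) (ht : t ∈ Icc (0 : ℝ) 1),
          P x t = F (⟨x, hx⟩, ⟨t, ht⟩) := fun x t hx ht => dif_pos ⟨hx, ht⟩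
      refine ⟨P, K, K.2, fun _ => ⟨?_, ?_, ?_, ?_⟩⟩
      · intro x t hx ht0 ht1
        rw [hPe x t ((hin x).1 hx) ⟨ht0, ht1⟩, hin]
        exact Subtype.coe_prop _
      · intro x hx
        rw [hPe x 0 ((hin x).1 hx) ⟨le_rfl, zero_le_one⟩]
        exact congrArg Subtype.val (h0 ⟨x, _⟩)
      · intro x y hx hy
        rw [hPe x 1 ((hin x).1 hx) ⟨zero_le_one, le_rfl⟩,
          hPe y 1 ((hin y).1 hy) ⟨zero_le_one, le_rfl⟩]
        exact congrArg Subtype.val ((h1 ⟨x, _⟩).trans (h1 ⟨y, _⟩).symm)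
      · intro x y s t hx hy hs0 hs1 ht0 ht1
        rw [hPe x s ((hin x).1 hx) ⟨hs0, hs1⟩, hPe y t ((hin y).1 hy) ⟨ht0, ht1⟩]
        have := hF.dist_le_mul (⟨x, (hin x).1 hx⟩, ⟨s, hs0, hs1⟩) (⟨y, (hin y).1 hy⟩, ⟨t, ht0, ht1⟩)
        rw [← Subtype.dist_eq]
        refine this.trans ?_
        gcongr
        rw [Prod.dist_eq]
        simp only [Subtype.dist_eq, Real.dist_eq]
        exact max_le (le_add_of_nonneg_right (abs_nonneg _)) (le_add_of_nonneg_left dist_nonneg)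
    · refine ⟨fun x _ => x, 0, le_rfl, fun hne => ?_⟩
      have hno : ∀ x, ¬ In U σ x := fun x hx => hσ ⟨hne, x, by simpa [In] using hx⟩
      exact ⟨fun x _ h => absurd h (hno x), fun x h => absurd h (hno x),
        fun x _ h => absurd h (hno x), fun x _ _ _ h => absurd h (hno x)⟩
  choose P K hK h using key
  exact ⟨P, K, fun σ hσ => (h σ hσ).1, fun σ hσ => (h σ hσ).2.1, fun σ hσ => (h σ hσ).2.2.1, hK,
    fun σ hσ => (h σ hσ).2.2.2⟩

/-- Auxiliary set for the gap function. -/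
def gapSet {J : Type*} (σ : Finset J) (θ : J → ℝ) : Set ℝ :=
  {r | r ≤ 1 ∧ (0 < r → σ.Nonempty ∧ ∀ j ∈ σ, r ≤ θ j ∧ ∀ k, k ∉ σ → θ k + r ≤ θ j)}

/-- The gap between the values of `θ` on `σ` and off `σ`. -/
noncomputable def gap {J : Type*} (σ : Finset J) (θ : J → ℝ) : ℝ := sSup (gapSet σ θ)

theorem gapSet_bdd {J : Type*} (σ : Finset J) (θ : J → ℝ) : BddAbove (gapSet σ θ) :=
  ⟨1, fun _ h => h.1⟩

theorem gapSet_zero {J : Type*} (σ : Finset J) (θ : J → ℝ) : (0 : ℝ) ∈ gapSet σ θ :=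
  ⟨zero_le_one, fun h => absurd h (lt_irrefl _)⟩

theorem gap_nonneg {J : Type*} (σ : Finset J) (θ : J → ℝ) : 0 ≤ gap σ θ :=
  le_csSup (gapSet_bdd σ θ) (gapSet_zero σ θ)

theorem gap_mem {J : Type*} (σ : Finset J) (θ : J → ℝ) : gap σ θ ∈ gapSet σ θ := by
  refine ⟨csSup_le ⟨0, gapSet_zero σ θ⟩ fun r hr => hr.1, fun h => ?_⟩
  obtain ⟨r', hr', hpos⟩ := exists_lt_of_lt_csSup ⟨0, gapSet_zero σ θ⟩ h
  refine ⟨(hr'.2 hpos).1, fun j hj => ⟨?_, fun k hk => ?_⟩⟩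
  · refine csSup_le ⟨0, gapSet_zero σ θ⟩ fun r hr => ?_
    by_cases h0 : 0 < r
    · exact ((hr.2 h0).2 j hj).1
    · have := ((hr'.2 hpos).2 j hj).1
      linarith
  · have : gap σ θ ≤ θ j - θ k := by
      refine csSup_le ⟨0, gapSet_zero σ θ⟩ fun r hr => ?_
      by_cases h0 : 0 < r
      · have := ((hr.2 h0).2 j hj).2 k hk
        linarith
      · have := ((hr'.2 hpos).2 j hj).2 k hk
        linarith
    linarith

theorem gap_lip {J : Type*} (σ : Finset J) (θ η : J → ℝ) {d : ℝ}
    (h : ∀ j, |θ j - η j| ≤ d) (hd : 0 ≤ d) : gap σ θ ≤ gap σ η + 2 * d := by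
  refine csSup_le ⟨0, gapSet_zero σ θ⟩ fun r hr => ?_
  by_cases h0 : 0 < r - 2 * d
  · have : r - 2 * d ≤ gap σ η := by
      refine le_csSup (gapSet_bdd σ η) ⟨by linarith [hr.1], fun _ => ?_⟩
      obtain ⟨h1, h2⟩ := hr.2 (by linarith)
      refine ⟨h1, fun j hj => ⟨?_, fun k hk => ?_⟩⟩
      · have := (h2 j hj).1
        have := (abs_le.1 (h j)).2
        linarith
      · have := (h2 j hj).2 k hk
        have := (abs_le.1 (h j)).2
        have := (abs_le.1 (h k)).1
        linarith
    linarith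
  · linarith [gap_nonneg σ η]

/-- The largest gap. -/
noncomputable def mm {J : Type*} (θ : J → ℝ) : ℝ := ⨆ σ : Finset J, gap σ θ

theorem gap_le_mm {J : Type*} (σ : Finset J) (θ : J → ℝ) : gap σ θ ≤ mm θ :=
  le_ciSup (f := fun σ : Finset J => gap σ θ)
    ⟨1, by rintro _ ⟨τ, rfl⟩; exact (gap_mem τ θ).1⟩ σ

theorem mm_lip {J : Type*} (θ η : J → ℝ) {d : ℝ}
    (h : ∀ j, |θ j - η j| ≤ d) (hd : 0 ≤ d) : mm θ ≤ mm η + 2 * d :=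
  ciSup_le fun σ => (gap_lip σ θ η h hd).trans (by linarith [gap_le_mm σ η])

theorem gap_abs {J : Type*} (σ : Finset J) (θ η : J → ℝ) {d : ℝ}
    (h : ∀ j, |θ j - η j| ≤ d) (hd : 0 ≤ d) : |gap σ θ - gap σ η| ≤ 2 * d := by
  have h1 := gap_lip σ θ η h hd
  have h2 := gap_lip σ η θ (fun j => by rw [abs_sub_comm]; exact h j) hd
  exact abs_le.2 ⟨by linarith, by linarith⟩

theorem mm_abs {J : Type*} (θ η : J → ℝ) {d : ℝ}
    (h : ∀ j, |θ j - η j| ≤ d) (hd : 0 ≤ d) : |mm θ - mm η| ≤ 2 * d := by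
  have h1 := mm_lip θ η h hd
  have h2 := mm_lip η θ (fun j => by rw [abs_sub_comm]; exact h j) hd
  exact abs_le.2 ⟨by linarith, by linarith⟩

/-- The schedule attached to `θ`. -/
noncomputable def sch {J : Type*} (θ : J → ℝ) (σ : Finset J) : ℝ :=
  max 0 (min 1 (4 * (gap σ θ / mm θ) - 1))

theorem sch_gap {J : Type*} {θ : J → ℝ} (hm : 0 < mm θ) {σ : Finset J} (h : 0 < sch θ σ) :
    mm θ / 4 < gap σ θ := by
  unfold sch at h
  have h1 : 0 < 4 * (gap σ θ / mm θ) - 1 := by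
    by_contra hc
    have : min 1 (4 * (gap σ θ / mm θ) - 1) ≤ 0 := (min_le_right _ _).trans (not_lt.1 hc)
    rw [max_eq_left this] at h
    exact lt_irrefl _ h
  have h2 : 1 / 4 < gap σ θ / mm θ := by linarith
  rw [lt_div_iff₀ hm] at h2
  linarith

theorem sch_one {J : Type*} {θ : J → ℝ} (hm : 0 < mm θ) {σ : Finset J}
    (h : mm θ / 2 ≤ gap σ θ) : sch θ σ = 1 := by
  have h2 : 1 / 2 ≤ gap σ θ / mm θ := by
    rw [le_div_iff₀ hm]
    linarith
  unfold sch
  rw [min_eq_left (by linarith), max_eq_right zero_le_one]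

theorem sch_sched {J : Type*} {θ : J → ℝ} (hm : 0 < mm θ) : Sched (sch θ) := by
  refine ⟨fun σ => le_max_left _ _, fun σ => max_le zero_le_one (min_le_left _ _), ?_, ?_⟩
  · intro σ h
    have := sch_gap hm h
    exact ((gap_mem σ θ).2 (by linarith)).1
  · intro σ τ hσ hτ
    have h1 := sch_gap hm hσ
    have h2 := sch_gap hm hτ
    by_contra hc
    rw [not_or, Finset.not_subset, Finset.not_subset] at hc
    obtain ⟨⟨j, hj, hj'⟩, ⟨k, hk, hk'⟩⟩ := hc
    have h3 := (((gap_mem σ θ).2 (by linarith)).2 j hj).2 k hk'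
    have h4 := (((gap_mem τ θ).2 (by linarith)).2 k hk).2 j hj'
    linarith

theorem sch_lip {J : Type*} {θ η : J → ℝ} {c d : ℝ} (hc : 0 < c) (h1 : c ≤ mm θ) (h2 : c ≤ mm η)
    (h : ∀ j, |θ j - η j| ≤ d) (hd : 0 ≤ d) (σ : Finset J) :
    |sch θ σ - sch η σ| ≤ 16 / c * d := by
  have h3 := quot_est hc (gap_nonneg σ η) (gap_le_mm σ η) h1 h2
    (gap_abs σ θ η h hd) (mm_abs θ η h hd)
  have h4 : |sch θ σ - sch η σ| ≤
      |(4 * (gap σ θ / mm θ) - 1) - (4 * (gap σ η / mm η) - 1)| := by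
    unfold sch
    refine (abs_max_sub_max_le_max _ _ _ _).trans ?_
    rw [sub_self, abs_zero, max_eq_right (abs_nonneg _)]
    refine (abs_min_sub_min_le_max _ _ _ _).trans ?_
    rw [sub_self, abs_zero, max_eq_right (abs_nonneg _)]
  refine h4.trans ?_
  have e : (4 * (gap σ θ / mm θ) - 1) - (4 * (gap σ η / mm η) - 1) =
    4 * (gap σ θ / mm θ - gap σ η / mm η) := by ring
  rw [e, abs_mul, abs_of_pos (by norm_num : (0 : ℝ) < 4)]
  calc _ ≤ 4 * ((2 * d + 2 * d) / c) := by gcongr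
    _ = _ := by ring

section
variable {M : Type*} [MetricSpace M] {J : Type*} {U : J → Set M}

theorem coord_lip (θ η : NerveSetInf U) (j : J) : |θ.1 j - η.1 j| ≤ dist θ η := by
  have := lp.norm_apply_le_norm (p := ⊤) (by simp) (θ.1 - η.1) j
  rw [Subtype.dist_eq, dist_eq_norm]
  simpa using this

/-- The support as a finset. -/
noncomputable def suppF (θ : NerveSetInf U) : Finset J := θ.2.2.1.toFinset

theorem mem_suppF {θ : NerveSetInf U} {j : J} : j ∈ suppF θ ↔ θ.1 j ≠ 0 := by
  simp [suppF]

theorem nn (θ : NerveSetInf U) (j : J) : 0 ≤ θ.1 j := (θ.2.1 j).1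

theorem exists_in (θ : NerveSetInf U) : ∃ x, In U (suppF θ) x := by
  obtain ⟨x, hx⟩ := θ.2.2.2.2
  refine ⟨x, fun j hj => ?_⟩
  simp only [mem_iInter] at hx
  exact hx j (mem_suppF.1 hj)

theorem suppF_ne (θ : NerveSetInf U) : (suppF θ).Nonempty := by
  by_contra h
  rw [Finset.not_nonempty_iff_eq_empty] at h
  have h0 : ∀ j, θ.1 j = 0 := fun j => by
    by_contra hj
    have := mem_suppF.2 hj
    rw [h] at this
    simp at this
  have := θ.2.2.2.1
  simp [h0] at this

theorem mm_pos (θ : NerveSetInf U) : 0 < mm (θ.1 : J → ℝ) := by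
  obtain ⟨i, hi, hmin⟩ := (suppF θ).exists_min_image (fun j => θ.1 j) (suppF_ne θ)
  have hpos : 0 < θ.1 i := lt_of_le_of_ne (nn θ i) (mem_suppF.1 hi).symm
  refine lt_of_lt_of_le ?_ (gap_le_mm (suppF θ) _)
  refine lt_of_lt_of_le hpos (le_csSup (gapSet_bdd _ _) ⟨(θ.2.1 i).2, fun _ => ⟨⟨i, hi⟩, ?_⟩⟩)
  intro j hj
  refine ⟨hmin j hj, fun k hk => ?_⟩
  have : θ.1 k = 0 := by
    by_contra h
    exact hk (mem_suppF.2 h)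
  rw [this, zero_add]
  exact hmin j hj

theorem sub_supp {θ : NerveSetInf U} {σ : Finset J} (h : 0 < sch (θ.1 : J → ℝ) σ) :
    σ ⊆ suppF θ := by
  intro j hj
  have h1 := sch_gap (mm_pos θ) h
  have h0 := mm_pos θ
  have := (((gap_mem σ (θ.1 : J → ℝ)).2 (by linarith)).2 j hj).1
  exact mem_suppF.2 (by linarith : 0 < θ.1 j).ne'

theorem exists_one (θ : NerveSetInf U) : ∃ σ, mm (θ.1 : J → ℝ) * (3 / 4) < gap σ (θ.1 : J → ℝ) :=
  exists_lt_of_lt_ciSup (f := fun σ : Finset J => gap σ (θ.1 : J → ℝ)) (by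
    have := mm_pos θ
    change _ < mm (θ.1 : J → ℝ)
    linarith)

theorem local_supp (hU : IsGoodCovering U) (θ0 : NerveSetInf U) :
    ∃ V ∈ nhds θ0, ∃ J0 : Finset J, ∀ θ ∈ V, suppF θ ⊆ J0 := by
  obtain ⟨j, hj⟩ := suppF_ne θ0
  have hpos : 0 < θ0.1 j := lt_of_le_of_ne (nn θ0 j) (mem_suppF.1 hj).symm
  have hfin := hU.2.2.1.finite_nonempty_inter_compact (hU.2.2.2.1 j)
  refine ⟨Metric.ball θ0 (θ0.1 j), Metric.ball_mem_nhds _ hpos, hfin.toFinset, fun θ hθ k hk => ?_⟩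
  rw [Set.Finite.mem_toFinset]
  obtain ⟨x, hx⟩ := exists_in θ
  have hjj : j ∈ suppF θ := by
    have h1 := (abs_le.1 (coord_lip θ θ0 j)).1
    have h2 : dist θ θ0 < θ0.1 j := hθ
    exact mem_suppF.2 (by linarith : 0 < θ.1 j).ne'
  exact ⟨x, hx k hk, subset_closure (hx j hjj)⟩

theorem local_sch (hU : IsGoodCovering U) (θ0 : NerveSetInf U) :
    ∃ V ∈ nhds θ0, ∃ (J0 : Finset J) (L : ℝ) (σ : Finset J), 0 ≤ L ∧
      (∀ θ ∈ V, suppF θ ⊆ J0) ∧ (∀ θ ∈ V, sch (θ.1 : J → ℝ) σ = 1) ∧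
      ∀ θ ∈ V, ∀ η ∈ V, ∀ τ, |sch (θ.1 : J → ℝ) τ - sch (η.1 : J → ℝ) τ| ≤ L * dist θ η := by
  obtain ⟨V, hV, J0, hJ⟩ := local_supp hU θ0
  obtain ⟨σ, hσ⟩ := exists_one θ0
  have hm := mm_pos θ0
  set m0 := mm (θ0.1 : J → ℝ) with hm0
  refine ⟨V ∩ Metric.ball θ0 (m0 / 12),
    Filter.inter_mem hV (Metric.ball_mem_nhds _ (by positivity)), J0, 16 / (m0 / 2), σ,
    by positivity, fun θ hθ => hJ θ hθ.1, fun θ hθ => ?_, fun θ hθ η hη τ => ?_⟩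
  · have hd : dist θ θ0 < m0 / 12 := hθ.2
    have h1 := (abs_le.1 (gap_abs σ _ _ (coord_lip θ θ0) dist_nonneg)).1
    have h2 := (abs_le.1 (mm_abs _ _ (coord_lip θ θ0) dist_nonneg)).2
    exact sch_one (mm_pos θ) (by linarith)
  · have hd : dist θ θ0 < m0 / 12 := hθ.2
    have hd' : dist η θ0 < m0 / 12 := hη.2
    have h1 := (abs_le.1 (mm_abs _ _ (coord_lip θ θ0) dist_nonneg)).1
    have h2 := (abs_le.1 (mm_abs _ _ (coord_lip η θ0) dist_nonneg)).1
    exact sch_lip (by positivity) (by linarith) (by linarith) (coord_lip θ η) dist_nonneg τ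

theorem mk_mem (w : J → ℝ) (h0 : ∀ j, 0 ≤ w j) (J0 : Finset J) (hJ : ∀ j, j ∉ J0 → w j = 0)
    (hs : ∑ j ∈ J0, w j = 1) {x : M} (hx : ∀ j, w j ≠ 0 → x ∈ U j)
    (η : lp (fun _ : J => ℝ) ⊤) (hη : ∀ j, η j = w j) : η ∈ NerveSetInf U := by
  have e : (fun j => η j) = w := funext hη
  have hsub : Function.support w ⊆ (J0 : Set J) := fun j hj => by
    by_contra h
    exact hj (hJ j h)
  change _ ∧ (Function.support fun j => η j).Finite ∧ (∑ᶠ j, (fun j => η j) j) = 1 ∧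
    (⋂ j ∈ Function.support fun j => η j, U j).Nonempty
  rw [e]
  refine ⟨fun j => ?_, J0.finite_toSet.subset hsub, ?_, x, ?_⟩
  · rw [hη]
    refine ⟨h0 j, ?_⟩
    by_cases hj : j ∈ J0
    · rw [← hs]
      exact Finset.single_le_sum (fun i _ => h0 i) hj
    · rw [hJ j hj]
      exact zero_le_one
  · rw [finsum_eq_sum_of_support_subset _ hsub, hs]
  · simp only [mem_iInter]
    exact fun j hj => hx j hj

theorem dist_le_of (θ η : NerveSetInf U) {C : ℝ} (hC : 0 ≤ C) (h : ∀ j, |θ.1 j - η.1 j| ≤ C) :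
    dist θ η ≤ C := by
  rw [Subtype.dist_eq, dist_eq_norm]
  exact lp.norm_le_of_forall_le hC (fun j => by simpa using h j)

/-- Normalization of a locally finite family of weights. -/
theorem normalize {Y : Type*} [MetricSpace Y] (w : Y → J → ℝ) (h0 : ∀ y j, 0 ≤ w y j)
    (hpos : ∀ y, ∃ j, 0 < w y j)
    (hloc : ∀ y0, ∃ V ∈ nhds y0, ∃ (J0 : Finset J) (L : ℝ), 0 ≤ L ∧
      (∀ y ∈ V, ∀ j, j ∉ J0 → w y j = 0) ∧
      ∀ y ∈ V, ∀ z ∈ V, ∀ j, |w y j - w z j| ≤ L * dist y z)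
    (hface : ∀ y, ∃ x, ∀ j, 0 < w y j → x ∈ U j) :
    ∃ r : Y → NerveSetInf U, LocallyLipschitz r ∧ ∀ y j, 0 < (r y).1 j ↔ 0 < w y j := by
  let S : Y → ℝ := fun y => ∑ᶠ j, w y j
  have hSeq : ∀ (y : Y) (J0 : Finset J), (∀ j, j ∉ J0 → w y j = 0) → S y = ∑ j ∈ J0, w y j := by
    intro y J0 h
    refine finsum_eq_sum_of_support_subset _ fun j hj => ?_
    by_contra hc
    exact hj (h j hc)
  have hfin : ∀ y, ∃ J0 : Finset J, ∀ j, j ∉ J0 → w y j = 0 := fun y => by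
    obtain ⟨V, hV, J0, L, -, h, -⟩ := hloc y
    exact ⟨J0, h y (mem_of_mem_nhds hV)⟩
  have hle : ∀ y j, w y j ≤ S y := by
    intro y j
    obtain ⟨J0, h⟩ := hfin y
    rw [hSeq y J0 h]
    by_cases hj : j ∈ J0
    · exact Finset.single_le_sum (fun i _ => h0 y i) hj
    · rw [h j hj]
      exact Finset.sum_nonneg fun i _ => h0 y i
  have hS : ∀ y, 0 < S y := fun y => by
    obtain ⟨j, hj⟩ := hpos y
    exact hj.trans_le (hle y j)
  have hmemlp : ∀ y, Memℓp (fun j => w y j / S y) ⊤ := fun y => by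
    refine memℓp_infty ⟨1, ?_⟩
    rintro _ ⟨j, rfl⟩
    simp only [Real.norm_eq_abs]
    rw [abs_of_nonneg (div_nonneg (h0 y j) (hS y).le)]
    exact (div_le_one (hS y)).2 (hle y j)
  have hmem : ∀ y, (⟨fun j => w y j / S y, hmemlp y⟩ : lp (fun _ : J => ℝ) ⊤) ∈ NerveSetInf U := by
    intro y
    obtain ⟨J0, h⟩ := hfin y
    obtain ⟨x, hx⟩ := hface y
    refine mk_mem (fun j => w y j / S y) (fun j => div_nonneg (h0 y j) (hS y).le) J0
      (fun j hj => by simp [h j hj]) ?_ (x := x) (fun j hj => hx j ?_) _ (fun j => rfl)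
    · rw [← Finset.sum_div, ← hSeq y J0 h, div_self (hS y).ne']
    · refine lt_of_le_of_ne (h0 y j) fun hc => hj ?_
      simp [← hc]
  refine ⟨fun y => ⟨_, hmem y⟩, locLip_mk _ fun y0 => ?_, fun y j => ?_⟩
  · obtain ⟨V, hV, J0, L, hL, hz, hl⟩ := hloc y0
    have hSl : ∀ y ∈ V, ∀ z ∈ V, |S y - S z| ≤ J0.card * L * dist y z := by
      intro y hy z hz'
      rw [hSeq y J0 (hz y hy), hSeq z J0 (hz z hz'), ← Finset.sum_sub_distrib]
      refine (Finset.abs_sum_le_sum_abs _ _).trans ?_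
      refine (Finset.sum_le_card_nsmul _ _ _ fun j _ => hl y hy z hz' j).trans ?_
      rw [nsmul_eq_mul, mul_assoc]
    have hy0 := mem_of_mem_nhds hV
    have hc := hS y0
    set D : ℝ := J0.card * L with hD
    have hD0 : 0 ≤ D := by positivity
    have hclose : ∀ y ∈ V ∩ Metric.ball y0 (S y0 / (2 * (D + 1))), S y0 / 2 ≤ S y := by
      intro y hy
      have h1 := (abs_le.1 (hSl y hy.1 y0 hy0)).1
      have h2 : dist y y0 < S y0 / (2 * (D + 1)) := hy.2
      rw [lt_div_iff₀ (by positivity)] at h2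
      have h3 : 0 ≤ dist y y0 := dist_nonneg
      nlinarith
    refine ⟨(L + D) / (S y0 / 2), V ∩ Metric.ball y0 (S y0 / (2 * (D + 1))),
      Filter.inter_mem hV (Metric.ball_mem_nhds _ (by positivity)), fun y hy z hz' => ?_⟩
    refine dist_le_of _ _ (by positivity) fun j => ?_
    change |w y j / S y - w z j / S z| ≤ _
    refine (quot_est (c := S y0 / 2) (by positivity) (h0 z j) (hle z j) (hclose y hy)
      (hclose z hz') (hl y hy.1 z hz'.1 j) (hSl y hy.1 z hz'.1)).trans (le_of_eq ?_)
    ring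
  · change 0 < w y j / S y ↔ _
    exact ⟨fun h => by
      by_contra hc
      have : w y j = 0 := le_antisymm (not_lt.1 hc) (h0 y j)
      simp [this] at h, fun h => div_pos h (hS y)⟩

end

theorem exists_bump {M : Type*} [MetricSpace M] (V : Set M) (hV : IsOpen V) :
    ∃ φ : M → ℝ, (∀ x y, |φ x - φ y| ≤ dist x y) ∧ (∀ x, 0 ≤ φ x) ∧ ∀ x, 0 < φ x ↔ x ∈ V := by
  by_cases h : (Vᶜ).Nonempty
  · refine ⟨fun x => Metric.infDist x Vᶜ, fun x y => ?_, fun x => Metric.infDist_nonneg,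
      fun x => ?_⟩
    · have := (Metric.lipschitz_infDist_pt (Vᶜ)).dist_le_mul x y
      simpa [Real.dist_eq] using this
    · rw [← hV.isClosed_compl.notMem_iff_infDist_pos h]
      simp
  · rw [Set.not_nonempty_iff_eq_empty, Set.compl_empty_iff] at h
    exact ⟨fun _ => 1, fun x y => by simp, fun _ => zero_le_one, fun x => by simp [h]⟩

theorem Sched.scale {J : Type*} {s : Finset J → ℝ} (h : Sched s) {u : ℝ} (h0 : 0 ≤ u)
    (h1 : u ≤ 1) : Sched (fun σ => u * s σ) := by
  have hp : ∀ σ, 0 < u * s σ → 0 < s σ := fun σ hσ => by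
    by_contra hc
    have : s σ = 0 := le_antisymm (not_lt.1 hc) (h.nonneg σ)
    simp [this] at hσ
  exact ⟨fun σ => mul_nonneg h0 (h.nonneg σ), fun σ => mul_le_one₀ h1 (h.nonneg σ) (h.le_one σ),
    fun σ hσ => h.ne σ (hp σ hσ), fun σ τ hσ hτ => h.chain σ τ (hp σ hσ) (hp τ hτ)⟩

section
variable {M : Type*} [MetricSpace M] {J : Type*} {U : J → Set M}

theorem exists_f (hU : IsGoodCovering U) :
    ∃ f : M → NerveSetInf U, LocallyLipschitz f ∧ ∀ x j, 0 < (f x).1 j ↔ x ∈ U j := by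
  choose φ hl hn hp using fun j => exists_bump (U j) (hU.1 j)
  obtain ⟨r, hr, hr'⟩ := normalize (U := U) (fun x j => φ j x) (fun x j => hn j x)
    (fun x => by
      have : x ∈ ⋃ j, U j := by rw [hU.2.1]; trivial
      obtain ⟨j, hj⟩ := mem_iUnion.1 this
      exact ⟨j, (hp j x).2 hj⟩)
    (fun x0 => by
      obtain ⟨t, ht, hfin⟩ := hU.2.2.1 x0
      refine ⟨t, ht, hfin.toFinset, 1, zero_le_one, fun y hy j hj => ?_, fun y _ z _ j => ?_⟩
      · by_contra hc
        have hpos : 0 < φ j y := lt_of_le_of_ne (hn j y) (Ne.symm hc)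
        exact hj (by
          rw [Set.Finite.mem_toFinset]
          exact ⟨y, (hp j y).1 hpos, hy⟩)
      · rw [one_mul]
        exact hl j y z)
    (fun x => ⟨x, fun j hj => (hp j x).1 hj⟩)
  exact ⟨r, hr, fun x j => (hr' x j).trans (hp j x)⟩

theorem mm_le_norm (θ : NerveSetInf U) : mm (θ.1 : J → ℝ) ≤ ‖θ.1‖ := by
  refine ciSup_le fun σ => ?_
  by_cases h : 0 < gap σ (θ.1 : J → ℝ)
  · obtain ⟨⟨j, hj⟩, h2⟩ := (gap_mem σ (θ.1 : J → ℝ)).2 h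
    have h3 := lp.norm_apply_le_norm (p := ⊤) (by simp) θ.1 j
    exact ((h2 j hj).1.trans (le_abs_self _)).trans h3
  · exact (not_lt.1 h).trans (norm_nonneg _)

theorem coord_le_norm (θ : NerveSetInf U) (j : J) : θ.1 j ≤ ‖θ.1‖ :=
  (le_abs_self _).trans (lp.norm_apply_le_norm (p := ⊤) (by simp) θ.1 j)

theorem norm_le_one (θ : NerveSetInf U) : ‖θ.1‖ ≤ 1 :=
  lp.norm_le_of_forall_le zero_le_one fun j => by
    rw [Real.norm_eq_abs, abs_of_nonneg (nn θ j)]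
    exact (θ.2.1 j).2

theorem exists_rho (hU : IsGoodCovering U) :
    ∃ r : NerveSetInf U → NerveSetInf U, LocallyLipschitz r ∧
      ∀ θ j, 0 < (r θ).1 j → 0 < θ.1 j ∧ ∀ σ, 0 < sch (θ.1 : J → ℝ) σ → j ∈ σ := by
  have hpp : ∀ (θ : NerveSetInf U) (j : J),
      0 < max 0 (θ.1 j - ‖θ.1‖ + mm (θ.1 : J → ℝ) / 4) →
      0 < θ.1 j - ‖θ.1‖ + mm (θ.1 : J → ℝ) / 4 := by
    intro θ j h
    by_contra hc
    rw [max_eq_left (not_lt.1 hc)] at h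
    exact lt_irrefl _ h
  have hp1 : ∀ (θ : NerveSetInf U) (j : J),
      0 < θ.1 j - ‖θ.1‖ + mm (θ.1 : J → ℝ) / 4 → 0 < θ.1 j := by
    intro θ j h
    have h1 := mm_le_norm θ
    have h2 := mm_pos θ
    linarith
  obtain ⟨r, hr, hr'⟩ := normalize (U := U)
    (fun (θ : NerveSetInf U) j => max 0 (θ.1 j - ‖θ.1‖ + mm (θ.1 : J → ℝ) / 4))
    (fun θ j => le_max_left _ _)
    (fun θ => by
      by_contra hc
      push Not at hc
      have h1 := mm_le_norm θ
      have h2 := mm_pos θ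
      have : ‖θ.1‖ ≤ ‖θ.1‖ - mm (θ.1 : J → ℝ) / 4 := by
        refine lp.norm_le_of_forall_le (by linarith) fun j => ?_
        rw [Real.norm_eq_abs, abs_of_nonneg (nn θ j)]
        have := (le_max_right _ _).trans (hc j)
        linarith
      linarith)
    (fun θ0 => by
      obtain ⟨V, hV, J0, hJ⟩ := local_supp hU θ0
      refine ⟨V, hV, J0, 3, by norm_num, fun θ hθ j hj => ?_, fun θ _ η _ j => ?_⟩
      · refine max_eq_left ?_
        by_contra hc
        exact hj (hJ θ hθ (mem_suppF.2 (hp1 θ j (not_le.1 hc)).ne'))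
      · refine (abs_max_sub_max_le_max _ _ _ _).trans ?_
        rw [sub_self, abs_zero, max_eq_right (abs_nonneg _)]
        have h1 := abs_le.1 (coord_lip θ η j)
        have h2 := abs_le.1 (mm_abs _ _ (coord_lip θ η) dist_nonneg)
        have h3 := abs_le.1 (abs_norm_sub_norm_le θ.1 η.1)
        rw [← dist_eq_norm, ← Subtype.dist_eq] at h3
        have h4 : 0 ≤ dist θ η := dist_nonneg
        rw [abs_le]
        constructor <;> linarith [h1.1, h1.2, h2.1, h2.2, h3.1, h3.2])
    (fun θ => by
      obtain ⟨x, hx⟩ := exists_in θ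
      exact ⟨x, fun j hj => hx j (mem_suppF.2 (hp1 θ j (hpp θ j hj)).ne')⟩)
  refine ⟨r, hr, fun θ j hj => ?_⟩
  have hj' := hpp θ j ((hr' θ j).1 hj)
  refine ⟨hp1 θ j hj', fun σ hσ => ?_⟩
  by_contra hc
  have h1 := sch_gap (mm_pos θ) hσ
  have h0 := mm_pos θ
  obtain ⟨⟨i, hi⟩, h2⟩ := (gap_mem σ (θ.1 : J → ℝ)).2 (by linarith)
  have h3 := (h2 i hi).2 j hc
  have h4 := coord_le_norm θ i
  linarith

/-- The map from the nerve to the space. -/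
noncomputable def gmap (P : Finset J → M → ℝ → M) (θ : NerveSetInf U) : M :=
  G P (suppF θ).card (sch (θ.1 : J → ℝ)) (exists_in θ).choose

theorem dom_of_in {θ : NerveSetInf U} {x : M} (hx : In U (suppF θ) x) (n : ℕ) :
    Dom U n (sch (θ.1 : J → ℝ)) x := fun _ _ hσ => hx.mono (sub_supp hσ)

theorem exists_sch_one (θ : NerveSetInf U) : ∃ σ, sch (θ.1 : J → ℝ) σ = 1 := by
  obtain ⟨σ, hσ⟩ := exists_one θ
  have := mm_pos θ
  exact ⟨σ, sch_one this (by linarith)⟩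

theorem K_bound {P : Finset J → M → ℝ → M} {K : Finset J → ℝ} (hP : PData U P K)
    (J0 : Finset J) : ∃ B, 0 ≤ B ∧ ∀ σ, σ ⊆ J0 → K σ ≤ B :=
  ⟨∑ σ ∈ J0.powerset, K σ, Finset.sum_nonneg fun σ _ => hP.nn σ, fun σ hσ =>
    Finset.single_le_sum (fun τ _ => hP.nn τ) (Finset.mem_powerset.2 hσ)⟩

theorem gmap_locLip (hU : IsGoodCovering U) {P : Finset J → M → ℝ → M} {K : Finset J → ℝ}
    (hP : PData U P K) : LocallyLipschitz (gmap P : NerveSetInf U → M) := by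
  refine locLip_mk _ fun θ0 => ?_
  obtain ⟨V, hV, J0, L, σ, hL, hJ, h1, hl⟩ := local_sch hU θ0
  obtain ⟨B, hB0, hB⟩ := K_bound hP J0
  have hθ0 := mem_of_mem_nhds hV
  have hpos : ∀ θ ∈ V, 0 < sch (θ.1 : J → ℝ) σ := fun θ hθ => by rw [h1 θ hθ]; norm_num
  obtain ⟨p, hp⟩ := exists_in θ0
  have hpσ : In U σ p := hp.mono (sub_supp (hpos θ0 hθ0))
  have hdp : ∀ θ ∈ V, Dom U σ.card (sch (θ.1 : J → ℝ)) p := fun θ hθ τ hτ hτs =>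
    hpσ.mono ((sch_sched (mm_pos θ)).sub hτs (hpos θ hθ) hτ)
  have he : ∀ θ ∈ V, gmap P θ = G P σ.card (sch (θ.1 : J → ℝ)) p := by
    intro θ hθ
    have hs := sch_sched (mm_pos θ)
    obtain ⟨x', hx', e⟩ := G_down hP hs (Finset.card_le_card (sub_supp (hpos θ hθ)))
      (dom_of_in (exists_in θ).choose_spec (suppF θ).card)
    unfold gmap
    rw [e]
    exact G_indep hP hs (h1 θ hθ) le_rfl hx' (hdp θ hθ)
  obtain ⟨D, hD⟩ := G_lip hP V (fun θ : NerveSetInf U => sch (θ.1 : J → ℝ))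
    (fun θ _ => sch_sched (mm_pos θ)) hB0 hL hl
    (fun θ hθ τ hτ => hB τ ((sub_supp hτ).trans (hJ θ hθ))) σ.card (fun _ => p) (C := 0) le_rfl
    (fun _ _ _ _ => by simp) hdp
  refine ⟨D, V, hV, fun θ hθ η hη => ?_⟩
  rw [he θ hθ, he η hη]
  exact hD θ hθ η hη

theorem hom_M (hU : IsGoodCovering U) {P : Finset J → M → ℝ → M} {K : Finset J → ℝ}
    (hP : PData U P K) (f : M → NerveSetInf U) (hf : LocallyLipschitz f)
    (hfU : ∀ x j, 0 < (f x).1 j ↔ x ∈ U j) : LocLipHomotopic (gmap P ∘ f) id := by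
  have hin : ∀ x, In U (suppF (f x)) x := fun x j hj =>
    (hfU x j).1 (lt_of_le_of_ne (nn _ _) (mem_suppF.1 hj).symm)
  let v : unitInterval → ℝ := fun u => 1 - u
  have hv0 : ∀ u, 0 ≤ v u := fun u => by have := u.2.2; simp only [v]; linarith
  have hv1 : ∀ u, v u ≤ 1 := fun u => by have := u.2.1; simp only [v]; linarith
  let s : M × unitInterval → Finset J → ℝ := fun q σ => v q.2 * sch ((f q.1).1 : J → ℝ) σ
  have hs : ∀ q, Sched (s q) := fun q => (sch_sched (mm_pos (f q.1))).scale (hv0 _) (hv1 _)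
  have hsp : ∀ q σ, 0 < s q σ → 0 < sch ((f q.1).1 : J → ℝ) σ := fun q σ h => by
    by_contra hc
    have h0 : sch ((f q.1).1 : J → ℝ) σ = 0 :=
      le_antisymm (not_lt.1 hc) ((sch_sched (mm_pos (f q.1))).nonneg σ)
    simp [s, h0] at h
  have hsub : ∀ q σ, 0 < s q σ → σ ⊆ suppF (f q.1) := fun q σ h => sub_supp (hsp q σ h)
  refine ⟨fun q => G P (suppF (f q.1)).card (s q) q.1, locLip_mk _ ?_, fun x => ?_, fun x => ?_⟩
  · rintro ⟨x0, u0⟩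
    obtain ⟨V, hV, J0, L, -, hL, hJ, -, hl⟩ := local_sch hU (f x0)
    obtain ⟨B, hB0, hB⟩ := K_bound hP J0
    obtain ⟨C, hC, W, hW, hCW⟩ := locLip_dest hf x0
    have hW' : W ∩ f ⁻¹' V ∈ nhds x0 := Filter.inter_mem hW (hf.continuous.continuousAt hV)
    let V' : Set (M × unitInterval) := Prod.fst ⁻¹' (W ∩ f ⁻¹' V)
    have hV' : V' ∈ nhds (x0, u0) := continuousAt_fst hW'
    have hd1 : ∀ q r : M × unitInterval, dist q.1 r.1 ≤ dist q r := fun q r => by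
      rw [Prod.dist_eq]; exact le_max_left _ _
    have hd2 : ∀ q r : M × unitInterval, |v q.2 - v r.2| ≤ dist q r := fun q r => by
      have : |v q.2 - v r.2| = dist q.2 r.2 := by
        rw [Subtype.dist_eq, Real.dist_eq, abs_sub_comm]
        congr 1
        simp only [v]
        ring
      rw [this, Prod.dist_eq]
      exact le_max_right _ _
    obtain ⟨D, hD⟩ := G_lip hP V' s (fun q _ => hs q) (L := 1 + L * C) hB0 (by positivity)
      (fun q hq r hr σ => by
        have h1 := hl (f q.1) hq.2 (f r.1) hr.2 σ
        have h2 := hCW q.1 hq.1 r.1 hr.1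
        have h3 := hd1 q r
        have h4 := hd2 q r
        have hsq := sch_sched (mm_pos (f q.1))
        have e : s q σ - s r σ = (v q.2 - v r.2) * sch ((f q.1).1 : J → ℝ) σ +
          v r.2 * (sch ((f q.1).1 : J → ℝ) σ - sch ((f r.1).1 : J → ℝ) σ) := by
          simp only [s]; ring
        rw [e]
        refine (abs_add_le _ _).trans ?_
        rw [abs_mul, abs_mul, abs_of_nonneg (hsq.nonneg σ), abs_of_nonneg (hv0 r.2)]
        have h5 : |v q.2 - v r.2| * sch ((f q.1).1 : J → ℝ) σ ≤ dist q r * 1 :=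
          mul_le_mul h4 (hsq.le_one σ) (hsq.nonneg σ) dist_nonneg
        have h6 : v r.2 * |sch ((f q.1).1 : J → ℝ) σ - sch ((f r.1).1 : J → ℝ) σ| ≤
            1 * (L * (C * dist q r)) := by
          refine mul_le_mul (hv1 _) (h1.trans ?_) (abs_nonneg _) zero_le_one
          refine mul_le_mul_of_nonneg_left (h2.trans ?_) hL
          exact mul_le_mul_of_nonneg_left h3 hC
        linarith)
      (fun q hq σ hσ => hB σ ((hsub q σ hσ).trans (hJ _ hq.2))) J0.card (fun q => q.1) (C := 1)
      zero_le_one (fun q _ r _ => by rw [one_mul]; exact hd1 q r)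
      (fun q _ σ _ hσ => (hin q.1).mono (hsub q σ hσ))
    refine ⟨D, V', hV', fun q hq r hr => ?_⟩
    have hst : ∀ q ∈ V', G P (suppF (f q.1)).card (s q) q.1 = G P J0.card (s q) q.1 := fun q hq =>
      (G_stable (Finset.card_le_card (hJ _ hq.2))
        (fun σ hσ => Finset.card_le_card (hsub q σ hσ)) _).symm
    rw [hst q hq, hst r hr]
    exact hD q hq r hr
  · have e : s (x, 0) = sch ((f x).1 : J → ℝ) := by
      funext σ
      simp [s, v]
    obtain ⟨σ, hσ⟩ := exists_sch_one (f x)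
    simp only [e, Function.comp, gmap]
    refine G_indep hP (sch_sched (mm_pos (f x))) hσ ?_ (dom_of_in (hin x) _)
      (dom_of_in (exists_in (f x)).choose_spec _)
    exact Finset.card_le_card (sub_supp (by rw [hσ]; norm_num))
  · exact G_zero (fun σ h => by simp [s, v] at h) _ _

theorem smul_lip {Y : Type*} [MetricSpace Y] (c : unitInterval → ℝ)
    (hc : ∀ t u, |c t - c u| ≤ 4 * dist t u) (hc1 : ∀ t, |c t| ≤ 1)
    (η : Y → NerveSetInf U) (hη : LocallyLipschitz η) (y0 : Y) :
    ∃ C : ℝ, ∃ V ∈ nhds y0, ∀ q : Y × unitInterval, q.1 ∈ V → ∀ r : Y × unitInterval, r.1 ∈ V →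
      ‖c q.2 • (η q.1).1 - c r.2 • (η r.1).1‖ ≤ C * dist q r := by
  obtain ⟨C, hC, V, hV, h⟩ := locLip_dest hη y0
  refine ⟨4 + C, V, hV, fun q hq r hr => ?_⟩
  have e : c q.2 • (η q.1).1 - c r.2 • (η r.1).1 =
      (c q.2 - c r.2) • (η q.1).1 + c r.2 • ((η q.1).1 - (η r.1).1) := by
    rw [sub_smul, smul_sub]; abel
  have h1 := h q.1 hq r.1 hr
  rw [Subtype.dist_eq, dist_eq_norm] at h1
  have hd1 : dist q.1 r.1 ≤ dist q r := by rw [Prod.dist_eq]; exact le_max_left _ _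
  have hd2 : dist q.2 r.2 ≤ dist q r := by rw [Prod.dist_eq]; exact le_max_right _ _
  rw [e]
  refine (norm_add_le _ _).trans ?_
  rw [norm_smul, norm_smul, Real.norm_eq_abs, Real.norm_eq_abs]
  have h2 : |c q.2 - c r.2| * ‖(η q.1).1‖ ≤ (4 * dist q r) * 1 :=
    mul_le_mul ((hc _ _).trans (by linarith)) (norm_le_one _) (norm_nonneg _) (by positivity)
  have h3 : |c r.2| * ‖(η q.1).1 - (η r.1).1‖ ≤ 1 * (C * dist q r) :=
    mul_le_mul (hc1 _) (h1.trans (mul_le_mul_of_nonneg_left hd1 hC)) (norm_nonneg _) zero_le_one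
  linarith

theorem hom_N (k r : NerveSetInf U → NerveSetInf U) (hk : LocallyLipschitz k)
    (hr : LocallyLipschitz r)
    (h1 : ∀ θ, ∃ x, (∀ j, 0 < (k θ).1 j → x ∈ U j) ∧ ∀ j, 0 < (r θ).1 j → x ∈ U j)
    (h2 : ∀ θ j, 0 < (r θ).1 j → 0 < θ.1 j) : LocLipHomotopic k id := by
  classical
  let α : unitInterval → ℝ := fun t => max 0 (1 - 2 * t)
  let γ : unitInterval → ℝ := fun t => max 0 (2 * t - 1)
  let β : unitInterval → ℝ := fun t => 1 - α t - γ t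
  have hα0 : ∀ t, 0 ≤ α t := fun t => le_max_left _ _
  have hγ0 : ∀ t, 0 ≤ γ t := fun t => le_max_left _ _
  have hcase : ∀ t : unitInterval, (γ t = 0 ∧ α t = 1 - 2 * t ∧ (t : ℝ) ≤ 1 / 2) ∨
      (α t = 0 ∧ γ t = 2 * t - 1 ∧ 1 / 2 ≤ (t : ℝ)) := by
    intro t
    rcases le_total (t : ℝ) (1 / 2) with h | h
    · exact Or.inl ⟨max_eq_left (by linarith), max_eq_right (by linarith), h⟩
    · exact Or.inr ⟨max_eq_left (by linarith), max_eq_right (by linarith), h⟩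
  have hα1 : ∀ t, α t ≤ 1 := fun t => max_le zero_le_one (by linarith [t.2.1])
  have hγ1 : ∀ t, γ t ≤ 1 := fun t => max_le zero_le_one (by linarith [t.2.2])
  have hβ0 : ∀ t, 0 ≤ β t := fun t => by
    simp only [β]
    rcases hcase t with ⟨a, b, c⟩ | ⟨a, b, c⟩
    · linarith [t.2.1]
    · linarith [t.2.2]
  have hβ1 : ∀ t, β t ≤ 1 := fun t => by
    have := hα0 t
    have := hγ0 t
    simp only [β]
    linarith
  have hαl : ∀ t u, |α t - α u| ≤ 2 * dist t u := fun t u => by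
    refine (abs_max_sub_max_le_max _ _ _ _).trans ?_
    rw [sub_self, abs_zero, max_eq_right (abs_nonneg _), Subtype.dist_eq, Real.dist_eq,
      show (1 - 2 * (t : ℝ)) - (1 - 2 * u) = (-2) * (t - u) by ring, abs_mul]
    norm_num
  have hγl : ∀ t u, |γ t - γ u| ≤ 2 * dist t u := fun t u => by
    refine (abs_max_sub_max_le_max _ _ _ _).trans ?_
    rw [sub_self, abs_zero, max_eq_right (abs_nonneg _), Subtype.dist_eq, Real.dist_eq,
      show (2 * (t : ℝ) - 1) - (2 * u - 1) = 2 * (t - u) by ring, abs_mul]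
    norm_num
  have hβl : ∀ t u, |β t - β u| ≤ 4 * dist t u := fun t u => by
    have h1 := abs_le.1 (hαl t u)
    have h2 := abs_le.1 (hγl t u)
    simp only [β]
    rw [abs_le]
    constructor <;> linarith [h1.1, h1.2, h2.1, h2.2]
  let h : NerveSetInf U × unitInterval → lp (fun _ : J => ℝ) ⊤ := fun q =>
    α q.2 • (k q.1).1 + β q.2 • (r q.1).1 + γ q.2 • q.1.1
  have hcoord : ∀ q j, h q j = α q.2 * (k q.1).1 j + β q.2 * (r q.1).1 j + γ q.2 * q.1.1 j := by
    intro q j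
    rfl
  have hsum : ∀ (θ : NerveSetInf U) (J0 : Finset J), suppF θ ⊆ J0 → ∑ j ∈ J0, θ.1 j = 1 := by
    intro θ J0 hJ
    rw [← θ.2.2.2.1, finsum_eq_sum_of_support_subset]
    exact fun j hj => hJ (mem_suppF.2 hj)
  have hmem : ∀ q, h q ∈ NerveSetInf U := by
    rintro ⟨θ, t⟩
    have hpt : ∃ x, ∀ j, α t * (k θ).1 j + β t * (r θ).1 j + γ t * θ.1 j ≠ 0 → x ∈ U j := by
      rcases hcase t with ⟨a, -, -⟩ | ⟨a, -, -⟩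
      · obtain ⟨x, hx1, hx2⟩ := h1 θ
        refine ⟨x, fun j hj => ?_⟩
        by_contra hc
        have e1 : (k θ).1 j = 0 := le_antisymm (not_lt.1 fun h => hc (hx1 j h)) (nn _ _)
        have e2 : (r θ).1 j = 0 := le_antisymm (not_lt.1 fun h => hc (hx2 j h)) (nn _ _)
        exact hj (by rw [a, e1, e2]; ring)
      · obtain ⟨x, hx⟩ := exists_in θ
        refine ⟨x, fun j hj => ?_⟩
        by_contra hc
        have e1 : θ.1 j = 0 := by
          by_contra h
          exact hc (hx j (mem_suppF.2 h))
        have e2 : (r θ).1 j = 0 :=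
          le_antisymm (not_lt.1 fun h => (h2 θ j h).ne' e1) (nn _ _)
        exact hj (by rw [a, e1, e2]; ring)
    obtain ⟨x, hx⟩ := hpt
    refine mk_mem (fun j => α t * (k θ).1 j + β t * (r θ).1 j + γ t * θ.1 j)
      (fun j => ?_) (suppF (k θ) ∪ suppF (r θ) ∪ suppF θ) (fun j hj => ?_) ?_ hx _
      (fun j => hcoord (θ, t) j)
    · have := nn (k θ) j
      have := nn (r θ) j
      have := nn θ j
      have := hα0 t
      have := hβ0 t
      have := hγ0 t
      positivity
    · simp only [Finset.mem_union, not_or, mem_suppF, not_not] at hj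
      rw [hj.1.1, hj.1.2, hj.2]
      ring
    · rw [Finset.sum_add_distrib, Finset.sum_add_distrib, ← Finset.mul_sum, ← Finset.mul_sum,
        ← Finset.mul_sum, hsum (k θ) _ (by
          intro j hj; simp [hj]), hsum (r θ) _ (by intro j hj; simp [hj]),
        hsum θ _ (by intro j hj; simp [hj])]
      simp only [β]
      ring
  refine ⟨fun q => ⟨h q, hmem q⟩, locLip_mk _ ?_, fun θ => ?_, fun θ => ?_⟩
  · rintro ⟨θ0, t0⟩
    have hid : LocallyLipschitz (fun θ : NerveSetInf U => θ) := LocallyLipschitz.id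
    obtain ⟨C1, V1, hV1, l1⟩ := smul_lip α
      (fun t u => (hαl t u).trans (by linarith [dist_nonneg (x := t) (y := u)]))
      (fun t => by rw [abs_of_nonneg (hα0 t)]; exact hα1 t) k hk θ0
    obtain ⟨C2, V2, hV2, l2⟩ := smul_lip β hβl
      (fun t => by rw [abs_of_nonneg (hβ0 t)]; exact hβ1 t) r hr θ0
    obtain ⟨C3, V3, hV3, l3⟩ := smul_lip γ
      (fun t u => (hγl t u).trans (by linarith [dist_nonneg (x := t) (y := u)]))
      (fun t => by rw [abs_of_nonneg (hγ0 t)]; exact hγ1 t) _ hid θ0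
    refine ⟨C1 + C2 + C3, Prod.fst ⁻¹' (V1 ∩ V2 ∩ V3),
      continuousAt_fst (Filter.inter_mem (Filter.inter_mem hV1 hV2) hV3), fun q hq p hp => ?_⟩
    rw [Subtype.dist_eq, dist_eq_norm]
    have e : h q - h p = (α q.2 • (k q.1).1 - α p.2 • (k p.1).1) +
        (β q.2 • (r q.1).1 - β p.2 • (r p.1).1) + (γ q.2 • q.1.1 - γ p.2 • p.1.1) := by
      simp only [h]; abel
    change ‖h q - h p‖ ≤ _
    rw [e]
    refine (norm_add₃_le).trans ?_
    have a1 := l1 q hq.1.1 p hp.1.1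
    have a2 := l2 q hq.1.2 p hp.1.2
    have a3 := l3 q hq.2 p hp.2
    linarith
  · apply Subtype.ext
    have e1 : α 0 = 1 := by simp [α]
    have e2 : γ 0 = 0 := by simp [γ]
    have e3 : β 0 = 0 := by simp [β, e1, e2]
    change α 0 • (k θ).1 + β 0 • (r θ).1 + γ 0 • θ.1 = (k θ).1
    rw [e1, e2, e3]
    simp
  · apply Subtype.ext
    have e1 : α 1 = 0 := by simp [α]
    have e2 : γ 1 = 1 := by
      change max 0 (2 * (1 : ℝ) - 1) = 1
      norm_num
    have e3 : β 1 = 0 := by simp [β, e1, e2]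
    change α 1 • (k θ).1 + β 1 • (r θ).1 + γ 1 • θ.1 = θ.1
    rw [e1, e2, e3]
    simp

theorem main (hU : IsGoodCovering U) : LocLipHomotopyEquiv M (NerveSetInf U) := by
  obtain ⟨P, K, hP⟩ := exists_pdata U hU
  obtain ⟨f, hf, hfU⟩ := exists_f hU
  obtain ⟨r, hr, hrs⟩ := exists_rho hU
  have hg := gmap_locLip hU hP
  refine ⟨f, gmap P, hf, hg, hom_M hU hP f hf hfU,
    hom_N (f ∘ gmap P) r (hf.comp hg) hr (fun θ => ⟨gmap P θ, fun j hj => (hfU _ j).1 hj, ?_⟩)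
      fun θ j hj => (hrs θ j hj).1⟩
  intro j hj
  have := G_mem hP (sch_sched (mm_pos θ)) (A := {j})
    (fun σ hσ => Finset.singleton_subset_iff.2 ((hrs θ j hj).2 σ hσ))
    (dom_of_in (exists_in θ).choose_spec (suppF θ).card)
    ((exists_in θ).choose_spec.mono
      (Finset.singleton_subset_iff.2 (mem_suppF.2 (hrs θ j hj).1.ne')))
  exact this j (Finset.mem_singleton_self j)

end

end NerveLip

/-- A σ-compact metric space admitting a good covering (with countable
index set) is locally Lipschitz homotopy equivalent to the geometric realization of the
nerve of the covering. -/
theorem sigmaCompact_locLipHomotopyEquiv_nerve {M : Type*} [MetricSpace M]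
    [SigmaCompactSpace M] {J : Type*} [Countable J]
    (U : J → Set M) (hU : IsGoodCovering U) :
    LocLipHomotopyEquiv M (NerveSetInf U) := by
  exact NerveLip.main hU
end

section
/- Let X be a σ-compact metric space admitting a good covering, and let Y be a locally Lipschitz contractible metric space. Then the natural map [X,Y]_{loc-Lip} → [X,Y], sending the locally Lipschitz homotopy class of a locally Lipschitz map to its (continuous) homotopy class, is bijective. In particular, every continuous map from X to Y is homotopic to a locally Lipschitz map. -/
open Metric Set

/-- Two maps are (continuously) *homotopic*. -/
def ContHomotopic {X Y : Type*} [TopologicalSpace X] [TopologicalSpace Y]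
    (f g : X → Y) : Prop :=
  ∃ H : X × unitInterval → Y, Continuous H ∧
    (∀ x, H (x, 0) = f x) ∧ (∀ x, H (x, 1) = g x)

/-- A metric space `Y` is *locally Lipschitz contractible* if for every `y ∈ Y` and every
neighborhood `U` of `y` there are a neighborhood `V ⊆ U` of `y` and a Lipschitz homotopy
`H : V × [0,1] → U` contracting `V` to `y` inside `U`, keeping `y` fixed. -/
def LocallyLipschitzContractible (Y : Type*) [MetricSpace Y] : Prop :=
  ∀ y : Y, ∀ U ∈ nhds y, ∃ V ∈ nhds y, V ⊆ U ∧
    ∃ (H : V × unitInterval → Y) (K : NNReal), LipschitzWith K H ∧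
      (∀ v, H (v, 0) = (v : Y)) ∧ (∀ v, H (v, 1) = y) ∧
      (∀ (hy : y ∈ V) (t : unitInterval), H (⟨y, hy⟩, t) = y) ∧
      (∀ v t, H (v, t) ∈ U)

namespace LLH

open Filter Topology

universe u v

/-- Pointwise local Lipschitz condition. -/
def LipAt {α β : Type*} [MetricSpace α] [MetricSpace β] (f : α → β) (x : α) : Prop :=
  ∃ K : NNReal, ∃ N ∈ 𝓝 x, LipschitzOnWith K f N

section LipAt
variable {α β γ : Type*} [MetricSpace α] [MetricSpace β] [MetricSpace γ]

lemma LipAt.continuousAt {f : α → β} {x : α} (h : LipAt f x) : ContinuousAt f x := by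
  obtain ⟨K, N, hN, h⟩ := h
  exact h.continuousOn.continuousAt hN

lemma LipAt.congr {f g : α → β} {x : α} (h : LipAt f x) (hfg : g =ᶠ[𝓝 x] f) : LipAt g x := by
  obtain ⟨K, N, hN, h⟩ := h
  refine ⟨K, N ∩ {y | g y = f y}, inter_mem hN hfg, ?_⟩
  intro a ha b hb
  rw [ha.2, hb.2]
  exact h ha.1 hb.1

lemma LipAt.comp {g : β → γ} {f : α → β} {x : α} (hg : LipAt g (f x)) (hf : LipAt f x) :
    LipAt (fun y => g (f y)) x := by
  have hc := hf.continuousAt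
  obtain ⟨K, N, hN, h⟩ := hg
  obtain ⟨K', N', hN', h'⟩ := hf
  refine ⟨K * K', N' ∩ f ⁻¹' N, inter_mem hN' (hc hN), ?_⟩
  exact h.comp (h'.mono inter_subset_left) (fun y hy => hy.2)

lemma LipAt.comp' {g : β → γ} {f : α → β} {x : α} {y : β} (hg : LipAt g y) (hf : LipAt f x)
    (hy : f x = y) : LipAt (fun y => g (f y)) x := by
  subst hy; exact hg.comp hf

lemma LipAt.prodMk {f : α → β} {g : α → γ} {x : α} (hf : LipAt f x) (hg : LipAt g x) :
    LipAt (fun y => (f y, g y)) x := by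
  obtain ⟨K, N, hN, h⟩ := hf
  obtain ⟨K', N', hN', h'⟩ := hg
  exact ⟨max K K', N ∩ N', inter_mem hN hN',
    (h.mono inter_subset_left).prodMk (h'.mono inter_subset_right)⟩

lemma lipAt_of_lip {f : α → β} {K : NNReal} (h : LipschitzWith K f) (x : α) : LipAt f x :=
  ⟨K, univ, univ_mem, h.lipschitzOnWith⟩

lemma lipAt_const (c : β) (x : α) : LipAt (fun _ : α => c) x :=
  lipAt_of_lip (LipschitzWith.const c) x

lemma lipAt_fst (x : α × β) : LipAt (fun p : α × β => p.1) x :=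
  lipAt_of_lip LipschitzWith.prod_fst x

lemma lipAt_snd (x : α × β) : LipAt (fun p : α × β => p.2) x :=
  lipAt_of_lip LipschitzWith.prod_snd x

lemma lipAt_of_contDiffAt {E F : Type*} [NormedAddCommGroup E] [NormedSpace ℝ E]
    [NormedAddCommGroup F] [NormedSpace ℝ F] {f : E → F} {x : E} (h : ContDiffAt ℝ 1 f x) :
    LipAt f x := by
  obtain ⟨K, t, ht, h⟩ := h.exists_lipschitzOnWith
  exact ⟨K, t, ht, h⟩

end LipAt

section core
variable {Z : Type u} {Y : Type v} [MetricSpace Z] [MetricSpace Y]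

/-- A homotopy over `W`, relative to `ρ ≤ ‖t‖`, with values controlled by `D`. -/
structure Htpy {T : Type} [NormedAddCommGroup T] (W : Set Z) (ρ : ℝ) (D : Z → Set Y)
    (H H' : Z × T → Y) (Φ : Z × T × ℝ → Y) : Prop where
  cont : ∀ z ∈ W, ∀ t u, ContinuousAt Φ (z, t, u)
  zero : ∀ z ∈ W, ∀ t u, u ≤ 0 → Φ (z, t, u) = H (z, t)
  one : ∀ z ∈ W, ∀ t u, 1 ≤ u → Φ (z, t, u) = H' (z, t)
  rel : ∀ z ∈ W, ∀ t u, ρ ≤ ‖t‖ → Φ (z, t, u) = H (z, t)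
  mem : ∀ z ∈ W, ∀ t u, Φ (z, t, u) ∈ D z

lemma Htpy.mono {T : Type} [NormedAddCommGroup T] {W : Set Z} {ρ ρ' : ℝ} {D D' : Z → Set Y}
    {H H' : Z × T → Y} {Φ : Z × T × ℝ → Y} (h : Htpy W ρ D H H' Φ) (hρ : ρ ≤ ρ')
    (hD : ∀ z ∈ W, D z ⊆ D' z) : Htpy W ρ' D' H H' Φ :=
  ⟨h.cont, h.zero, h.one, fun z hz t u ht => h.rel z hz t u (hρ.trans ht),
    fun z hz t u => hD z hz (h.mem z hz t u)⟩

lemma Htpy.rel_end {T : Type} [NormedAddCommGroup T] {W : Set Z} {ρ : ℝ} {D : Z → Set Y}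
    {H H' : Z × T → Y} {Φ : Z × T × ℝ → Y} (h : Htpy W ρ D H H' Φ) {z : Z} (hz : z ∈ W)
    {t : T} (ht : ρ ≤ ‖t‖) : H' (z, t) = H (z, t) := by
  rw [← h.one z hz t 1 le_rfl, h.rel z hz t 1 ht]

lemma ev_mem {T : Type} [NormedAddCommGroup T] {W : Set Z} (hW : IsOpen W) {z : Z}
    (hz : z ∈ W) (t : T) (u : ℝ) : ∀ᶠ p : Z × T × ℝ in 𝓝 (z, t, u), p.1 ∈ W :=
  continuous_fst.continuousAt.eventually (hW.mem_nhds hz)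

lemma Htpy.trans {T : Type} [NormedAddCommGroup T] {W : Set Z} (hW : IsOpen W)
    {ρ : ℝ} {D : Z → Set Y}
    {H H' H'' : Z × T → Y} {Φ Ψ : Z × T × ℝ → Y} (h : Htpy W ρ D H H' Φ)
    (h' : Htpy W ρ D H' H'' Ψ) :
    Htpy W ρ D H H'' (fun p => if p.2.2 ≤ 1 / 2 then Φ (p.1, p.2.1, 3 * p.2.2)
      else Ψ (p.1, p.2.1, 3 * p.2.2 - 2)) := by
  have cu : Continuous (fun p : Z × T × ℝ => p.2.2) := by fun_prop
  refine ⟨?_, ?_, ?_, ?_, ?_⟩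
  · intro z hz t u
    rcases lt_or_ge u (2 / 3) with hu | hu
    · have h1 : ContinuousAt (fun p : Z × T × ℝ => Φ (p.1, p.2.1, 3 * p.2.2)) (z, t, u) :=
        ContinuousAt.comp' (f := fun p : Z × T × ℝ => (p.1, p.2.1, 3 * p.2.2))
          (h.cont z hz t (3 * u)) (by fun_prop)
      refine h1.congr ?_
      filter_upwards [ev_mem hW hz t u, cu.continuousAt.eventually (eventually_lt_nhds hu)]
        with p hp hp2
      split_ifs with h3
      · rfl
      · rw [h.one _ hp _ _ (by linarith), h'.zero _ hp _ _ (by linarith)]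
    · have h1 : ContinuousAt (fun p : Z × T × ℝ => Ψ (p.1, p.2.1, 3 * p.2.2 - 2)) (z, t, u) :=
        ContinuousAt.comp' (f := fun p : Z × T × ℝ => (p.1, p.2.1, 3 * p.2.2 - 2))
          (h'.cont z hz t (3 * u - 2)) (by fun_prop)
      refine h1.congr ?_
      have hu' : 1 / 2 < u := by linarith
      filter_upwards [cu.continuousAt.eventually (eventually_gt_nhds hu')] with p hp2
      rw [if_neg (by linarith)]
  · intro z hz t u hu
    simp only
    rw [if_pos (by linarith), h.zero _ hz _ _ (by linarith)]
  · intro z hz t u hu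
    simp only
    rw [if_neg (by linarith), h'.one _ hz _ _ (by linarith)]
  · intro z hz t u ht
    simp only
    split_ifs
    · exact h.rel _ hz _ _ ht
    · rw [h'.rel _ hz _ _ ht, h.rel_end hz ht]
  · intro z hz t u
    simp only
    split_ifs
    · exact h.mem _ hz _ _
    · exact h'.mem _ hz _ _

lemma Htpy.refl {T : Type} [NormedAddCommGroup T] {W : Set Z}
    {ρ : ℝ} {D : Z → Set Y} {H : Z × T → Y} (hH : ∀ z ∈ W, ∀ t, ContinuousAt H (z, t))
    (hD : ∀ z ∈ W, ∀ t, H (z, t) ∈ D z) :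
    Htpy W ρ D H H (fun p => H (p.1, p.2.1)) :=
  ⟨fun z hz t u => ContinuousAt.comp' (f := fun p : Z × T × ℝ => (p.1, p.2.1))
    (hH z hz t) (by fun_prop), fun _ _ _ _ _ => rfl, fun _ _ _ _ _ => rfl,
    fun _ _ _ _ _ => rfl, fun z hz t _ => hD z hz t⟩

/-- Colourability of the parameter space. -/
def Col (T : Type) [MetricSpace T] : Prop :=
  ∃ κ : Type, Finite κ ∧ ∀ ε > (0 : ℝ), ∃ ι : Type, ∃ P : κ → ι → Set T,
    (∀ k i, IsOpen (P k i)) ∧ (∀ k i j, i ≠ j → Disjoint (P k i) (P k j)) ∧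
    (∀ x, ∃ k i, x ∈ P k i) ∧ ∀ k i, ∀ x ∈ P k i, ∀ y ∈ P k i, dist x y < ε

/-- Admissible parameter spaces. -/
def Adm (T : Type) [NormedAddCommGroup T] : Prop := ProperSpace T ∧ Col T

lemma col_real : Col ℝ := by
  refine ⟨Bool, inferInstance, fun ε hε => ⟨ℤ, fun b m =>
    Ioo ((2 * m + (if b then 1 else 0)) * (ε / 4)) ((2 * m + (if b then 1 else 0) + 2) * (ε / 4)),
    fun _ _ => isOpen_Ioo, ?_, ?_, ?_⟩⟩
  · have key : ∀ (c : ℝ) (i j : ℤ), i < j → Disjoint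
        (Ioo ((2 * i + c) * (ε / 4)) ((2 * i + c + 2) * (ε / 4)))
        (Ioo ((2 * j + c) * (ε / 4)) ((2 * j + c + 2) * (ε / 4))) := by
      intro c i j hij
      rw [Set.disjoint_left]
      rintro x ⟨h1, h2⟩ ⟨h3, h4⟩
      have h5 : (i : ℝ) + 1 ≤ j := by exact_mod_cast hij
      nlinarith
    intro b i j hij
    rcases lt_or_gt_of_ne hij with h | h
    · exact key _ i j h
    · exact (key _ j i h).symm
  · intro x
    have h1 := Int.floor_le (x / (ε / 2))
    have h2 := Int.lt_floor_add_one (x / (ε / 2))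
    rw [le_div_iff₀ (by linarith)] at h1
    rw [div_lt_iff₀ (by linarith)] at h2
    set m := ⌊x / (ε / 2)⌋
    rcases h1.lt_or_eq with h | h
    · refine ⟨false, m, ?_, ?_⟩ <;> simp <;> nlinarith
    · refine ⟨true, m - 1, ?_, ?_⟩ <;> simp <;> nlinarith
  · rintro b m x ⟨h1, h2⟩ y ⟨h3, h4⟩
    rw [Real.dist_eq, abs_lt]
    constructor <;> nlinarith

lemma col_prod {S T : Type} [MetricSpace S] [MetricSpace T] (hS : Col S) (hT : Col T) :
    Col (S × T) := by
  obtain ⟨κ, hκ, h⟩ := hS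
  obtain ⟨κ', hκ', h'⟩ := hT
  refine ⟨κ × κ', inferInstance, fun ε hε => ?_⟩
  obtain ⟨ι, P, hP1, hP2, hP3, hP4⟩ := h ε hε
  obtain ⟨ι', P', hP1', hP2', hP3', hP4'⟩ := h' ε hε
  refine ⟨ι × ι', fun k i => P k.1 i.1 ×ˢ P' k.2 i.2, fun k i => (hP1 _ _).prod (hP1' _ _),
    ?_, ?_, ?_⟩
  · rintro k ⟨i, i'⟩ ⟨j, j'⟩ hij
    rw [Set.disjoint_prod]
    by_cases hi : i = j
    · right
      apply hP2'
      rintro rfl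
      exact hij (by rw [hi])
    · left
      exact hP2 _ _ _ hi
  · rintro ⟨x, y⟩
    obtain ⟨k, i, hx⟩ := hP3 x
    obtain ⟨k', i', hy⟩ := hP3' y
    exact ⟨(k, k'), (i, i'), hx, hy⟩
  · rintro k i x ⟨hx, hx'⟩ y ⟨hy, hy'⟩
    rw [Prod.dist_eq]
    exact max_lt (hP4 _ _ _ hx _ hy) (hP4' _ _ _ hx' _ hy')

lemma col_unit : Col PUnit := by
  refine ⟨Unit, inferInstance, fun ε hε => ⟨Unit, fun _ _ => univ, fun _ _ => isOpen_univ,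
    fun _ i j h => absurd (Subsingleton.elim i j) h, fun x => ⟨(), (), trivial⟩, ?_⟩⟩
  intro k i x _ y _
  rw [Subsingleton.elim x y, dist_self]; exact hε

lemma adm_real : Adm ℝ := ⟨inferInstance, col_real⟩
lemma adm_unit : Adm PUnit := ⟨inferInstance, col_unit⟩
lemma Adm.prod {T : Type} [NormedAddCommGroup T] (h : Adm T) : Adm (T × ℝ) := by
  have := h.1
  exact ⟨inferInstance, col_prod h.2 col_real⟩

/-- The basic deformation property over `W`. -/
def G (W : Set Z) (D D' : Z → Set Y) : Prop :=
  ∀ (T : Type) [NormedAddCommGroup T], Adm T → ∀ r r' : ℝ, 0 < r → r < r' →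
    ∀ H : Z × T → Y, (∀ z ∈ W, ∀ t, ContinuousAt H (z, t)) →
      (∀ z ∈ W, ∀ t, r < ‖t‖ → LipAt H (z, t)) → (∀ z ∈ W, ∀ t, H (z, t) ∈ D z) →
      ∃ H' Φ, Htpy W r' D' H H' Φ ∧ ∀ z ∈ W, ∀ t, LipAt H' (z, t)

lemma G.mono {W : Set Z} {D D' E E' : Z → Set Y} (h : G W D D') (hD : ∀ z ∈ W, E z ⊆ D z)
    (hD' : ∀ z ∈ W, D' z ⊆ E' z) : G W E E' := by
  intro T _ hT r r' hr hr' H h1 h2 h3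
  obtain ⟨H', Φ, h4, h5⟩ := h T hT r r' hr hr' H h1 h2 (fun z hz t => hD z hz (h3 z hz t))
  exact ⟨H', Φ, h4.mono le_rfl hD', h5⟩

lemma G_empty (D D' : Z → Set Y) : G (∅ : Set Z) D D' := by
  intro T _ hT r r' hr hr' H h1 h2 h3
  exact ⟨H, fun p => H (p.1, p.2.1), ⟨by simp, by simp, by simp, by simp, by simp⟩, by simp⟩

lemma G_disjoint {ι : Type*} {W : ι → Set Z} (hW : ∀ i, IsOpen (W i))
    (hd : ∀ i j, i ≠ j → Disjoint (W i) (W j)) {D D' : Z → Set Y} (h : ∀ i, G (W i) D D') :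
    G (⋃ i, W i) D D' := by
  classical
  intro T _ hT r r' hr hr' H h1 h2 h3
  have key := fun i => h i T hT r r' hr hr' H (fun z hz => h1 z (mem_iUnion_of_mem i hz))
    (fun z hz => h2 z (mem_iUnion_of_mem i hz)) (fun z hz => h3 z (mem_iUnion_of_mem i hz))
  choose H' Φ hΦ hH' using key
  have uniq : ∀ i z, z ∈ W i → ∀ hz : (∃ j, z ∈ W j), hz.choose = i := by
    intro i z hz he
    by_contra hne
    exact Set.disjoint_left.1 (hd _ _ hne) he.choose_spec hz
  let G' : Z × T → Y := fun p => if hz : ∃ j, p.1 ∈ W j then H' hz.choose p else H p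
  let Θ : Z × T × ℝ → Y := fun p => if hz : ∃ j, p.1 ∈ W j then Φ hz.choose p else H (p.1, p.2.1)
  have eG : ∀ i, ∀ p : Z × T, p.1 ∈ W i → G' p = H' i p := by
    intro i p hp
    have : ∃ j, p.1 ∈ W j := ⟨i, hp⟩
    simp only [G', dif_pos this, uniq i _ hp this]
  have eΘ : ∀ i, ∀ p : Z × T × ℝ, p.1 ∈ W i → Θ p = Φ i p := by
    intro i p hp
    have : ∃ j, p.1 ∈ W j := ⟨i, hp⟩
    simp only [Θ, dif_pos this, uniq i _ hp this]
  refine ⟨G', Θ, ⟨?_, ?_, ?_, ?_, ?_⟩, ?_⟩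
  · intro z hz t u
    obtain ⟨i, hi⟩ := mem_iUnion.1 hz
    refine ((hΦ i).cont z hi t u).congr ?_
    filter_upwards [ev_mem (hW i) hi t u] with p hp
    exact (eΘ i p hp).symm
  · intro z hz t u hu
    obtain ⟨i, hi⟩ := mem_iUnion.1 hz
    rw [eΘ i _ hi, (hΦ i).zero z hi t u hu]
  · intro z hz t u hu
    obtain ⟨i, hi⟩ := mem_iUnion.1 hz
    rw [eΘ i _ hi, eG i _ hi, (hΦ i).one z hi t u hu]
  · intro z hz t u hu
    obtain ⟨i, hi⟩ := mem_iUnion.1 hz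
    rw [eΘ i _ hi, (hΦ i).rel z hi t u hu]
  · intro z hz t u
    obtain ⟨i, hi⟩ := mem_iUnion.1 hz
    rw [eΘ i _ hi]
    exact (hΦ i).mem z hi t u
  · intro z hz t
    obtain ⟨i, hi⟩ := mem_iUnion.1 hz
    refine (hH' i z hi t).congr ?_
    filter_upwards [continuous_fst.continuousAt.eventually ((hW i).mem_nhds hi)] with p hp
    exact eG i p hp

lemma cAt_comp {A B C : Type*} [TopologicalSpace A] [TopologicalSpace B] [TopologicalSpace C]
    {g : B → C} {f : A → B} {x : A} {y : B} (hg : ContinuousAt g y) (hf : ContinuousAt f x)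
    (hy : f x = y) : ContinuousAt (fun a => g (f a)) x := by
  subst hy; exact ContinuousAt.comp hg hf

lemma exists_phi {W1 W2 : Set Z} (h1 : IsOpen W1) (h2 : IsOpen W2) (c : ℝ) (hc : 0 < c) :
    ∃ φ : Z → ℝ, (∀ z ∈ W1 ∪ W2, LipAt φ z) ∧ (∀ z ∈ W1 ∪ W2, z ∉ W2 → φ z < -c) ∧
      (∀ z ∈ W1 ∪ W2, z ∉ W1 → c < φ z) := by
  by_cases e2 : W2 = univ
  · refine ⟨fun _ => 2 * c, fun z _ => lipAt_const _ _, ?_, ?_⟩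
    · intro z _ hz; exact absurd (e2 ▸ mem_univ z) hz
    · intro z _ _; simp only; linarith
  by_cases e1 : W1 = univ
  · refine ⟨fun _ => -(2 * c), fun z _ => lipAt_const _ _, ?_, ?_⟩
    · intro z _ _; simp only; linarith
    · intro z _ hz; exact absurd (e1 ▸ mem_univ z) hz
  have n1 : (W1ᶜ).Nonempty := nonempty_compl.2 e1
  have n2 : (W2ᶜ).Nonempty := nonempty_compl.2 e2
  have p1 : ∀ z ∈ W1, 0 < infDist z W1ᶜ := fun z hz =>
    (h1.isClosed_compl.notMem_iff_infDist_pos n1).1 (by simpa using hz)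
  have p2 : ∀ z ∈ W2, 0 < infDist z W2ᶜ := fun z hz =>
    (h2.isClosed_compl.notMem_iff_infDist_pos n2).1 (by simpa using hz)
  have q1 : ∀ z, 0 ≤ infDist z W1ᶜ := fun z => infDist_nonneg
  have q2 : ∀ z, 0 ≤ infDist z W2ᶜ := fun z => infDist_nonneg
  have z1 : ∀ z, z ∉ W1 → infDist z W1ᶜ = 0 := fun z hz => infDist_zero_of_mem hz
  have z2 : ∀ z, z ∉ W2 → infDist z W2ᶜ = 0 := fun z hz => infDist_zero_of_mem hz
  refine ⟨fun z => 2 * c * (infDist z W2ᶜ - infDist z W1ᶜ) / (infDist z W2ᶜ + infDist z W1ᶜ),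
    ?_, ?_, ?_⟩
  · intro z hz
    have hpos : infDist z W2ᶜ + infDist z W1ᶜ ≠ 0 := by
      rcases hz with hz | hz
      · have := p1 z hz; have := q2 z; linarith
      · have := p2 z hz; have := q1 z; linarith
    have hl : LipAt (fun z => (infDist z W2ᶜ, infDist z W1ᶜ)) z :=
      (lipAt_of_lip (lipschitz_infDist_pt _) z).prodMk (lipAt_of_lip (lipschitz_infDist_pt _) z)
    have hd : LipAt (fun p : ℝ × ℝ => 2 * c * (p.1 - p.2) / (p.1 + p.2))
        (infDist z W2ᶜ, infDist z W1ᶜ) := by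
      apply lipAt_of_contDiffAt
      apply ContDiffAt.div
      · fun_prop
      · fun_prop
      · exact hpos
    exact LipAt.comp (f := fun z => (infDist z W2ᶜ, infDist z W1ᶜ)) hd hl
  · intro z hz hz2
    have hz1 : z ∈ W1 := hz.resolve_right hz2
    have := p1 z hz1
    simp only [z2 z hz2, zero_add, zero_sub]
    rw [mul_neg, neg_div, mul_div_cancel_right₀ _ this.ne']
    linarith
  · intro z hz hz1
    have hz2 : z ∈ W2 := hz.resolve_left hz1
    have := p2 z hz2
    simp only [z1 z hz1, add_zero, sub_zero]
    rw [mul_div_cancel_right₀ _ this.ne']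
    linarith

lemma glue {T : Type} [NormedAddCommGroup T] (hT : Adm T) {W1 W2 : Set Z} (o1 : IsOpen W1)
    (o2 : IsOpen W2) {D1 D2 : Z → Set Y} (hD : ∀ z, D1 z ⊆ D2 z) {r s r' : ℝ} (hr : 0 < r)
    (hrs : r < s) (hsr : s < r') {H : Z × T → Y}
    (hL : ∀ z ∈ W1 ∪ W2, ∀ t, r < ‖t‖ → LipAt H (z, t))
    (hc : ∀ z ∈ W1 ∪ W2, ∀ t, ContinuousAt H (z, t))
    {H1 H2 : Z × T → Y} {Φ1 Φ2 : Z × T × ℝ → Y}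
    (h1 : Htpy W1 s D1 H H1 Φ1) (h2 : Htpy W2 s D1 H H2 Φ2)
    (L1 : ∀ z ∈ W1, ∀ t, LipAt H1 (z, t)) (L2 : ∀ z ∈ W2, ∀ t, LipAt H2 (z, t))
    (hG : G (W1 ∩ W2) D1 D2) :
    ∃ H' Φ, Htpy (W1 ∪ W2) r' D2 H H' Φ ∧ (∀ z ∈ W1 ∪ W2, ∀ t, LipAt H' (z, t)) ∧
      ∀ z ∈ W1, z ∉ W2 → (∀ t u, Φ1 (z, t, u) = H (z, t)) → ∀ t u, Φ (z, t, u) = H (z, t) := by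
  classical
  have hs : 0 < s := hr.trans hrs
  have hr' : 0 < r' := hs.trans hsr
  obtain ⟨φ, φL, φ2, φ1⟩ := exists_phi o1 o2 r' hr'
  have φneg : ∀ z ∈ W1 ∪ W2, φ z ≤ 0 → z ∈ W1 := by
    intro z hz h
    by_contra hn
    have := φ1 z hz hn; linarith
  have φpos : ∀ z ∈ W1 ∪ W2, 0 ≤ φ z → z ∈ W2 := by
    intro z hz h
    by_contra hn
    have := φ2 z hz hn; linarith
  have φout : ∀ z ∈ W1 ∪ W2, z ∉ W1 ∩ W2 → r' < |φ z| := by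
    intro z hz hn
    by_cases hz1 : z ∈ W1
    · have := φ2 z hz (fun h => hn ⟨hz1, h⟩)
      rw [lt_abs]; right; linarith
    · have := φ1 z hz hz1
      rw [lt_abs]; left; linarith
  set c : ℝ := 2 / s with hcdef
  have hcpos : 0 < c := by positivity
  have cs : c * s = 2 := by rw [hcdef]; field_simp
  have oW : IsOpen (W1 ∪ W2) := o1.union o2
  -- the map on the overlap
  let K : Z × (T × ℝ) → Y := fun p =>
    if p.2.2 < 0 then Φ1 (p.1, p.2.1, c * |p.2.2| - 1) else Φ2 (p.1, p.2.1, c * |p.2.2| - 1)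
  have cv : Continuous (fun p : Z × (T × ℝ) => p.2.2) := by fun_prop
  have cnt : Continuous (fun p : Z × (T × ℝ) => ‖p.2.1‖) := by fun_prop
  have cav : Continuous (fun p : Z × (T × ℝ) => c * |p.2.2| - 1) := by fun_prop
  have Kc : ∀ z ∈ W1 ∩ W2, ∀ t, ContinuousAt K (z, t) := by
    rintro z ⟨hz1, hz2⟩ ⟨t, v⟩
    rcases lt_trichotomy v 0 with hv | hv | hv
    · have := ContinuousAt.comp' (f := fun p : Z × (T × ℝ) => (p.1, p.2.1, c * |p.2.2| - 1))
        (x := (z, t, v)) (h1.cont z hz1 t (c * |v| - 1)) (by fun_prop)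
      refine this.congr ?_
      filter_upwards [cv.continuousAt.eventually (eventually_lt_nhds hv)] with p hp
      simp only [K, if_pos hp]
    · subst hv
      have := ContinuousAt.comp' (f := fun p : Z × (T × ℝ) => (p.1, p.2.1))
        (x := (z, t, 0)) (hc z (Or.inl hz1) t) (by fun_prop)
      refine this.congr ?_
      have h0 : c * |(0 : ℝ)| - 1 < 0 := by simp
      filter_upwards [ev_mem o1 hz1 t 0, ev_mem o2 hz2 t 0,
        (cav.continuousAt (x := (z, t, (0 : ℝ)))).eventually (eventually_lt_nhds h0)] with p hp1 hp2 hp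
      simp only [K]
      split_ifs
      · exact (h1.zero _ hp1 _ _ hp.le).symm
      · exact (h2.zero _ hp2 _ _ hp.le).symm
    · have := ContinuousAt.comp' (f := fun p : Z × (T × ℝ) => (p.1, p.2.1, c * |p.2.2| - 1))
        (x := (z, t, v)) (h2.cont z hz2 t (c * |v| - 1)) (by fun_prop)
      refine this.congr ?_
      filter_upwards [cv.continuousAt.eventually (eventually_gt_nhds hv)] with p hp
      simp only [K, if_neg hp.not_gt]
  have proj2 : ∀ q : Z × (T × ℝ), LipAt (fun p : Z × (T × ℝ) => (p.1, p.2.1)) q := fun q =>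
    (lipAt_fst q).prodMk ((lipAt_fst (q.2)).comp (lipAt_snd q))
  have KL : ∀ z ∈ W1 ∩ W2, ∀ t, s < ‖t‖ → LipAt K (z, t) := by
    rintro z ⟨hz1, hz2⟩ ⟨t, v⟩ ht
    rw [Prod.norm_mk, lt_max_iff, Real.norm_eq_abs, lt_abs] at ht
    rcases ht with ht | hv | hv
    · refine (LipAt.comp' (hL z (Or.inl hz1) t (hrs.trans ht)) (proj2 (z, t, v)) rfl).congr ?_
      filter_upwards [ev_mem o1 hz1 t v, ev_mem o2 hz2 t v,
        (cnt.continuousAt (x := (z, t, v))).eventually (eventually_gt_nhds ht)] with p hp1 hp2 hp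
      simp only [K]
      split_ifs
      · exact h1.rel _ hp1 _ _ hp.le
      · exact h2.rel _ hp2 _ _ hp.le
    · refine (LipAt.comp' (L2 z hz2 t) (proj2 (z, t, v)) rfl).congr ?_
      filter_upwards [ev_mem o2 hz2 t v,
        (cv.continuousAt (x := (z, t, v))).eventually (eventually_gt_nhds hv)] with p hp2 hp
      simp only [K]
      rw [if_neg (by linarith)]
      apply h2.one _ hp2
      have : s < |p.2.2| := lt_abs.2 (Or.inl hp)
      nlinarith
    · refine (LipAt.comp' (L1 z hz1 t) (proj2 (z, t, v)) rfl).congr ?_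
      have hv' : v < -s := by linarith
      filter_upwards [ev_mem o1 hz1 t v,
        (cv.continuousAt (x := (z, t, v))).eventually (eventually_lt_nhds hv')] with p hp2 hp
      simp only [K]
      rw [if_pos (by linarith)]
      apply h1.one _ hp2
      have : s < |p.2.2| := lt_abs.2 (Or.inr (by linarith))
      nlinarith
  have KD : ∀ z ∈ W1 ∩ W2, ∀ t, K (z, t) ∈ D1 z := by
    rintro z ⟨hz1, hz2⟩ ⟨t, v⟩
    simp only [K]
    split_ifs
    · exact h1.mem _ hz1 _ _
    · exact h2.mem _ hz2 _ _
  obtain ⟨K', Ψ, hΨ, K'L⟩ := hG (T × ℝ) hT.prod s r' hs hsr K Kc KL KD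
  -- first stage
  let M : Z × T → Y := fun p => K (p.1, p.2, φ p.1)
  let Φa : Z × T × ℝ → Y := fun p =>
    if φ p.1 < 0 then Φ1 (p.1, p.2.1, c * |φ p.1| * max 0 (min 1 p.2.2) - 1)
    else Φ2 (p.1, p.2.1, c * |φ p.1| * max 0 (min 1 p.2.2) - 1)
  have φc : ∀ z ∈ W1 ∪ W2, ∀ t u, ContinuousAt (fun p : Z × T × ℝ => φ p.1) (z, t, u) := by
    intro z hz t u
    exact ContinuousAt.comp' (f := fun p : Z × T × ℝ => p.1) (φL z hz).continuousAt (by fun_prop)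
  have φc2 : ∀ z ∈ W1 ∪ W2, ∀ t, ContinuousAt (fun p : Z × T => φ p.1) (z, t) := by
    intro z hz t
    exact ContinuousAt.comp' (f := fun p : Z × T => p.1) (φL z hz).continuousAt (by fun_prop)
  have timec : ∀ z ∈ W1 ∪ W2, ∀ t u, ContinuousAt
      (fun p : Z × T × ℝ => c * |φ p.1| * max 0 (min 1 p.2.2) - 1) (z, t, u) := by
    intro z hz t u
    exact ((continuousAt_const.mul (φc z hz t u).abs).mul
      (by fun_prop)).sub continuousAt_const
  have hA : Htpy (W1 ∪ W2) s D1 H M Φa := by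
    refine ⟨?_, ?_, ?_, ?_, ?_⟩
    · intro z hz t u
      have pc : ContinuousAt (fun p : Z × T × ℝ =>
          (p.1, p.2.1, c * |φ p.1| * max 0 (min 1 p.2.2) - 1)) (z, t, u) := by
        have := timec z hz t u
        fun_prop
      rcases lt_trichotomy (φ z) 0 with hv | hv | hv
      · refine (cAt_comp (h1.cont z (φneg z hz hv.le) t _) pc rfl).congr ?_
        filter_upwards [(φc z hz t u).eventually (eventually_lt_nhds hv)] with p hp
        simp only [Φa, if_pos hp]
      · have hz1 := φneg z hz hv.le
        have hz2 := φpos z hz hv.ge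
        have := ContinuousAt.comp' (f := fun p : Z × T × ℝ => (p.1, p.2.1))
          (x := (z, t, u)) (hc z hz t) (by fun_prop)
        refine this.congr ?_
        have h0 : c * |φ z| * max 0 (min 1 u) - 1 < 0 := by simp [hv]
        filter_upwards [ev_mem o1 hz1 t u, ev_mem o2 hz2 t u,
          (timec z hz t u).eventually (eventually_lt_nhds h0)] with p hp1 hp2 hp
        simp only [Φa]
        split_ifs
        · exact (h1.zero _ hp1 _ _ hp.le).symm
        · exact (h2.zero _ hp2 _ _ hp.le).symm
      · refine (cAt_comp (h2.cont z (φpos z hz hv.le) t _) pc rfl).congr ?_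
        filter_upwards [(φc z hz t u).eventually (eventually_gt_nhds hv)] with p hp
        simp only [Φa, if_neg hp.not_gt]
    · intro z hz t u hu
      have e : max 0 (min 1 u) = 0 := by
        rw [min_eq_right (by linarith), max_eq_left hu]
      simp only [Φa, e]
      split_ifs with h
      · exact h1.zero _ (φneg z hz h.le) _ _ (by simp)
      · exact h2.zero _ (φpos z hz (not_lt.1 h)) _ _ (by simp)
    · intro z hz t u hu
      have e : max 0 (min 1 u) = 1 := by
        rw [min_eq_left hu, max_eq_right zero_le_one]
      simp only [Φa, e, M, K, mul_one]
    · intro z hz t u ht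
      simp only [Φa]
      split_ifs with h
      · exact h1.rel _ (φneg z hz h.le) _ _ ht
      · exact h2.rel _ (φpos z hz (not_lt.1 h)) _ _ ht
    · intro z hz t u
      simp only [Φa]
      split_ifs with h
      · exact h1.mem _ (φneg z hz h.le) _ _
      · exact h2.mem _ (φpos z hz (not_lt.1 h)) _ _
  -- continuity of the middle map
  have Mc : ∀ z ∈ W1 ∪ W2, ∀ t, ContinuousAt M (z, t) := by
    intro z hz t
    have := ContinuousAt.comp' (f := fun p : Z × T => (p.1, p.2, (1 : ℝ))) (x := (z, t))
      (hA.cont z hz t 1) (by fun_prop)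
    refine this.congr ?_
    filter_upwards [continuous_fst.continuousAt.eventually (oW.mem_nhds hz)] with p hp
    exact hA.one _ hp _ _ le_rfl
  let Φb : Z × T × ℝ → Y := fun p =>
    if p.1 ∈ W1 ∩ W2 then Ψ (p.1, (p.2.1, φ p.1), p.2.2) else M (p.1, p.2.1)
  let H' : Z × T → Y := fun p =>
    if p.1 ∈ W1 ∩ W2 then K' (p.1, (p.2, φ p.1)) else M p
  have normge : ∀ (t : T) (z : Z), r' < |φ z| → r' ≤ ‖(t, φ z)‖ := by
    intro t z h
    rw [Prod.norm_mk]
    exact h.le.trans (le_max_right _ _)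
  have hB : Htpy (W1 ∪ W2) r' D2 M H' Φb := by
    refine ⟨?_, ?_, ?_, ?_, ?_⟩
    · intro z hz t u
      by_cases hz12 : z ∈ W1 ∩ W2
      · have pc : ContinuousAt (fun p : Z × T × ℝ => (p.1, (p.2.1, φ p.1), p.2.2)) (z, t, u) := by
          exact continuousAt_fst.prodMk ((ContinuousAt.prodMk (by fun_prop) (φc z hz t u)).prodMk
            (by fun_prop))
        refine (cAt_comp (hΨ.cont z hz12 (t, φ z) u) pc rfl).congr ?_
        filter_upwards [ev_mem (o1.inter o2) hz12 t u] with p hp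
        simp only [Φb, if_pos hp]
      · have := ContinuousAt.comp' (f := fun p : Z × T × ℝ => (p.1, p.2.1))
          (x := (z, t, u)) (Mc z hz t) (by fun_prop)
        refine this.congr ?_
        have hb := φout z hz hz12
        filter_upwards [(φc z hz t u).abs.eventually (eventually_gt_nhds hb)] with p hp
        simp only [Φb]
        split_ifs with h
        · rw [hΨ.rel _ h _ _ (normge _ _ hp)]
        · rfl
    · intro z hz t u hu
      simp only [Φb]
      split_ifs with h
      · rw [hΨ.zero _ h _ _ hu]
      · rfl
    · intro z hz t u hu
      simp only [Φb, H']
      split_ifs with h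
      · rw [hΨ.one _ h _ _ hu]
      · rfl
    · intro z hz t u ht
      simp only [Φb]
      split_ifs with h
      · rw [hΨ.rel _ h _ _ (by rw [Prod.norm_mk]; exact ht.trans (le_max_left _ _))]
      · rfl
    · intro z hz t u
      simp only [Φb]
      split_ifs with h
      · exact hΨ.mem _ h _ _
      · have := hA.mem z hz t 1
        rw [hA.one z hz t 1 le_rfl] at this
        exact hD z this
  refine ⟨H', _, (hA.mono hsr.le (fun z _ => hD z)).trans oW hB, ?_, ?_⟩
  · intro z hz t
    by_cases hz12 : z ∈ W1 ∩ W2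
    · have pl : LipAt (fun p : Z × T => (p.1, (p.2, φ p.1))) (z, t) :=
        (lipAt_fst _).prodMk ((lipAt_snd _).prodMk (LipAt.comp' (φL z hz) (lipAt_fst _) rfl))
      refine (LipAt.comp' (K'L z hz12 (t, φ z)) pl rfl).congr ?_
      filter_upwards [continuous_fst.continuousAt.eventually ((o1.inter o2).mem_nhds hz12)]
        with p hp
      simp only [H']
      exact if_pos hp
    · have hb := φout z hz hz12
      rcases lt_or_ge (φ z) 0 with hv | hv
      · have hz1 := φneg z hz hv.le
        refine (L1 z hz1 t).congr ?_
        filter_upwards [(φc2 z hz t).abs.eventually (eventually_gt_nhds hb),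
          (φc2 z hz t).eventually (eventually_lt_nhds hv),
          continuous_fst.continuousAt.eventually (o1.mem_nhds hz1)] with p hp hp2 hp1
        have : M p = H1 p := by
          simp only [M, K]
          rw [if_pos hp2]
          apply h1.one _ hp1
          nlinarith
        simp only [H']
        split_ifs with h
        · rw [← hΨ.one _ h _ 1 le_rfl, hΨ.rel _ h _ _ (normge _ _ hp), ← this]
        · exact this
      · have hz2 := φpos z hz hv
        refine (L2 z hz2 t).congr ?_
        have hv' : 0 < φ z := by
          rw [abs_of_nonneg hv] at hb; linarith
        filter_upwards [(φc2 z hz t).abs.eventually (eventually_gt_nhds hb),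
          (φc2 z hz t).eventually (eventually_gt_nhds hv'),
          continuous_fst.continuousAt.eventually (o2.mem_nhds hz2)] with p hp hp2 hp1
        have : M p = H2 p := by
          simp only [M, K]
          rw [if_neg hp2.not_gt]
          apply h2.one _ hp1
          nlinarith
        simp only [H']
        split_ifs with h
        · rw [← hΨ.one _ h _ 1 le_rfl, hΨ.rel _ h _ _ (normge _ _ hp), ← this]
        · exact this
  · intro z hz1 hz2 hst t u
    have hneg : φ z < 0 := by have := φ2 z (Or.inl hz1) hz2; linarith
    have hM : M (z, t) = H (z, t) := by
      simp only [M, K]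
      rw [if_pos hneg, hst]
    simp only
    split_ifs
    · simp only [Φa]
      rw [if_pos hneg, hst]
    · simp only [Φb]
      rw [if_neg (fun h => hz2 h.2), hM]

lemma G_union {W1 W2 : Set Z} (o1 : IsOpen W1) (o2 : IsOpen W2) {D D1 D2 : Z → Set Y}
    (hD : ∀ z, D1 z ⊆ D2 z) (h1 : G W1 D D1) (h2 : G W2 D D1) (h12 : G (W1 ∩ W2) D1 D2) :
    G (W1 ∪ W2) D D2 := by
  intro T _ hT r r' hr hr' H hc hL hm
  obtain ⟨H1, Φ1, a1, b1⟩ := h1 T hT r ((r + r') / 2) hr (by linarith) H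
    (fun z hz => hc z (Or.inl hz)) (fun z hz => hL z (Or.inl hz)) (fun z hz => hm z (Or.inl hz))
  obtain ⟨H2, Φ2, a2, b2⟩ := h2 T hT r ((r + r') / 2) hr (by linarith) H
    (fun z hz => hc z (Or.inr hz)) (fun z hz => hL z (Or.inr hz)) (fun z hz => hm z (Or.inr hz))
  obtain ⟨H', Φ, a, b, -⟩ := glue (s := (r + r') / 2) (r' := r') hT o1 o2 hD hr (by linarith) (by linarith) hL hc a1 a2 b1 b2 h12
  exact ⟨H', Φ, a, b⟩

/-- `B` contracts inside `B'` in a Lipschitz way. -/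
def CtrY (B B' : Set Y) : Prop :=
  ∃ (y' : Y) (C : Y × ℝ → Y), (∀ v ∈ B, ∀ u, LipAt C (v, u)) ∧ (∀ v ∈ B, ∀ u ≤ 0, C (v, u) = v) ∧
    (∀ v ∈ B, ∀ u ≥ 1, C (v, u) = y') ∧ ∀ v ∈ B, ∀ u, C (v, u) ∈ B'

lemma lip_ext {A : Type*} [MetricSpace A] (V : Set A) {B : Type*} [MetricSpace B]
    (F : V × unitInterval → B) (K : NNReal) (hF : LipschitzWith K F) (j : A → B) :
    ∃ C : A × ℝ → B, (∀ v ∈ interior V, ∀ u, LipAt C (v, u)) ∧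
      ∀ (v : V) (u : ℝ), C ((v : A), u) = F (v, projIcc 0 1 zero_le_one u) := by
  classical
  let C : A × ℝ → B := fun p =>
    if h : p.1 ∈ V then F (⟨p.1, h⟩, projIcc 0 1 zero_le_one p.2) else j p.1
  have hC : ∀ (v : V) (u : ℝ), C ((v : A), u) = F (v, projIcc 0 1 zero_le_one u) := by
    intro v u
    simp only [C, dif_pos v.2]
  refine ⟨C, ?_, hC⟩
  intro v hv u
  refine ⟨K, V ×ˢ univ, prod_mem_nhds (mem_interior_iff_mem_nhds.1 hv) univ_mem, ?_⟩
  rintro ⟨a, s⟩ ⟨ha, -⟩ ⟨b, t⟩ ⟨hb, -⟩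
  have e1 := hC ⟨a, ha⟩ s
  have e2 := hC ⟨b, hb⟩ t
  simp only at e1 e2
  rw [e1, e2]
  refine (hF _ _).trans ?_
  gcongr
  simp only [Prod.edist_eq]
  refine max_le_max le_rfl ?_
  simpa using LipschitzWith.projIcc (zero_le_one' ℝ) s t

lemma ctr_of_llc (hY : LocallyLipschitzContractible Y) (y : Y) (ε : ℝ) (hε : 0 < ε) :
    ∃ δ > 0, CtrY (ball y δ) (ball y ε) := by
  obtain ⟨V, hV, hVU, F, K, hF, h0, h1, -, hm⟩ := hY y (ball y ε) (ball_mem_nhds y hε)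
  obtain ⟨C, hC, e⟩ := lip_ext V F K hF id
  obtain ⟨δ, hδ, hb⟩ := Metric.mem_nhds_iff.1 hV
  refine ⟨δ, hδ, y, C, ?_, ?_, ?_, ?_⟩
  · intro v hv u
    exact hC v (interior_maximal hb isOpen_ball hv) u
  · intro v hv u hu
    have := e ⟨v, hb hv⟩ u
    rw [projIcc_of_le_left _ hu] at this
    rw [this]
    exact h0 _
  · intro v hv u hu
    have := e ⟨v, hb hv⟩ u
    rw [projIcc_of_right_le _ hu] at this
    rw [this]
    exact h1 _
  · intro v hv u
    have := e ⟨v, hb hv⟩ u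
    rw [this]
    exact hm _ _

lemma CtrY.mono {A A' B B' : Set Y} (h : CtrY A B) (hA : A' ⊆ A) (hB : B ⊆ B') : CtrY A' B' := by
  obtain ⟨y, C, h1, h2, h3, h4⟩ := h
  exact ⟨y, C, fun v hv => h1 v (hA hv), fun v hv => h2 v (hA hv), fun v hv => h3 v (hA hv),
    fun v hv u => hB (h4 v (hA hv) u)⟩

/-- Uniform local contractibility along `C`. -/
def ULC (C : Set Y) : Prop := ∀ ε > (0 : ℝ), ∃ δ > 0, ∀ y ∈ C, CtrY (ball y δ) (ball y ε)

lemma ulc_of_llc (hY : LocallyLipschitzContractible Y) {C : Set Y} (hC : IsCompact C) :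
    ULC C := by
  intro ε hε
  choose δ hδ h using fun y => ctr_of_llc hY y (ε / 2) (by linarith)
  obtain ⟨d, hd, hb⟩ := lebesgue_number_lemma_of_metric (c := fun y => ball y (min (δ y) (ε / 2)))
    hC (fun y => isOpen_ball)
    (fun y _ => mem_iUnion.2 ⟨y, mem_ball_self (lt_min (hδ y) (by linarith))⟩)
  refine ⟨d, hd, fun x hx => ?_⟩
  obtain ⟨y, hy⟩ := hb x hx
  refine (h y).mono (hy.trans (ball_subset_ball (min_le_left _ _))) ?_
  have : x ∈ ball y (ε / 2) := ball_subset_ball (min_le_right _ _) (hy (mem_ball_self hd))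
  apply ball_subset_ball'
  rw [mem_ball, dist_comm] at this
  linarith

/-- cutoff function -/
noncomputable def cut (r r' s : ℝ) : ℝ := max 0 (2 * (r' - s) / (r' - r))

lemma cut_lip (r r' s : ℝ) : LipAt (cut r r') s := by
  have h1 : LipAt (fun s : ℝ => 2 * (r' - s) / (r' - r)) s := by
    apply lipAt_of_contDiffAt
    fun_prop
  exact LipAt.comp' (g := fun x : ℝ => max 0 x)
    (lipAt_of_lip (LipschitzWith.id.const_max 0) _) h1 rfl

lemma cut_zero {r r' s : ℝ} (h : r < r') (hs : r' ≤ s) : cut r r' s = 0 := by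
  apply max_eq_left
  apply div_nonpos_of_nonpos_of_nonneg <;> linarith

lemma cut_nonneg (r r' s : ℝ) : 0 ≤ cut r r' s := le_max_left _ _

lemma cut_one {r r' s : ℝ} (h : r < r') (hs : s ≤ (r + r') / 2) : 1 ≤ cut r r' s := by
  apply le_trans _ (le_max_right _ _)
  rw [le_div_iff₀ (by linarith)]
  linarith

lemma lipAt_norm {T : Type} [NormedAddCommGroup T] (t : T) : LipAt (fun t : T => ‖t‖) t :=
  lipAt_of_lip lipschitzWith_one_norm t

lemma G_ctr {W : Set Z} (hW : IsOpen W) {D D' : Z → Set Y} {B B' : Set Y} (hB : CtrY B B')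
    (hD : ∀ z ∈ W, D z ⊆ B) (hD' : ∀ z ∈ W, B' ⊆ D' z) : G W D D' := by
  intro T _ hT r r' hr hr' H hc hL hm
  obtain ⟨y, C, C1, C2, C3, C4⟩ := hB
  have hHB : ∀ z ∈ W, ∀ t, H (z, t) ∈ B := fun z hz t => hD z hz (hm z hz t)
  have ccut : Continuous (cut r r') := continuous_iff_continuousAt.2 fun s => (cut_lip r r' s).continuousAt
  refine ⟨fun p => C (H p, cut r r' ‖p.2‖),
    fun p => C (H (p.1, p.2.1), min p.2.2 1 * cut r r' ‖p.2.1‖), ⟨?_, ?_, ?_, ?_, ?_⟩, ?_⟩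
  · intro z hz t u
    have h1 : ContinuousAt (fun p : Z × T × ℝ => H (p.1, p.2.1)) (z, t, u) :=
      cAt_comp (f := fun p : Z × T × ℝ => (p.1, p.2.1)) (hc z hz t) (by fun_prop) rfl
    have h2 : ContinuousAt (fun p : Z × T × ℝ => min p.2.2 1 * cut r r' ‖p.2.1‖) (z, t, u) := by
      apply Continuous.continuousAt; fun_prop
    exact cAt_comp (C1 _ (hHB z hz t) _).continuousAt (h1.prodMk h2) rfl
  · intro z hz t u hu
    apply C2 _ (hHB z hz t)
    exact mul_nonpos_of_nonpos_of_nonneg (min_le_of_left_le hu) (cut_nonneg _ _ _)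
  · intro z hz t u hu
    simp only [min_eq_right hu, one_mul]
  · intro z hz t u ht
    simp only [cut_zero hr' ht, mul_zero]
    exact C2 _ (hHB z hz t) _ le_rfl
  · intro z hz t u
    exact hD' z hz (C4 _ (hHB z hz t) _)
  · intro z hz t
    rcases lt_or_ge r ‖t‖ with ht | ht
    · exact LipAt.comp' (C1 _ (hHB z hz t) (cut r r' ‖t‖)) ((hL z hz t ht).prodMk
        (LipAt.comp' (g := fun t : T => cut r r' ‖t‖)
          (LipAt.comp' (cut_lip r r' _) (lipAt_norm t) rfl) (lipAt_snd _) rfl)) rfl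
    · refine (lipAt_const y (z, t)).congr ?_
      have : ‖t‖ < (r + r') / 2 := by linarith
      have cn : Continuous (fun p : Z × T => ‖p.2‖) := by fun_prop
      filter_upwards [continuous_fst.continuousAt.eventually (hW.mem_nhds hz),
        cn.continuousAt.eventually (eventually_lt_nhds this)] with p hp hp2
      exact C3 _ (hHB _ hp _) _ (cut_one hr' hp2.le)

/-- `W` is a disjoint union of open sets on which `q` is nearly constant. -/
def Scat (C : Set Y) (q : Z → Y) (δ : ℝ) (W : Set Z) : Prop :=
  ∃ ι : Type, ∃ P : ι → Set Z, (∀ i, IsOpen (P i)) ∧ (∀ i j, i ≠ j → Disjoint (P i) (P j)) ∧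
    W = ⋃ i, P i ∧ ∀ i, ∃ y ∈ C, ∀ z ∈ P i, q z ∈ ball y δ

lemma Scat.isOpen {C : Set Y} {q : Z → Y} {δ : ℝ} {W : Set Z} (h : Scat C q δ W) : IsOpen W := by
  obtain ⟨ι, P, h1, h2, rfl, h4⟩ := h
  exact isOpen_iUnion h1

lemma Scat.mono {C : Set Y} {q : Z → Y} {δ δ' : ℝ} {W : Set Z} (h : Scat C q δ W) (hd : δ ≤ δ') :
    Scat C q δ' W := by
  obtain ⟨ι, P, h1, h2, h3, h4⟩ := h
  refine ⟨ι, P, h1, h2, h3, fun i => ?_⟩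
  obtain ⟨y, hy, h⟩ := h4 i
  exact ⟨y, hy, fun z hz => ball_subset_ball hd (h z hz)⟩

lemma Scat.inter {C : Set Y} {q : Z → Y} {δ : ℝ} {W W' : Set Z} (h : Scat C q δ W)
    (hW' : IsOpen W') : Scat C q δ (W ∩ W') := by
  obtain ⟨ι, P, h1, h2, h3, h4⟩ := h
  refine ⟨ι, fun i => P i ∩ W', fun i => (h1 i).inter hW',
    fun i j hij => (h2 i j hij).mono inter_subset_left inter_subset_left, ?_, fun i => ?_⟩
  · rw [h3, iUnion_inter]
  obtain ⟨y, hy, h⟩ := h4 i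
  exact ⟨y, hy, fun z hz => h z hz.1⟩

lemma G_scat {C : Set Y} (hC : ULC C) (ε : ℝ) (hε : 0 < ε) :
    ∃ δ > 0, ∀ (q : Z → Y) (W : Set Z), Scat C q δ W →
      G W (fun z => ball (q z) δ) (fun z => ball (q z) ε) := by
  obtain ⟨δ, hδ, h⟩ := hC (ε / 2) (by linarith)
  refine ⟨min (δ / 2) (ε / 2), by positivity, ?_⟩
  rintro q W ⟨ι, P, h1, h2, rfl, h4⟩
  refine G_disjoint h1 h2 fun i => ?_
  obtain ⟨y, hy, h5⟩ := h4 i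
  refine G_ctr (h1 i) (h y hy) ?_ ?_
  · intro z hz
    apply ball_subset_ball'
    have := h5 z hz
    rw [mem_ball] at this
    have := min_le_left (δ / 2) (ε / 2)
    linarith
  · intro z hz
    apply ball_subset_ball'
    have := h5 z hz
    rw [mem_ball, dist_comm] at this
    have := min_le_right (δ / 2) (ε / 2)
    linarith

lemma G_scat_finset {C : Set Y} (hC : ULC C) {κ : Type} (s : Finset κ) :
    ∀ ε > (0 : ℝ), ∃ δ > 0, δ ≤ ε ∧ ∀ (q : Z → Y) (W : κ → Set Z), (∀ k ∈ s, Scat C q δ (W k)) →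
      G (⋃ k ∈ s, W k) (fun z => ball (q z) δ) (fun z => ball (q z) ε) := by
  classical
  induction s using Finset.induction_on with
  | empty =>
    intro ε hε
    refine ⟨ε, hε, le_rfl, fun q W _ => ?_⟩
    have : (⋃ k ∈ (∅ : Finset κ), W k) = ∅ := by simp
    rw [this]
    exact G_empty _ _
  | insert a s ha ih =>
    intro ε hε
    obtain ⟨δa, hδa, hle, hA⟩ := ih ε hε
    obtain ⟨δb, hδb, hle', hB⟩ := ih δa hδa
    obtain ⟨δc, hδc, hCc⟩ := G_scat (Z := Z) hC δa hδa
    refine ⟨min δb δc, lt_min hδb hδc, (min_le_left _ _).trans (hle'.trans hle), ?_⟩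
    intro q W hW
    have hWs : ∀ k ∈ s, Scat C q (min δb δc) (W k) := fun k hk => hW k (Finset.mem_insert_of_mem hk)
    have hWa : Scat C q (min δb δc) (W a) := hW a (Finset.mem_insert_self _ _)
    have e : (⋃ k ∈ insert a s, W k) = (⋃ k ∈ s, W k) ∪ W a := by
      rw [Finset.set_biUnion_insert, union_comm]
    rw [e]
    refine G_union (D1 := fun z => ball (q z) δa)
      (isOpen_biUnion fun k hk => (hWs k hk).isOpen) hWa.isOpen
      (fun z => ball_subset_ball hle) ?_ ?_ ?_
    · exact (hB q W fun k hk => (hWs k hk).mono (min_le_left _ _)).mono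
        (fun z _ => ball_subset_ball (min_le_left _ _)) (fun z _ => le_rfl)
    · exact (hCc q (W a) (hWa.mono (min_le_right _ _))).mono
        (fun z _ => ball_subset_ball (min_le_right _ _)) (fun z _ => le_rfl)
    · have e2 : (⋃ k ∈ s, W k) ∩ W a = ⋃ k ∈ s, (W k ∩ W a) := by
        rw [iUnion₂_inter]
      refine (congrArg (fun S => G S (fun z => ball (q z) δa) (fun z => ball (q z) ε)) e2).mpr ?_
      exact hA q (fun k => W k ∩ W a) fun k hk =>
        ((hWs k hk).inter hWa.isOpen).mono ((min_le_left _ _).trans hle')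

end core

section base
variable {Y : Type v} [MetricSpace Y]

/-- The case of a point: maps from a parameter space. -/
lemma point_case (hY : LocallyLipschitzContractible Y) {T : Type} [NormedAddCommGroup T]
    (hT : Adm T) {r r' : ℝ} (hr : 0 < r) (hr' : r < r') (h : T → Y) (hc : Continuous h)
    (hL : ∀ t, r < ‖t‖ → LipAt h t) :
    ∃ (h' : T → Y) (Ξ : T × ℝ → Y), Continuous Ξ ∧ (∀ t, ∀ u ≤ 0, Ξ (t, u) = h t) ∧
      (∀ t, ∀ u ≥ 1, Ξ (t, u) = h' t) ∧ (∀ t u, r' ≤ ‖t‖ → Ξ (t, u) = h t) ∧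
      ∀ t, LipAt h' t := by
  have := hT.1
  obtain ⟨κ, hκ, hcol⟩ := hT.2
  have := Fintype.ofFinite κ
  have hK : IsCompact (closedBall (0 : T) r') := isCompact_closedBall 0 r'
  have hulc : ULC (h '' closedBall (0 : T) r') := ulc_of_llc hY (hK.image hc)
  have hGS : ∀ ε > (0 : ℝ), ∃ δ > 0, ∀ (S : Set T), IsOpen S → S ⊆ ball 0 r' →
      G S (fun z => ball (h z) δ) (fun z => ball (h z) ε) := by
    intro ε hε
    obtain ⟨δ, hδ, -, hG⟩ := G_scat_finset (Z := T) hulc (Finset.univ : Finset κ) ε hε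
    obtain ⟨η, hη, hu⟩ := Metric.uniformContinuousOn_iff.1
      (hK.uniformContinuousOn_of_continuous hc.continuousOn) δ hδ
    obtain ⟨ι, P, P1, P2, P3, P4⟩ := hcol η hη
    refine ⟨δ, hδ, fun S hS hSb => ?_⟩
    have hsc : ∀ k, Scat (h '' closedBall (0 : T) r') h δ ((⋃ i, P k i) ∩ S) := by
      intro k
      refine ⟨ι, fun i => P k i ∩ S, fun i => (P1 k i).inter hS,
        fun i j hij => (P2 k i j hij).mono inter_subset_left inter_subset_left,
        by rw [iUnion_inter], fun i => ?_⟩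
      rcases (P k i ∩ S).eq_empty_or_nonempty with he | ⟨x, hx, hxS⟩
      · refine ⟨h 0, ⟨0, mem_closedBall_self (by linarith), rfl⟩, ?_⟩
        intro z hz
        exact absurd (show z ∈ P k i ∩ S from hz) (by rw [he]; exact notMem_empty z)
      · refine ⟨h x, ⟨x, ball_subset_closedBall (hSb hxS), rfl⟩, ?_⟩
        rintro z ⟨hz, hzS⟩
        exact hu z (ball_subset_closedBall (hSb hzS)) x (ball_subset_closedBall (hSb hxS))
          (P4 k i z hz x hx)
    have := hG h (fun k => (⋃ i, P k i) ∩ S) (fun k _ => hsc k)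
    have e : (⋃ k ∈ (Finset.univ : Finset κ), (⋃ i, P k i) ∩ S) = S := by
      ext x
      simp only [Finset.mem_univ, iUnion_true, mem_iUnion, mem_inter_iff]
      constructor
      · rintro ⟨k, -, hx⟩; exact hx
      · intro hx
        obtain ⟨k, i, hki⟩ := P3 x
        exact ⟨k, ⟨i, hki⟩, hx⟩
    rwa [e] at this
  obtain ⟨δ1, hδ1, hG1⟩ := hGS (min 1 1) (by norm_num)
  obtain ⟨δ, hδ, hG⟩ := hGS (min δ1 1) (by positivity)
  let H : T × PUnit → Y := fun p => h p.1
  have Hc : ∀ z t, ContinuousAt H (z, t) := fun z t => (hc.comp continuous_fst).continuousAt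
  have o1 : IsOpen {t : T | r < ‖t‖} := isOpen_lt continuous_const continuous_norm
  have hun : ∀ z : T, z ∈ {t : T | r < ‖t‖} ∪ ball 0 r' := by
    intro z
    by_cases hz : r < ‖z‖
    · exact Or.inl hz
    · right
      rw [mem_ball_zero_iff]
      linarith
  obtain ⟨H2, Φ2, a2, b2⟩ := hG (ball 0 r') isOpen_ball le_rfl PUnit adm_unit 1 2 one_pos
    (by norm_num) H (fun z _ t => Hc z t)
    (fun z _ t ht => by rw [Subsingleton.elim t 0, norm_zero] at ht; linarith)
    (fun z _ t => mem_ball_self hδ)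
  have a1 : Htpy {t : T | r < ‖t‖} 2 (fun z => ball (h z) (min δ1 1)) H H
      (fun p => H (p.1, p.2.1)) :=
    Htpy.refl (fun z _ t => Hc z t) (fun z _ t => mem_ball_self (by positivity))
  have b1 : ∀ z ∈ {t : T | r < ‖t‖}, ∀ t, LipAt H (z, t) := fun z hz t =>
    LipAt.comp' (hL z hz) (lipAt_fst _) rfl
  obtain ⟨H', Φ, hΦ, hL', hst⟩ := glue (D2 := fun z => ball (h z) 1) adm_unit o1
    (isOpen_ball (x := (0 : T)) (ε := r'))
    (fun z => ball_subset_ball (min_le_right _ _)) (r := 1) (s := 2) (r' := 3) one_pos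
    (by norm_num) (by norm_num)
    (fun z _ t ht => by rw [Subsingleton.elim t 0, norm_zero] at ht; linarith)
    (fun z _ t => Hc z t) a1 a2 b1 b2
    ((hG1 _ (o1.inter isOpen_ball) inter_subset_right).mono
      (fun z _ => ball_subset_ball (min_le_left _ _)) (fun z _ => ball_subset_ball (by simp)))
  refine ⟨fun t => H' (t, 0), fun p => Φ (p.1, 0, p.2), ?_, ?_, ?_, ?_, ?_⟩
  · refine continuous_iff_continuousAt.2 ?_
    rintro ⟨t, u⟩
    exact cAt_comp (f := fun p : T × ℝ => (p.1, (0 : PUnit), p.2)) (hΦ.cont t (hun t) 0 u)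
      (by fun_prop) rfl
  · intro t u hu
    exact hΦ.zero t (hun t) 0 u hu
  · intro t u hu
    exact hΦ.one t (hun t) 0 u hu
  · intro t u ht
    refine hst t (lt_of_lt_of_le hr' ht) ?_ (fun _ _ => rfl) 0 u
    rw [mem_ball_zero_iff]
    exact not_lt.2 ht
  · intro t
    exact LipAt.comp' (hL' t (hun t) 0)
      ((lipAt_of_lip LipschitzWith.id t).prodMk (lipAt_const (0 : PUnit) t)) rfl

end base

section final
variable {X : Type u} {Y : Type v} [MetricSpace X] [MetricSpace Y]

/-- no control -/
def nc : X → Set Y := fun _ => univ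

lemma G_contractible (hY : LocallyLipschitzContractible Y) {V : Set X} (hV : IsOpen V)
    (h : IsLipSDRToPoint V) : G V (nc : X → Set Y) nc := by
  classical
  obtain ⟨p, F, K, hF, F0, F1, -⟩ := h
  obtain ⟨C, CL, Ce⟩ := lip_ext V (fun q => (F q : X)) K
    (fun a b => hF a b) id
  rw [hV.interior_eq] at CL
  have CV : ∀ x ∈ V, ∀ u, C (x, u) ∈ V := by
    intro x hx u
    rw [Ce ⟨x, hx⟩ u]; exact Subtype.coe_prop _
  have C0 : ∀ x ∈ V, ∀ u ≤ 0, C (x, u) = x := by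
    intro x hx u hu
    rw [Ce ⟨x, hx⟩ u, projIcc_of_le_left _ hu]
    exact congrArg Subtype.val (F0 ⟨x, hx⟩)
  have C1 : ∀ x ∈ V, ∀ u ≥ 1, C (x, u) = p := by
    intro x hx u hu
    rw [Ce ⟨x, hx⟩ u, projIcc_of_right_le _ hu]
    exact congrArg Subtype.val (F1 ⟨x, hx⟩)
  intro T _ hT r r' hr hr' H hc hL _
  have ccut : Continuous (cut r r') :=
    continuous_iff_continuousAt.2 fun s => (cut_lip r r' s).continuousAt
  obtain ⟨ρ, hρ1, hρ2⟩ : ∃ ρ, r < ρ ∧ ρ < (r + r') / 2 := exists_between (by linarith)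
  let h : T → Y := fun t => H (p, t)
  have hh : Continuous h := continuous_iff_continuousAt.2 fun t =>
    cAt_comp (f := fun t : T => ((p : X), t)) (hc p p.2 t) (by fun_prop) rfl
  have hhL : ∀ t, r < ‖t‖ → LipAt h t := fun t ht =>
    LipAt.comp' (hL p p.2 t ht) ((lipAt_const (p : X) t).prodMk (lipAt_of_lip LipschitzWith.id t)) rfl
  obtain ⟨h', Ξ, Ξc, Ξ0, Ξ1, Ξr, h'L⟩ := point_case hY hT hr hρ1 h hh hhL
  let M : X × T → Y := fun q => H (C (q.1, cut r r' ‖q.2‖), q.2)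
  have hA : Htpy V r' (nc : X → Set Y) H M
      (fun q => H (C (q.1, min q.2.2 1 * cut r r' ‖q.2.1‖), q.2.1)) := by
    refine ⟨?_, ?_, ?_, ?_, fun _ _ _ _ => mem_univ _⟩
    · intro z hz t u
      have h1 : ContinuousAt (fun q : X × T × ℝ => (q.1, min q.2.2 1 * cut r r' ‖q.2.1‖))
          (z, t, u) := by
        apply Continuous.continuousAt; fun_prop
      have h2 := cAt_comp (CL z hz _).continuousAt h1 rfl
      have h3 : ContinuousAt (fun q : X × T × ℝ => q.2.1) (z, t, u) := by fun_prop
      exact cAt_comp (hc _ (CV z hz _) t) (h2.prodMk h3) rfl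
    · intro z hz t u hu
      simp only
      rw [C0 z hz]
      exact mul_nonpos_of_nonpos_of_nonneg (min_le_of_left_le hu) (cut_nonneg _ _ _)
    · intro z hz t u hu
      simp only [min_eq_right hu, one_mul, M]
    · intro z hz t u ht
      simp only [cut_zero hr' ht, mul_zero]
      rw [C0 z hz _ le_rfl]
  have Mc : ∀ z ∈ V, ∀ t, ContinuousAt M (z, t) := by
    intro z hz t
    have := ContinuousAt.comp' (f := fun p : X × T => (p.1, p.2, (1 : ℝ))) (x := (z, t))
      (hA.cont z hz t 1) (by fun_prop)
    refine this.congr ?_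
    filter_upwards [continuous_fst.continuousAt.eventually (hV.mem_nhds hz)] with p hp
    exact hA.one _ hp _ _ le_rfl
  have Mh : ∀ z ∈ V, ∀ t, ‖t‖ < (r + r') / 2 → M (z, t) = h t := by
    intro z hz t ht
    simp only [M, h]
    rw [C1 z hz _ (cut_one hr' ht.le)]
  have ML : ∀ z ∈ V, ∀ t, r < ‖t‖ → LipAt M (z, t) := by
    intro z hz t ht
    have h0 : LipAt (fun q : X × T => cut r r' ‖q.2‖) (z, t) :=
      LipAt.comp' (g := fun t : T => cut r r' ‖t‖)
          (LipAt.comp' (cut_lip r r' _) (lipAt_norm t) rfl) (lipAt_snd _) rfl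
    have h1 := LipAt.comp' (CL z hz _) ((lipAt_fst (z, t)).prodMk h0) rfl
    exact LipAt.comp' (hL _ (CV z hz _) t ht) (h1.prodMk (lipAt_snd _)) rfl
  let Mf : X × T → Y := fun q => if ‖q.2‖ ≤ ρ then h' q.2 else M q
  let Φb : X × T × ℝ → Y := fun q => if ‖q.2.1‖ ≤ ρ then Ξ q.2 else M (q.1, q.2.1)
  have cn : Continuous (fun q : X × T => ‖q.2‖) := by fun_prop
  have cn3 : Continuous (fun q : X × T × ℝ => ‖q.2.1‖) := by fun_prop
  have hB : Htpy V r' (nc : X → Set Y) M Mf Φb := by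
    refine ⟨?_, ?_, ?_, ?_, fun _ _ _ _ => mem_univ _⟩
    · intro z hz t u
      rcases lt_or_ge ρ ‖t‖ with ht | ht
      · refine (cAt_comp (f := fun q : X × T × ℝ => (q.1, q.2.1)) (x := (z, t, u))
          (Mc z hz t) (by fun_prop) rfl).congr ?_
        filter_upwards [(cn3.continuousAt (x := (z, t, u))).eventually (eventually_gt_nhds ht)]
          with q hq
        simp only [Φb]
        rw [if_neg (not_le.2 hq)]
      · have ht' : ‖t‖ < (r + r') / 2 := by linarith
        refine ((Ξc.comp continuous_snd).continuousAt (x := (z, t, u))).congr ?_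
        filter_upwards [(cn3.continuousAt (x := (z, t, u))).eventually (eventually_lt_nhds ht'),
          ev_mem hV hz t u] with q hq hqV
        simp only [Φb, Function.comp]
        split_ifs with hh
        · rfl
        · rw [Mh _ hqV _ hq, ← Ξr q.2.1 q.2.2 (not_le.1 hh).le]
    · intro z hz t u hu
      simp only [Φb]
      split_ifs with hh
      · rw [Ξ0 _ _ hu, Mh z hz t (by linarith)]
      · rfl
    · intro z hz t u hu
      simp only [Φb, Mf]
      split_ifs with hh
      · rw [Ξ1 _ _ hu]
      · rfl
    · intro z hz t u ht
      simp only [Φb]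
      rw [if_neg (by linarith)]
  refine ⟨Mf, _, hA.trans hV hB, ?_⟩
  intro z hz t
  rcases lt_or_ge ρ ‖t‖ with ht | ht
  · refine (ML z hz t (by linarith)).congr ?_
    filter_upwards [(cn.continuousAt (x := (z, t))).eventually (eventually_gt_nhds ht)] with q hq
    simp only [Mf]
    rw [if_neg (not_le.2 hq)]
  · have ht' : ‖t‖ < (r + r') / 2 := by linarith
    refine (LipAt.comp' (h'L t) (lipAt_snd (z, t)) rfl).congr ?_
    filter_upwards [(cn.continuousAt (x := (z, t))).eventually (eventually_lt_nhds ht'),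
      continuous_fst.continuousAt.eventually (hV.mem_nhds hz)] with q hq hqV
    simp only [Mf]
    split_ifs with hh
    · rfl
    · rw [show M q = h q.2 from Mh _ hqV _ hq, ← Ξr q.2 1 (not_le.1 hh).le, Ξ1 _ _ le_rfl]

lemma G_finset {κ : Type*} (s : Finset κ) : ∀ (V : κ → Set X), (∀ i, IsOpen (V i)) →
    (∀ t : Finset κ, t.Nonempty → t ⊆ s → G (⋂ i ∈ t, V i) (nc : X → Set Y) nc) →
    G (⋃ i ∈ s, V i) (nc : X → Set Y) nc := by
  classical
  induction s using Finset.induction_on with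
  | empty =>
    intro V _ _
    have : (⋃ k ∈ (∅ : Finset κ), V k) = ∅ := by simp
    rw [this]
    exact G_empty _ _
  | insert a s ha ih =>
    intro V hV h
    rw [Finset.set_biUnion_insert, union_comm]
    have hs : G (⋃ i ∈ s, V i) (nc : X → Set Y) nc :=
      ih V hV fun t ht hts => h t ht (hts.trans (Finset.subset_insert _ _))
    have ha : G (V a) (nc : X → Set Y) nc := by
      simpa using h {a} (Finset.singleton_nonempty a) (by simp)
    have hsa : G (⋃ i ∈ s, (V i ∩ V a)) (nc : X → Set Y) nc := by
      refine ih (fun i => V i ∩ V a) (fun i => (hV i).inter (hV a)) fun t ht hts => ?_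
      have e : (⋂ i ∈ t, (V i ∩ V a)) = ⋂ i ∈ insert a t, V i := by
        ext x
        obtain ⟨b, hb⟩ := ht
        simp only [mem_iInter, mem_inter_iff, Finset.mem_insert, forall_eq_or_imp]
        exact ⟨fun h => ⟨(h b hb).2, fun i hi => (h i hi).1⟩, fun h i hi => ⟨h.2 i hi, h.1⟩⟩
      rw [e]
      exact h _ (Finset.insert_nonempty _ _) (Finset.insert_subset_insert _ hts)
    have o : IsOpen (⋃ i ∈ s, V i) := isOpen_iUnion fun i => isOpen_iUnion fun _ => hV i
    refine G_union o (hV a) (fun z => le_rfl) hs ha ?_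
    rw [iUnion₂_inter]
    exact hsa

lemma G_univ [SigmaCompactSpace X] (hY : LocallyLipschitzContractible Y) {J : Type*}
    (U : J → Set X) (hU : IsGoodCovering U) : G (univ : Set X) (nc : X → Set Y) nc := by
  classical
  obtain ⟨Uo, Uc, Ulf, Ucp, Ug⟩ := hU
  have hI : ∀ s : Finset J, s.Nonempty → G (⋂ j ∈ s, U j) (nc : X → Set Y) nc := by
    intro s hs
    rcases (⋂ j ∈ s, U j).eq_empty_or_nonempty with he | hne
    · rw [he]; exact G_empty _ _
    · exact G_contractible hY (isOpen_biInter_finset fun j _ => Uo j) (Ug s hs hne)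
  have cpt : ∀ (n : ℕ) (s : Finset J),
      IsCompact (compactCovering X n ∪ ⋃ j ∈ s, closure (U j)) := fun n s =>
    (isCompact_compactCovering X n).union (s.isCompact_biUnion fun j _ => Ucp j)
  have fin : ∀ (n : ℕ) (s : Finset J),
      {j | (U j ∩ (compactCovering X n ∪ ⋃ j ∈ s, closure (U j))).Nonempty}.Finite := fun n s =>
    Ulf.finite_nonempty_inter_compact (cpt n s)
  obtain ⟨S, S0, S1⟩ : ∃ S : ℕ → Finset J, S 0 = ∅ ∧
      ∀ n, S (n + 1) = S n ∪ (fin n (S n)).toFinset :=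
    ⟨fun n => Nat.rec (motive := fun _ => Finset J) ∅ (fun n s => s ∪ (fin n s).toFinset) n,
      rfl, fun n => rfl⟩
  have Smono : Monotone S := monotone_nat_of_le_succ fun n => by
    rw [S1]; exact Finset.subset_union_left
  have Sadj : ∀ n j j', j ∈ S n → (U j ∩ U j').Nonempty → j' ∈ S (n + 1) := by
    rintro n j j' hj ⟨x, hx, hx'⟩
    rw [S1]
    refine Finset.mem_union_right _ ?_
    rw [Set.Finite.mem_toFinset]
    exact ⟨x, hx', Or.inr (mem_iUnion₂.2 ⟨j, hj, subset_closure hx⟩)⟩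
  have Scov : ∀ x, ∃ n j, x ∈ U j ∧ j ∈ S n := by
    intro x
    obtain ⟨j, hj⟩ := mem_iUnion.1 (Uc ▸ mem_univ x : x ∈ ⋃ j, U j)
    obtain ⟨n, hn⟩ := mem_iUnion.1 ((iUnion_compactCovering X).symm ▸ mem_univ x :
      x ∈ ⋃ n, compactCovering X n)
    refine ⟨n + 1, j, hj, ?_⟩
    rw [S1]
    refine Finset.mem_union_right _ ?_
    rw [Set.Finite.mem_toFinset]
    exact ⟨x, hj, Or.inl hn⟩
  let L : ℕ → Finset J := fun n => S (n + 1) \ S n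
  let A : ℕ → Set X := fun n => ⋃ j ∈ L n, U j
  have Ao : ∀ n, IsOpen (A n) := fun n => isOpen_iUnion fun i => isOpen_iUnion fun _ => Uo i
  have Adisj : ∀ n m, n + 2 ≤ m → Disjoint (A n) (A m) := by
    intro n m hnm
    rw [Set.disjoint_left]
    intro x hx hx'
    obtain ⟨j, hj, hxj⟩ := mem_iUnion₂.1 hx
    obtain ⟨j', hj', hxj'⟩ := mem_iUnion₂.1 hx'
    exact (Finset.mem_sdiff.1 hj').2
      (Smono hnm (Sadj (n + 1) j j' (Finset.mem_sdiff.1 hj).1 ⟨x, hxj, hxj'⟩))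
  have Acov : ∀ x, ∃ n, x ∈ A n := by
    intro x
    obtain ⟨n, j, hxj, hj⟩ := Scov x
    induction n with
    | zero => rw [S0] at hj; simp at hj
    | succ n ih =>
      by_cases h : j ∈ S n
      · exact ih h
      · exact ⟨n, mem_iUnion₂.2 ⟨j, Finset.mem_sdiff.2 ⟨hj, h⟩, hxj⟩⟩
  have GA : ∀ n, G (A n) (nc : X → Set Y) nc := fun n =>
    G_finset (L n) U Uo fun t ht _ => hI t ht
  have GB : ∀ n, G (A n ∩ A (n + 1)) (nc : X → Set Y) nc := by
    intro n
    have e : A n ∩ A (n + 1) = ⋃ p ∈ L n ×ˢ L (n + 1), (U p.1 ∩ U p.2) := by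
      ext x
      simp only [A, mem_inter_iff, mem_iUnion, Finset.mem_product, Prod.exists, exists_prop]
      constructor
      · rintro ⟨⟨j, hj, hx⟩, ⟨j', hj', hx'⟩⟩
        exact ⟨j, j', ⟨hj, hj'⟩, hx, hx'⟩
      · rintro ⟨j, j', ⟨hj, hj'⟩, hx, hx'⟩
        exact ⟨⟨j, hj, hx⟩, ⟨j', hj', hx'⟩⟩
    rw [e]
    refine G_finset _ (fun p : J × J => U p.1 ∩ U p.2) (fun p => (Uo _).inter (Uo _)) ?_
    intro t ht _
    have e2 : (⋂ p ∈ t, (U p.1 ∩ U p.2)) = ⋂ j ∈ t.image Prod.fst ∪ t.image Prod.snd, U j := by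
      ext x
      simp only [mem_iInter, mem_inter_iff, Finset.mem_union, Finset.mem_image]
      constructor
      · rintro h j (⟨p, hp, rfl⟩ | ⟨p, hp, rfl⟩)
        · exact (h p hp).1
        · exact (h p hp).2
      · intro h p hp
        exact ⟨h _ (Or.inl ⟨p, hp, rfl⟩), h _ (Or.inr ⟨p, hp, rfl⟩)⟩
    rw [e2]
    exact hI _ ((ht.image _).mono Finset.subset_union_left)
  have Ge : G (⋃ n, A (2 * n)) (nc : X → Set Y) nc := by
    refine G_disjoint (fun n => Ao _) (fun i j hij => ?_) (fun n => GA _)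
    rcases lt_or_gt_of_ne hij with h | h
    · exact Adisj _ _ (by omega)
    · exact (Adisj _ _ (by omega)).symm
  have Go : G (⋃ n, A (2 * n + 1)) (nc : X → Set Y) nc := by
    refine G_disjoint (fun n => Ao _) (fun i j hij => ?_) (fun n => GA _)
    rcases lt_or_gt_of_ne hij with h | h
    · exact Adisj _ _ (by omega)
    · exact (Adisj _ _ (by omega)).symm
  have Gi : G (⋃ n, (A n ∩ A (n + 1))) (nc : X → Set Y) nc := by
    refine G_disjoint (fun n => (Ao _).inter (Ao _)) (fun i j hij => ?_) (fun n => GB _)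
    rcases lt_or_gt_of_ne hij with h | h
    · exact (Adisj i (j + 1) (by omega)).mono inter_subset_left inter_subset_right
    · exact ((Adisj j (i + 1) (by omega)).mono inter_subset_left inter_subset_right).symm
  have e1 : (⋃ n, A (2 * n)) ∩ (⋃ n, A (2 * n + 1)) = ⋃ n, (A n ∩ A (n + 1)) := by
    ext x
    simp only [mem_inter_iff, mem_iUnion]
    constructor
    · rintro ⟨⟨n, hn⟩, ⟨m, hm⟩⟩
      have c1 : ¬ (2 * n + 2 ≤ 2 * m + 1) := fun h => Set.disjoint_left.1 (Adisj _ _ h) hn hm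
      have c2 : ¬ (2 * m + 1 + 2 ≤ 2 * n) := fun h => Set.disjoint_left.1 (Adisj _ _ h) hm hn
      have : m = n ∨ n = m + 1 := by omega
      rcases this with rfl | rfl
      · exact ⟨2 * m, hn, hm⟩
      · exact ⟨2 * m + 1, hm, hn⟩
    · rintro ⟨n, h1, h2⟩
      rcases Nat.even_or_odd' n with ⟨k, rfl | rfl⟩
      · exact ⟨⟨k, h1⟩, ⟨k, h2⟩⟩
      · exact ⟨⟨k + 1, h2⟩, ⟨k, h1⟩⟩
  have e2 : (⋃ n, A (2 * n)) ∪ (⋃ n, A (2 * n + 1)) = univ := by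
    rw [eq_univ_iff_forall]
    intro x
    obtain ⟨n, hn⟩ := Acov x
    rcases Nat.even_or_odd' n with ⟨k, rfl | rfl⟩
    · exact Or.inl (mem_iUnion.2 ⟨k, hn⟩)
    · exact Or.inr (mem_iUnion.2 ⟨k, hn⟩)
  rw [← e2]
  refine G_union (isOpen_iUnion fun n => Ao _) (isOpen_iUnion fun n => Ao _)
    (fun z => le_rfl) Ge Go ?_
  rw [e1]
  exact Gi

lemma inj_part (hG : G (univ : Set X) (nc : X → Set Y) nc) (f g : X → Y)
    (hf : LocallyLipschitz f) (hg : LocallyLipschitz g) (h : ContHomotopic f g) :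
    LocLipHomotopic f g := by
  obtain ⟨h, hc, h0, h1⟩ := h
  let H : X × ℝ → Y := fun p => h (p.1, projIcc 0 1 zero_le_one ((p.2 + 1) / 2))
  have cs : Continuous (fun p : X × ℝ => p.2) := continuous_snd
  have Hneg : ∀ x, ∀ t ≤ (-1 : ℝ), H (x, t) = f x := by
    intro x t ht
    simp only [H]
    rw [projIcc_of_le_left _ (by linarith)]
    exact h0 x
  have Hpos : ∀ x, ∀ t ≥ (1 : ℝ), H (x, t) = g x := by
    intro x t ht
    simp only [H]
    rw [projIcc_of_right_le _ (by linarith)]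
    exact h1 x
  have Hc : Continuous H := by
    refine hc.comp (continuous_fst.prodMk (continuous_projIcc.comp ?_))
    fun_prop
  obtain ⟨H', Φ, hΦ, hL⟩ := hG ℝ adm_real 1 2 one_pos (by norm_num) H
    (fun z _ t => Hc.continuousAt) (by
      intro z _ t ht
      rw [Real.norm_eq_abs, lt_abs] at ht
      rcases ht with ht | ht
      · refine (LipAt.comp' (hg z) (lipAt_fst (z, t)) rfl).congr ?_
        filter_upwards [(cs.continuousAt (x := (z, t))).eventually (eventually_gt_nhds ht)] with p hp
        exact Hpos _ _ hp.le
      · have ht' : t < -1 := by linarith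
        refine (LipAt.comp' (hf z) (lipAt_fst (z, t)) rfl).congr ?_
        filter_upwards [(cs.continuousAt (x := (z, t))).eventually (eventually_lt_nhds ht')] with p hp
        exact Hneg _ _ hp.le) (fun _ _ _ => mem_univ _)
  refine ⟨fun p => H' (p.1, 4 * (p.2 : ℝ) - 2), ?_, ?_, ?_⟩
  · intro p
    have hl : LipAt (fun s : ℝ => 4 * s - 2) (p.2 : ℝ) := by
      apply lipAt_of_contDiffAt; fun_prop
    have hl2 : LipAt (fun p : X × unitInterval => (p.2 : ℝ)) p :=
      LipAt.comp' (g := fun s : unitInterval => (s : ℝ))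
        (lipAt_of_lip (LipschitzWith.subtype_val _) p.2) (lipAt_snd p) rfl
    exact LipAt.comp' (hL p.1 (mem_univ _) _) ((lipAt_fst p).prodMk (LipAt.comp' hl hl2 rfl)) rfl
  · intro x
    simp only
    rw [hΦ.rel_end (mem_univ x) (by norm_num [Real.norm_eq_abs])]
    exact Hneg _ _ (by norm_num)
  · intro x
    simp only
    rw [hΦ.rel_end (mem_univ x) (by norm_num [Real.norm_eq_abs])]
    exact Hpos _ _ (by norm_num)

lemma surj_part (hG : G (univ : Set X) (nc : X → Set Y) nc) (f : X → Y)
    (hf : Continuous f) : ∃ g : X → Y, LocallyLipschitz g ∧ ContHomotopic f g := by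
  obtain ⟨H', Φ, hΦ, hL⟩ := hG PUnit adm_unit 1 2 one_pos (by norm_num) (fun p => f p.1)
    (fun z _ t => (hf.comp continuous_fst).continuousAt)
    (fun z _ t ht => by rw [Subsingleton.elim t 0, norm_zero] at ht; linarith)
    (fun _ _ _ => mem_univ _)
  refine ⟨fun x => H' (x, 0), fun x => ?_, fun p => Φ (p.1, 0, (p.2 : ℝ)), ?_, ?_, ?_⟩
  · exact LipAt.comp' (hL x (mem_univ _) 0)
      ((lipAt_of_lip LipschitzWith.id x).prodMk (lipAt_const (0 : PUnit) x)) rfl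
  · refine continuous_iff_continuousAt.2 fun p => ?_
    exact cAt_comp (f := fun p : X × unitInterval => (p.1, (0 : PUnit), (p.2 : ℝ)))
      (hΦ.cont p.1 (mem_univ _) 0 p.2) (by fun_prop) rfl
  · intro x
    exact hΦ.zero x (mem_univ _) 0 _ (by simp)
  · intro x
    exact hΦ.one x (mem_univ _) 0 _ (by simp)

end final

end LLH

/-- Let `X` be a σ-compact metric space admitting a good covering and `Y`
a locally Lipschitz contractible metric space.  Then the natural map
`[X,Y]_{loc-Lip} → [X,Y]` is bijective: it is injective (continuously homotopic locally
Lipschitz maps are locally Lipschitz homotopic) and surjective (every continuous map is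
homotopic to a locally Lipschitz one). -/
theorem locLip_classes_bijective {X Y : Type*} [MetricSpace X] [SigmaCompactSpace X]
    [MetricSpace Y] {J : Type*} (U : J → Set X) (hU : IsGoodCovering U)
    (hY : LocallyLipschitzContractible Y) :
    (∀ f g : X → Y, LocallyLipschitz f → LocallyLipschitz g →
      ContHomotopic f g → LocLipHomotopic f g) ∧
    (∀ f : X → Y, Continuous f → ∃ g : X → Y, LocallyLipschitz g ∧ ContHomotopic f g) := by
  have hG := LLH.G_univ hY U hU
  exact ⟨LLH.inj_part hG, LLH.surj_part hG⟩
end
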